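/- arXiv:1909.03874 — 6 statements merged into one kernel-verified Lean document; each statement's English description precedes it below -/
import Mathlib

section
/- Fix partitions μ and ν, an integer k ≥ 0, let λ = Φ(μ,ν,k) and m = k(k+1)/2. For pairs of partitions (μ̃,ν̃) with μ̃ ⊆ μ and ν̃ ⊆ ν write λ̃ = Φ(μ̃,ν̃,k). Then for every 0 ≤ j ≤ |μ|+|ν|: (i) coeff_m(He_{λ̃}) ≠ 0 for all such pairs, and (ii) coeff_{|λ|−2j}(He_λ) = C(|μ|+|ν|, j) · Σ_{(μ̃,ν̃): μ̃⊆μ, ν̃⊆ν, |μ̃|+|ν̃| = |μ|+|ν|−j} [ F²_{(μ̃,ν̃)} · F²_{(μ,ν)/(μ̃,ν̃)} / F²_{(μ,ν)} ] · coeff_m(He_λ) / coeff_m(He_{λ̃}), where F²_{(μ,ν)/(μ̃,ν̃)} := C(|μ|−|μ̃| + |ν|−|ν̃|, |μ|−|μ̃|) · F_{μ/μ̃} · F_{ν/ν̃} and F²_{(μ̃,ν̃)} := F²_{(μ̃,ν̃)/(∅,∅)}. -/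
/-- A partition: a weakly decreasing list of positive integers. -/
def IsPartition (l : List ℕ) : Prop :=
  l.Pairwise (· ≥ ·) ∧ ∀ x ∈ l, 0 < x

/-- The degree vector of a partition: `n_i = λ_i + ℓ(λ) − i` (here `i` is 0-indexed). -/
def degVec (l : List ℕ) (i : Fin l.length) : ℕ :=
  l.get i + (l.length - 1 - (i : ℕ))

/-- The Vandermonde determinant `Δ(n_λ) = ∏_{i<j} (n_j − n_i)` of the degree vector. -/
noncomputable def vanderQ (l : List ℕ) : ℚ :=
  ∏ i : Fin l.length, ∏ j : Fin l.length,
    if (i : ℕ) < (j : ℕ) then ((degVec l j : ℚ) - (degVec l i : ℚ)) else 1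

/-- The Wronskian Hermite polynomial `He_λ = Wr[He_{n_1},…,He_{n_ℓ}] / Δ(n_λ)`. -/
noncomputable def HeW (l : List ℕ) : Polynomial ℚ :=
  Polynomial.C (vanderQ l)⁻¹ *
    (Matrix.of fun i j : Fin l.length =>
      (⇑Polynomial.derivative)^[(i : ℕ)]
        ((Polynomial.hermite (degVec l j)).map (Int.castRingHom ℚ))).det

/-- The content sum `c(λ) = Σ_{(i,j)∈λ} (j − i)`. -/
def contentSum (l : List ℕ) : ℤ :=
  ∑ i : Fin l.length, ∑ j ∈ Finset.Icc 1 (l.get i), ((j : ℤ) - ((i : ℕ) + 1))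

/-- `Phi μ ν k` is the partition with 2-core `(k,k−1,…,2,1)` and 2-quotient `(μ,ν)`:
form the set `D` of `N = 2ℓ(μ) + 2ℓ(ν) + k` distinct naturals
`{2(a_i + ℓ(ν))} ∪ {2t : t < ℓ(ν)} ∪ {2(b_j + ℓ(μ) + k) + 1} ∪ {2t+1 : t < ℓ(μ)+k}`
(where `a`, `b` are the degree vectors of `μ`, `ν`), sort it decreasingly as
`d_1 > … > d_N`, and take the parts `d_i − (N − i)`, discarding zero parts. -/
def Phi (μ ν : List ℕ) (k : ℕ) : List ℕ :=
  let D : Finset ℕ :=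
    ((Finset.univ : Finset (Fin μ.length)).image fun i => 2 * (degVec μ i + ν.length)) ∪
    ((Finset.range ν.length).image fun t => 2 * t) ∪
    ((Finset.univ : Finset (Fin ν.length)).image fun j =>
        2 * (degVec ν j + μ.length + k) + 1) ∪
    ((Finset.range (μ.length + k)).image fun t => 2 * t + 1)
  let s := D.sort (· ≤ ·)
  (((List.range s.length).map fun t => s.getD t 0 - t).reverse).filter
    fun x => decide (0 < x)


/-- The `i`-th part of a partition list (0 beyond the length). -/
def partAt (l : List ℕ) (i : ℕ) : ℕ := l.getD i 0

/-- Containment of Young diagrams: `a ⊆ b` iff every part of `a` is at most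
the corresponding part of `b`. -/
def SubP (a b : List ℕ) : Prop := ∀ i, partAt a i ≤ partAt b i

/-- `a ⋖ b` in Young's lattice: `a ⊆ b` and `|b| = |a| + 1`. -/
def Covers (a b : List ℕ) : Prop := SubP a b ∧ a.sum + 1 = b.sum

/-- `numPaths a b` is the number of saturated chains from `a` to `b` in Young's
lattice, i.e. the skew standard-tableau count `F_{b/a}` (0 if `a ⊄ b`, and
`F_b` when `a = ∅`). -/
noncomputable def numPaths (a b : List ℕ) : ℕ :=
  Nat.card {c : Fin (b.sum - a.sum + 1) → List ℕ //
    c 0 = a ∧ c (Fin.last _) = b ∧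
    ∀ i : Fin (b.sum - a.sum),
      IsPartition (c i.castSucc) ∧ IsPartition (c i.succ) ∧
        Covers (c i.castSucc) (c i.succ)}

/-- `F²_{(a,b)/(∅,∅)}`, the number of directed paths from `(∅,∅)` to `(a,b)`
in `𝕐 × 𝕐`. -/
noncomputable def F2 (a b : List ℕ) : ℕ :=
  (a.sum + b.sum).choose a.sum * numPaths [] a * numPaths [] b

/-- `F²_{(x,y)/(a,b)}`, the number of directed paths from `(a,b)` to `(x,y)`
in `𝕐 × 𝕐`. -/
noncomputable def F2rel (a b x y : List ℕ) : ℕ :=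
  ((x.sum - a.sum) + (y.sum - b.sum)).choose (x.sum - a.sum) *
    numPaths a x * numPaths b y


namespace WHF
open Polynomial Matrix

section JT
variable {R : Type*} [CommRing R] {A : Type*} [AddCommMonoid A]

noncomputable def JT (g : ℤ → R) {N : ℕ} (d : Fin N → ℤ) : R :=
  (Matrix.of fun i j : Fin N => g (d j - ((i : ℕ) : ℤ))).det

theorem JT_perm (g : ℤ → R) {N : ℕ} (d : Fin N → ℤ) (σ : Equiv.Perm (Fin N)) :
    JT g (d ∘ σ) = ((Equiv.Perm.sign σ : ℤ) : R) * JT g d := by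
  unfold JT
  rw [← Matrix.det_permute']
  rfl

theorem JT_neg (g : ℤ → R) (hneg : ∀ n < 0, g n = 0) {N : ℕ} (d : Fin N → ℤ) (j : Fin N)
    (hj : d j < 0) : JT g d = 0 := by
  unfold JT
  apply Matrix.det_eq_zero_of_column_eq_zero j
  intro i
  apply hneg
  omega

theorem JT_cons (g : ℤ → R) (h0 : g 0 = 1) (hneg : ∀ n < 0, g n = 0) {N : ℕ}
    (d : Fin N → ℤ) : JT g (Fin.cons 0 (fun i => d i + 1) : Fin (N + 1) → ℤ) = JT g d := by
  unfold JT
  rw [Matrix.det_succ_column_zero, Fin.sum_univ_succ, Finset.sum_eq_zero]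
  · simp [h0]
    congr 1
    ext i j
    simp
  · intro i _
    simp [hneg (-1 + -(i : ℕ) : ℤ) (by omega)]

def Qop {N : ℕ} (s : ℤ) (f : (Fin N → ℤ) → A) : (Fin N → ℤ) → A :=
  fun d => ∑ j, f (Function.update d j (d j - s))

theorem JT_derivative (g : ℤ → R[X]) (c : R[X]) (hg : ∀ n, derivative (g n) = c * g (n - 2))
    {N : ℕ} (d : Fin N → ℤ) : derivative (JT g d) = c * Qop 2 (JT g) d := by
  unfold JT Qop
  simp only [Matrix.det_apply, derivative_sum, Finset.mul_sum]
  rw [Finset.sum_comm]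
  refine Finset.sum_congr rfl fun σ _ => ?_
  rw [derivative_smul, derivative_prod_finset, Finset.smul_sum]
  refine Finset.sum_congr rfl fun j _ => ?_
  rw [mul_smul_comm]
  congr 1
  rw [← Finset.mul_prod_erase _ _ (Finset.mem_univ j)]
  simp only [Matrix.of_apply, hg, Function.update_self]
  have : ∀ x ∈ Finset.univ.erase j, g (Function.update d j (d j - 2) x - ((σ x : ℕ) : ℤ)) = g (d x - ((σ x : ℕ) : ℤ)) := by
    intro x hx
    rw [Function.update_of_ne (Finset.ne_of_mem_erase hx)]
  rw [Finset.prod_congr rfl this, sub_right_comm]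
  ring

theorem Qop_iter_shift {N : ℕ} (s : ℤ) {B : Type*} [NonUnitalNonAssocSemiring B] (c : ℤ → B)
    (f : (Fin N → ℤ) → B) (K : ℕ) :
    ∀ d, (Qop s)^[K] (fun d => c (∑ j, d j) * f d) d
      = c ((∑ j, d j) - s * K) * (Qop s)^[K] f d := by
  induction K with
  | zero => intro d; simp
  | succ K ih =>
    intro d
    simp only [Function.iterate_succ_apply']
    unfold Qop at ih ⊢
    simp only [ih, Finset.mul_sum]
    refine Finset.sum_congr rfl fun j _ => ?_
    congr 2
    rw [Finset.sum_update_of_mem (Finset.mem_univ _), Finset.sum_eq_add_sum_sdiff_singleton_of_mem (Finset.mem_univ j) d]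
    push_cast
    ring

theorem Qop_iter_map {N : ℕ} (s : ℤ) {B C : Type*} [AddCommMonoid B] [AddCommMonoid C] (φ : B →+ C)
    (f : (Fin N → ℤ) → B) (K : ℕ) :
    ∀ d, φ ((Qop s)^[K] f d) = (Qop s)^[K] (fun d => φ (f d)) d := by
  induction K with
  | zero => intro d; simp
  | succ K ih =>
    intro d
    simp only [Function.iterate_succ_apply']
    simp only [Qop, map_sum, ih]
end JT

noncomputable def invf (n : ℤ) : ℚ := if n < 0 then 0 else ((n.toNat.factorial : ℚ))⁻¹
noncomputable def xpow (n : ℤ) : ℚ[X] := if n < 0 then 0 else X ^ n.toNat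
noncomputable def xp (n : ℤ) : ℚ[X] := xpow n * C (invf n)
noncomputable def hY (n : ℤ) : ℚ[X][X] :=
  ∑ k ∈ Finset.range (n.toNat + 1), monomial k (C ((-1/2 : ℚ) ^ k / (k.factorial : ℚ)) * xp (n - 2 * k))
noncomputable def hp (n : ℤ) : ℚ[X] := (hY n).eval 1

theorem invf_neg (n : ℤ) (h : n < 0) : invf n = 0 := by simp [invf, h]
theorem xp_neg (n : ℤ) (h : n < 0) : xp n = 0 := by simp [xp, invf_neg n h]
theorem hY_coeff (n : ℤ) (k : ℕ) :
    (hY n).coeff k = C ((-1/2 : ℚ) ^ k / (k.factorial : ℚ)) * xp (n - 2 * k) := by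
  simp only [hY, finsetSum_coeff, coeff_monomial]
  rw [Finset.sum_ite_eq']
  split_ifs with h
  · rfl
  · rw [xp_neg, mul_zero]
    simp at h
    omega
theorem hY_neg (n : ℤ) (h : n < 0) : hY n = 0 := by
  ext1 k
  rw [hY_coeff, xp_neg, mul_zero, coeff_zero]
  omega
theorem hp_neg (n : ℤ) (h : n < 0) : hp n = 0 := by simp [hp, hY_neg n h]
theorem hp_zero : hp 0 = 1 := by
  simp [hp, hY, xp, xpow, invf]
theorem invf_zero : invf 0 = 1 := by simp [invf]

theorem hY_derivative (n : ℤ) : derivative (hY n) = C (C (-1/2 : ℚ)) * hY (n - 2) := by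
  ext1 k
  rw [coeff_derivative, coeff_C_mul, hY_coeff, hY_coeff]
  have e : n - 2 * ((k + 1 : ℕ) : ℤ) = n - 2 - 2 * (k : ℤ) := by push_cast; ring
  rw [e]
  have : ((k : ℚ[X]) + 1) = C ((k : ℚ) + 1) := by simp
  rw [this, mul_right_comm, ← C_mul, ← mul_assoc, ← C_mul]
  congr 2
  rw [Nat.factorial_succ, pow_succ]
  have : (k.factorial : ℚ) ≠ 0 := by positivity
  have : (k : ℚ) + 1 ≠ 0 := by positivity
  push_cast
  field_simp

theorem JT_hY_coeff {N : ℕ} (K : ℕ) : ∀ (d : Fin N → ℤ),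
    (JT hY d).coeff K = C ((-1/2 : ℚ) ^ K / (K.factorial : ℚ)) * (Qop 2)^[K] (JT xp) d := by
  induction K with
  | zero =>
    intro d
    simp only [Function.iterate_zero, id]
    have : (JT hY d).coeff 0 = constantCoeff (JT hY d) := rfl
    rw [this, JT, RingHom.map_det]
    simp only [JT]
    simp
    congr 1
    ext1 i j
    simp [hY_coeff]
  | succ K ih =>
    intro d
    have h := congrArg (fun p => p.coeff K) (JT_derivative hY _ hY_derivative d)
    simp only [coeff_derivative, coeff_C_mul] at h
    have h2 : (Qop 2 (JT hY) d).coeff K = C ((-1/2 : ℚ) ^ K / (K.factorial : ℚ)) * (Qop 2)^[K+1] (JT xp) d := by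
      rw [Function.iterate_succ_apply']
      simp only [Qop, finsetSum_coeff, ih, Finset.mul_sum]
    rw [h2] at h
    have e : ((K : ℚ[X]) + 1) = C ((K : ℚ) + 1) := by simp
    have hK : (K : ℚ) + 1 ≠ 0 := by positivity
    have hf : (K.factorial : ℚ) ≠ 0 := by positivity
    have hK' : C ((K : ℚ) + 1) ≠ 0 := by rwa [Ne, C_eq_zero]
    rw [e] at h
    apply mul_right_cancel₀ hK'
    rw [h, mul_right_comm, ← mul_assoc, ← C_mul, ← C_mul]
    congr 2
    rw [Nat.factorial_succ, pow_succ]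
    push_cast
    field_simp

def sN (N : ℕ) : ℤ := ∑ i : Fin N, ((i : ℕ) : ℤ)

theorem xp_prod {ι : Type*} (s : Finset ι) (u : ι → ℤ) :
    ∏ i ∈ s, xp (u i) = xpow (∑ i ∈ s, u i) * C (∏ i ∈ s, invf (u i)) := by
  by_cases h : ∃ i ∈ s, u i < 0
  · obtain ⟨i, hi, hu⟩ := h
    rw [Finset.prod_eq_zero hi (xp_neg _ hu), Finset.prod_eq_zero hi (invf_neg _ hu)]
    simp
  · push Not at h
    simp only [xp, Finset.prod_mul_distrib, map_prod]
    congr 1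
    have h2 : ¬ (∑ i ∈ s, u i < 0) := not_lt.2 (Finset.sum_nonneg h)
    rw [xpow, if_neg h2]
    have : ∀ i ∈ s, xpow (u i) = X ^ (u i).toNat := fun i hi => by
      rw [xpow, if_neg (not_lt.2 (h i hi))]
    rw [Finset.prod_congr rfl this, Finset.prod_pow_eq_pow_sum]
    congr 1
    zify
    rw [Int.toNat_of_nonneg (not_lt.1 h2)]
    exact Finset.sum_congr rfl fun i hi => Int.toNat_of_nonneg (h i hi)

theorem JT_xp {N : ℕ} (d : Fin N → ℤ) :
    JT xp d = xpow ((∑ j, d j) - sN N) * C (JT invf d) := by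
  unfold JT
  simp only [Matrix.det_apply', map_sum, Finset.mul_sum, Matrix.of_apply, xp_prod, map_mul]
  refine Finset.sum_congr rfl fun σ _ => ?_
  rw [Finset.sum_sub_distrib, Equiv.sum_comp σ (fun i : Fin N => ((i : ℕ) : ℤ)), sN]
  simp
  ring

theorem xpow_coeff (n : ℤ) (p : ℕ) : (xpow n).coeff p = if n = p then 1 else 0 := by
  unfold xpow
  split_ifs with h1 h2 h2
  · omega
  · simp
  · subst h2; simp
  · rw [coeff_X_pow, if_neg]; omega

theorem JT_hp_coeff {N : ℕ} (d : Fin N → ℤ) (K p : ℕ) (h : (∑ j, d j) - sN N = p + 2 * K) :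
    (JT hp d).coeff p = (-1/2 : ℚ) ^ K / (K.factorial : ℚ) * (Qop 2)^[K] (JT invf) d := by
  have e : JT hp d = (JT hY d).eval 1 := by
    have : (JT hY d).eval 1 = evalRingHom 1 (JT hY d) := rfl
    rw [this, JT, JT, RingHom.map_det]
    rfl
  have c : ∀ K', ((JT hY d).coeff K').coeff p = if K' = K then (-1/2 : ℚ) ^ K / (K.factorial : ℚ) * (Qop 2)^[K] (JT invf) d else 0 := by
    intro K'
    rw [JT_hY_coeff, coeff_C_mul]
    have : (JT xp : (Fin N → ℤ) → ℚ[X]) = fun d => (fun n => xpow (n - sN N)) (∑ j, d j) * (fun d => C (JT invf d)) d := by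
      ext1 d
      exact JT_xp d
    rw [this, Qop_iter_shift 2 (fun n => xpow (n - sN N)) (fun d => C (JT invf d))]
    have h3 := Qop_iter_map 2 (C : ℚ →+* ℚ[X]).toAddMonoidHom (JT invf : (Fin N → ℤ) → ℚ) K' d
    simp only [RingHom.toAddMonoidHom_eq_coe, AddMonoidHom.coe_coe] at h3
    rw [← h3, coeff_mul_C, xpow_coeff]
    by_cases hK : K' = K
    · subst hK
      rw [if_pos rfl, if_pos (by omega)]
      ring
    · rw [if_neg hK, if_neg (by omega)]
      ring
  rw [e, eval_eq_sum_range, finsetSum_coeff]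
  simp only [one_pow, mul_one, c]
  rw [Finset.sum_ite_eq']
  split_ifs with h4
  · rfl
  · have := c K
    rw [if_pos rfl] at this
    rw [← this, coeff_eq_zero_of_natDegree_lt (p := JT hY d) (by simpa using h4), coeff_zero]

end WHF

namespace WHF
open Polynomial Matrix

theorem hp_coeff_aux (n : ℤ) (p : ℕ) : (hp n).coeff p =
    ∑ k ∈ Finset.range (n.toNat + 1), if n - 2 * k = p then ((-1/2 : ℚ) ^ k / (k.factorial : ℚ)) * ((p.factorial : ℚ))⁻¹ else 0 := by
  simp only [hp, hY, eval_finsetSum, eval_monomial, one_pow, mul_one, finsetSum_coeff, coeff_C_mul, xp, coeff_mul_C, xpow_coeff]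
  refine Finset.sum_congr rfl fun k _ => ?_
  split_ifs with h
  · rw [h]; simp [invf]
  · simp

theorem hp_coeff_even (p k : ℕ) :
    (hp (p + 2 * k)).coeff p = ((-1/2 : ℚ) ^ k / (k.factorial : ℚ)) * ((p.factorial : ℚ))⁻¹ := by
  rw [hp_coeff_aux, Finset.sum_eq_single k]
  · simp
  · intro b _ hb
    rw [if_neg]
    omega
  · intro h
    simp at h
    omega

theorem hp_coeff_none (n : ℤ) (p : ℕ) (h : ∀ k : ℕ, n ≠ p + 2 * k) : (hp n).coeff p = 0 := by
  rw [hp_coeff_aux, Finset.sum_eq_zero]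
  intro k _
  rw [if_neg]
  have := h k
  omega

theorem hp_derivative (n : ℤ) : derivative (hp n) = hp (n - 1) := by
  ext p
  rw [coeff_derivative]
  by_cases h : ∃ k : ℕ, n - 1 = p + 2 * k
  · obtain ⟨k, hk⟩ := h
    have h1 : n = ((p + 1 : ℕ) : ℤ) + 2 * k := by push_cast; omega
    rw [hk, hp_coeff_even, h1, hp_coeff_even, Nat.factorial_succ]
    have : (p.factorial : ℚ) ≠ 0 := by positivity
    have : (p : ℚ) + 1 ≠ 0 := by positivity
    push_cast
    field_simp
  · push Not at h
    rw [hp_coeff_none (n - 1) p h, hp_coeff_none n (p + 1), zero_mul]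
    intro k
    have := h k
    push_cast
    omega

theorem hp_derivative_iter (i : ℕ) (n : ℤ) : (⇑derivative)^[i] (hp n) = hp (n - i) := by
  induction i with
  | zero => simp
  | succ i ih =>
    rw [Function.iterate_succ_apply', ih, hp_derivative]
    congr 1
    push_cast
    ring

theorem hermite_eq (n : ℕ) :
    (hermite n).map (Int.castRingHom ℚ) = C (n.factorial : ℚ) * hp n := by
  ext p
  rw [coeff_map, coeff_C_mul]
  by_cases h : ∃ k : ℕ, n = 2 * k + p
  · obtain ⟨k, rfl⟩ := h
    rw [coeff_hermite_explicit]
    have : ((2 * k + p : ℕ) : ℤ) = p + 2 * k := by push_cast; ring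
    rw [this, hp_coeff_even]
    have hdf : ((2 * k - 1).doubleFactorial * (2 ^ k * k.factorial)) = (2 * k).factorial := by
      rw [← Nat.doubleFactorial_two_mul]
      cases k with
      | zero => rfl
      | succ k =>
        have : 2 * (k + 1) = (2 * k + 1) + 1 := by ring
        rw [this, Nat.factorial_eq_mul_doubleFactorial, mul_comm]
        rfl
    have hch : (2 * k + p).choose p * (p.factorial * (2 * k).factorial) = (2 * k + p).factorial := by
      have := Nat.choose_mul_factorial_mul_factorial (show p ≤ 2 * k + p by omega)
      rw [← this, mul_assoc]
      congr 3
      omega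
    rw [← hch, ← hdf]
    have h1 : (k.factorial : ℚ) ≠ 0 := by positivity
    have h2 : (p.factorial : ℚ) ≠ 0 := by positivity
    have h3 : (-1 / 2 : ℚ) ^ k = (-1) ^ k / 2 ^ k := by rw [div_pow]
    rw [h3]
    simp
    field_simp
  · push Not at h
    rw [hp_coeff_none, mul_zero]
    · by_cases h2 : Odd (n + p)
      · rw [coeff_hermite_of_odd_add h2]; simp
      · rw [coeff_hermite_of_lt]
        · simp
        · by_contra h3
          rw [Nat.not_odd_iff_even] at h2
          obtain ⟨r, hr⟩ := h2
          apply h (r - p)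
          omega
    · intro k hk
      apply h k
      omega

theorem wr_eq {N : ℕ} (d : Fin N → ℕ) :
    (Matrix.of fun i j : Fin N => (⇑derivative)^[(i : ℕ)]
        ((hermite (d j)).map (Int.castRingHom ℚ))).det
      = C (∏ j, ((d j).factorial : ℚ)) * JT hp (fun j => (d j : ℤ)) := by
  rw [map_prod, JT, ← Matrix.det_mul_row]
  congr 1
  ext1 i j
  simp only [Matrix.of_apply]
  rw [hermite_eq, iterate_derivative_C_mul, hp_derivative_iter]

theorem vander_eq {N : ℕ} (d : Fin N → ℕ) :
    (∏ i : Fin N, ∏ j : Fin N, if (i : ℕ) < (j : ℕ) then ((d j : ℚ) - (d i : ℚ)) else 1)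
      = (∏ j, ((d j).factorial : ℚ)) * JT invf (fun j => (d j : ℤ)) := by
  have h1 : (∏ i : Fin N, ∏ j : Fin N, if (i : ℕ) < (j : ℕ) then ((d j : ℚ) - (d i : ℚ)) else 1)
      = (vandermonde (fun j => (d j : ℚ))).det := by
    rw [det_vandermonde]
    refine Finset.prod_congr rfl fun i _ => ?_
    rw [← Finset.prod_filter]
    refine Finset.prod_congr ?_ fun _ _ => rfl
    ext j
    simp
  rw [h1, det_eval_matrixOfPolynomials_eq_det_vandermonde _ (fun i => descPochhammer ℚ i)
    (fun i => by rw [descPochhammer_natDegree]) (fun i => monic_descPochhammer ℚ i),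
    ← Matrix.det_transpose, JT, ← Matrix.det_mul_row]
  congr 1
  ext1 i j
  simp only [Matrix.of_apply, Matrix.transpose_apply]
  rw [descPochhammer_eval_eq_descFactorial]
  unfold invf
  split_ifs with h
  · rw [Nat.descFactorial_of_lt (by omega)]; simp
  · have : ((d j : ℤ) - ((i : ℕ) : ℤ)).toNat = d j - i := by omega
    rw [this, ← Nat.factorial_mul_descFactorial (show (i : ℕ) ≤ d j by omega)]
    have : ((d j - i).factorial : ℚ) ≠ 0 := by positivity
    push_cast
    field_simp

theorem JT_invf_ne_zero {N : ℕ} (d : Fin N → ℤ) (hd : Function.Injective d) (h0 : ∀ j, 0 ≤ d j) :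
    JT invf d ≠ 0 := by
  lift d to Fin N → ℕ using h0
  intro h
  have := vander_eq d
  change JT invf (fun j => (d j : ℤ)) = 0 at h
  rw [h, mul_zero, Finset.prod_eq_zero_iff] at this
  obtain ⟨i, _, hi⟩ := this
  rw [Finset.prod_eq_zero_iff] at hi
  obtain ⟨j, _, hj⟩ := hi
  split_ifs at hj with hij
  · rw [sub_eq_zero] at hj
    have : j = i := by
      apply hd
      change (d j : ℤ) = d i
      exact_mod_cast hj
    subst this
    omega
  · exact one_ne_zero hj

/-- normalized JT -/
noncomputable def RR {N : ℕ} (d : Fin N → ℤ) : ℚ[X] := C (JT invf d)⁻¹ * JT hp d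

theorem HeW_eq (l : List ℕ) : HeW l = RR (fun j => (degVec l j : ℤ)) := by
  unfold HeW RR
  rw [wr_eq, vanderQ, vander_eq, ← mul_assoc, ← C_mul]
  congr 2
  have : (∏ j, ((degVec l j).factorial : ℚ)) ≠ 0 := by
    apply Finset.prod_ne_zero_iff.2
    intros
    positivity
  field_simp

theorem RR_cons {N : ℕ} (d : Fin N → ℤ) :
    RR (Fin.cons 0 (fun i => d i + 1) : Fin (N + 1) → ℤ) = RR d := by
  unfold RR
  rw [JT_cons _ invf_zero invf_neg, JT_cons _ hp_zero hp_neg]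

theorem RR_perm {N : ℕ} (d : Fin N → ℤ) (σ : Equiv.Perm (Fin N)) : RR (d ∘ σ) = RR d := by
  unfold RR
  rw [JT_perm, JT_perm]
  rcases Int.units_eq_one_or (Equiv.Perm.sign σ) with h | h <;> simp [h]

theorem RR_range {N N' : ℕ} (d : Fin N → ℤ) (d' : Fin N' → ℤ) (hd : Function.Injective d)
    (hd' : Function.Injective d') (h : Set.range d = Set.range d') : RR d = RR d' := by
  have hN : N = N' := by
    have := Nat.card_range_of_injective hd
    rw [h, Nat.card_range_of_injective hd'] at this
    simpa using this.symm
  subst hN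
  let σ : Equiv.Perm (Fin N) :=
    ((Equiv.ofInjective d hd).trans (Equiv.setCongr h)).trans (Equiv.ofInjective d' hd').symm
  have : d = d' ∘ σ := by
    ext i
    simp [σ, Equiv.apply_ofInjective_symm]
  rw [this, RR_perm]

end WHF

namespace WHF

theorem partAt_eq_zero {l : List ℕ} {i : ℕ} (h : l.length ≤ i) : partAt l i = 0 := by
  simp [partAt, List.getD_eq_getElem?_getD, List.getElem?_eq_none h]

theorem partAt_eq_get {l : List ℕ} {i : ℕ} (h : i < l.length) : partAt l i = l[i] := by
  simp [partAt, List.getD_eq_getElem?_getD, h]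

theorem partAt_pos_iff {l : List ℕ} (hl : IsPartition l) (i : ℕ) :
    0 < partAt l i ↔ i < l.length := by
  constructor
  · intro h
    by_contra h2
    rw [partAt_eq_zero (by omega)] at h
    omega
  · intro h
    rw [partAt_eq_get h]
    exact hl.2 _ (List.getElem_mem h)

theorem partAt_antitone {l : List ℕ} (hl : IsPartition l) : Antitone (partAt l) := by
  intro i j hij
  by_cases h : j < l.length
  · rcases hij.eq_or_lt with rfl | hlt
    · exact le_rfl
    rw [partAt_eq_get h, partAt_eq_get (by omega)]
    exact List.pairwise_iff_getElem.1 hl.1 i j (by omega) h hlt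
  · rw [partAt_eq_zero (by omega)]
    omega

theorem partAt_inj {a b : List ℕ} (ha : IsPartition a) (hb : IsPartition b)
    (h : ∀ i, partAt a i = partAt b i) : a = b := by
  have hlen : a.length = b.length := by
    apply eq_of_forall_lt_iff
    intro c
    rw [← partAt_pos_iff ha, ← partAt_pos_iff hb, h]
  apply List.ext_getElem hlen
  intro i h1 h2
  rw [← partAt_eq_get h1, ← partAt_eq_get h2, h]

theorem exists_part (p : ℕ → ℕ) (hp : Antitone p) (n : ℕ) (hn : p n = 0) :
    ∃ l, IsPartition l ∧ (∀ i, partAt l i = p i) ∧ l.length ≤ n := by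
  classical
  have hex : ∃ n, p n = 0 := ⟨n, hn⟩
  refine ⟨(List.range (Nat.find hex)).map p, ⟨?_, ?_⟩, ?_, ?_⟩
  · rw [List.pairwise_map]
    exact List.pairwise_lt_range.imp fun h => hp h.le
  · intro x hx
    rw [List.mem_map] at hx
    obtain ⟨a, ha, rfl⟩ := hx
    have := Nat.find_min hex (List.mem_range.1 ha)
    omega
  · intro i
    by_cases h : i < Nat.find hex
    · rw [partAt_eq_get (by simpa using h)]
      simp
    · rw [partAt_eq_zero (by simpa using h)]
      have h1 := Nat.find_spec hex
      have h2 := hp (not_lt.1 h)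
      omega
  · simpa using Nat.find_min' hex hn

theorem sum_partAt (l : List ℕ) : ∀ (n : ℕ), l.length ≤ n →
    l.sum = ∑ i : Fin n, partAt l i := by
  induction l with
  | nil => intro n _; simp [partAt]
  | cons a l ih =>
    intro n hn
    obtain ⟨n, rfl⟩ : ∃ m, n = m + 1 := ⟨n - 1, by simp at hn; omega⟩
    rw [Fin.sum_univ_succ, List.sum_cons, ih n (by simpa using hn)]
    simp [partAt]

theorem length_le_of_sub {a b : List ℕ} (ha : IsPartition a) (h : SubP a b) :
    a.length ≤ b.length := by
  by_contra h2
  have h3 := (partAt_pos_iff ha b.length).2 (by omega)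
  have h4 := h b.length
  rw [partAt_eq_zero le_rfl] at h4
  omega

theorem SubP.refl (a : List ℕ) : SubP a a := fun _ => le_rfl
theorem SubP.trans {a b c : List ℕ} (h : SubP a b) (h' : SubP b c) : SubP a c :=
  fun i => (h i).trans (h' i)

theorem sub_finite (b : List ℕ) : {a : List ℕ | IsPartition a ∧ SubP a b}.Finite := by
  have h := (List.finite_length_le (Fin (b.sum + 1)) b.length).image (List.map Fin.val)
  refine h.subset ?_
  rintro a ⟨ha, hab⟩
  have hlt : ∀ x ∈ a, x < b.sum + 1 := by
    intro x hx
    obtain ⟨i, hi, rfl⟩ := List.getElem_of_mem hx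
    have h1 := hab i
    have h2 : i < b.length := lt_of_lt_of_le hi (length_le_of_sub ha hab)
    rw [partAt_eq_get hi, partAt_eq_get h2] at h1
    have := List.le_sum_of_mem (List.getElem_mem h2)
    omega
  refine ⟨a.pmap (fun x hx => ⟨x, hx⟩) hlt, ?_, ?_⟩
  · simpa using length_le_of_sub ha hab
  · rw [List.map_pmap]
    simp

noncomputable def subF (b : List ℕ) : Finset (List ℕ) := (sub_finite b).toFinset

theorem mem_subF {a b : List ℕ} : a ∈ subF b ↔ IsPartition a ∧ SubP a b := by
  simp [subF]

open Classical in
noncomputable def covF (b : List ℕ) : Finset (List ℕ) := (subF b).filter fun a => a.sum + 1 = b.sum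

theorem mem_covF {a b : List ℕ} : a ∈ covF b ↔ IsPartition a ∧ Covers a b := by
  simp [covF, mem_subF, Covers, and_assoc]

def bv (n : ℕ) (l : List ℕ) : Fin n → ℤ := fun i => (partAt l i : ℤ) + ((n : ℤ) - 1 - (i : ℕ))

theorem bv_nonneg (n : ℕ) (l : List ℕ) (i : Fin n) : 0 ≤ bv n l i := by
  unfold bv; omega

theorem bv_injective (n : ℕ) {l : List ℕ} (hl : IsPartition l) : Function.Injective (bv n l) := by
  have : StrictAnti (bv n l) := by
    intro i j hij
    have := partAt_antitone hl (show (i : ℕ) ≤ j from hij.le)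
    have h2 : (i : ℕ) < j := hij
    unfold bv
    omega
  exact this.injective

theorem bv_inj {n : ℕ} {a b : List ℕ} (ha : IsPartition a) (hb : IsPartition b)
    (han : a.length ≤ n) (hbn : b.length ≤ n) (h : bv n a = bv n b) : a = b := by
  apply partAt_inj ha hb
  intro i
  by_cases hi : i < n
  · have := congrFun h ⟨i, hi⟩
    simp only [bv] at this
    omega
  · rw [partAt_eq_zero (by omega), partAt_eq_zero (by omega)]

theorem bv_sum {n : ℕ} {a : List ℕ} (han : a.length ≤ n) :
    ∑ i, bv n a i = a.sum + ∑ i : Fin n, ((n : ℤ) - 1 - (i : ℕ)) := by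
  simp only [bv]
  rw [Finset.sum_add_distrib, sum_partAt a n han]
  push_cast
  rfl

structure Alt {n : ℕ} (f : (Fin n → ℤ) → ℚ) : Prop where
  perm : ∀ d (σ : Equiv.Perm (Fin n)), f (d ∘ σ) = ((Equiv.Perm.sign σ : ℤ) : ℚ) * f d
  neg : ∀ d j, d j < 0 → f d = 0

theorem Alt.inj {n : ℕ} {f : (Fin n → ℤ) → ℚ} (hf : Alt f) {d : Fin n → ℤ} {i j : Fin n}
    (hij : i ≠ j) (h : d i = d j) : f d = 0 := by
  have h1 := hf.perm d (Equiv.swap i j)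
  rw [Equiv.Perm.sign_swap hij] at h1
  have h2 : d ∘ Equiv.swap i j = d := by
    ext x
    simp only [Function.comp]
    rw [Equiv.swap_apply_def]
    split_ifs with h3 h4
    · rw [h3, h]
    · rw [h4, h]
    · rfl
  rw [h2] at h1
  push_cast at h1
  linarith

theorem Alt.Qop {n : ℕ} {f : (Fin n → ℤ) → ℚ} (hf : Alt f) (s : ℤ) (hs : 0 ≤ s) :
    Alt (Qop s f) := by
  constructor
  · intro d σ
    unfold WHF.Qop
    rw [Finset.mul_sum, ← Equiv.sum_comp σ (fun j => _ * f (Function.update d j (d j - s)))]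
    refine Finset.sum_congr rfl fun j _ => ?_
    rw [← hf.perm]
    congr 1
    ext x
    simp [Function.update_apply]
  · intro d j hj
    unfold WHF.Qop
    refine Finset.sum_eq_zero fun i _ => ?_
    apply hf.neg _ j
    rw [Function.update_apply]
    split_ifs with h
    · subst h; omega
    · exact hj

theorem Alt.iter {n : ℕ} {f : (Fin n → ℤ) → ℚ} (hf : Alt f) (s : ℤ) (hs : 0 ≤ s) (m : ℕ) :
    Alt ((WHF.Qop s)^[m] f) := by
  induction m with
  | zero => exact hf
  | succ m ih => rw [Function.iterate_succ_apply']; exact ih.Qop s hs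

theorem exists_dec {n : ℕ} (d d' : Fin n → ℤ) (hle : ∀ i, d' i ≤ d i)
    (hs : ∑ i, d' i + 1 = ∑ i, d i) : ∃ j, d' = Function.update d j (d j - 1) := by
  have hsum : ∑ i, (d i - d' i) = 1 := by rw [Finset.sum_sub_distrib]; omega
  have : ∃ j, 0 < d j - d' j := by
    by_contra h
    push Not at h
    have := Finset.sum_nonpos (s := Finset.univ) fun i _ => h i
    omega
  obtain ⟨j, hj⟩ := this
  refine ⟨j, ?_⟩
  rw [← Finset.add_sum_erase _ _ (Finset.mem_univ j)] at hsum
  have hnn : ∀ i ∈ Finset.univ.erase j, 0 ≤ d i - d' i := fun i _ => by have := hle i; omega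
  have h0 := Finset.sum_nonneg hnn
  have h1 : ∑ i ∈ Finset.univ.erase j, (d i - d' i) = 0 := by omega
  rw [Finset.sum_eq_zero_iff_of_nonneg hnn] at h1
  ext i
  rw [Function.update_apply]
  split_ifs with h
  · subst h; omega
  · have := h1 i (by simp [h])
    omega

theorem Qop_bv {n : ℕ} {f : (Fin n → ℤ) → ℚ} (hf : Alt f) {b : List ℕ} (hb : IsPartition b)
    (hbn : b.length ≤ n) : Qop 1 f (bv n b) = ∑ a ∈ covF b, f (bv n a) := by
  classical
  have hlen : ∀ a ∈ covF b, a.length ≤ n := fun a ha => by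
    rw [mem_covF] at ha
    exact (length_le_of_sub ha.1 ha.2.1).trans hbn
  have h1 : ∑ a ∈ covF b, f (bv n a) = ∑ d ∈ (covF b).image (bv n), f d := by
    rw [Finset.sum_image]
    intro x hx y hy hxy
    exact bv_inj (mem_covF.1 hx).1 (mem_covF.1 hy).1 (hlen x hx) (hlen y hy) hxy
  have h2 : Qop 1 f (bv n b) = ∑ d ∈ Finset.univ.image
      (fun j => Function.update (bv n b) j (bv n b j - 1)), f d := by
    rw [Finset.sum_image]
    · rfl
    intro x _ y _ hxy
    by_contra hne
    have := congrFun hxy x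
    simp only [Function.update_self, Function.update_of_ne hne] at this
    omega
  rw [h1, h2]
  symm
  apply Finset.sum_subset
  · intro d hd
    rw [Finset.mem_image] at hd
    obtain ⟨a, ha, rfl⟩ := hd
    have ha' := mem_covF.1 ha
    rw [Finset.mem_image]
    obtain ⟨j, hj⟩ := exists_dec (bv n b) (bv n a) (fun i => by
      have := ha'.2.1 i
      unfold bv
      omega) (by
      rw [bv_sum hbn, bv_sum (hlen a ha), ← ha'.2.2]
      push_cast
      ring)
    exact ⟨j, Finset.mem_univ _, hj.symm⟩
  · intro d hd hd2
    by_contra hfd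
    apply hd2
    rw [Finset.mem_image] at hd
    obtain ⟨j, _, rfl⟩ := hd
    have hanti := partAt_antitone hb
    have hlt : partAt b (j + 1) < partAt b j := by
      by_contra hle
      have he : partAt b (j + 1) = partAt b j := le_antisymm (hanti (Nat.le_succ _)) (not_lt.1 hle)
      by_cases hjn : (j : ℕ) + 1 < n
      · apply hfd
        have hne : j ≠ ⟨j + 1, hjn⟩ := by
          intro h
          have := congrArg Fin.val h
          simp at this
        apply hf.inj hne
        rw [Function.update_self, Function.update_of_ne hne.symm]
        simp only [bv]
        rw [he]
        push_cast
        ring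
      · apply hfd
        apply hf.neg _ j
        rw [Function.update_self]
        have h0 : partAt b (j + 1) = 0 := partAt_eq_zero (by omega)
        simp only [bv]
        have := j.2
        omega
    obtain ⟨a, ha, hap, han⟩ := exists_part (fun i => if i = j then partAt b j - 1 else partAt b i)
      (by
        apply antitone_nat_of_succ_le
        intro i
        have h3 := hanti (Nat.le_succ i)
        simp only [Nat.succ_eq_add_one] at h3
        split_ifs with h4 h5 h5
        · omega
        · rw [h4] at h3; omega
        · rw [h5]; omega
        · exact h3) n
      (by
        have := j.2
        rw [if_neg (by omega), partAt_eq_zero hbn])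
    have hbva : bv n a = Function.update (bv n b) j (bv n b j - 1) := by
      ext i
      rw [Function.update_apply]
      simp only [bv, hap]
      by_cases hij : i = j
      · subst hij
        simp
        omega
      · rw [if_neg (by intro h; exact hij (Fin.ext h)), if_neg hij]
    rw [Finset.mem_image]
    refine ⟨a, mem_covF.2 ⟨ha, fun i => ?_, ?_⟩, hbva⟩
    · rw [hap]
      split_ifs with h
      · rw [h]; omega
      · exact le_rfl
    · have h5 := bv_sum han
      have h6 := bv_sum hbn
      rw [hbva, Finset.sum_update_of_mem (Finset.mem_univ _)] at h5
      rw [Finset.sum_eq_add_sum_sdiff_singleton_of_mem (Finset.mem_univ j)] at h6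
      omega

def ChainP (n : ℕ) (a b : List ℕ) (c : Fin (n + 1) → List ℕ) : Prop :=
  c 0 = a ∧ c (Fin.last _) = b ∧
    ∀ i : Fin n, IsPartition (c i.castSucc) ∧ IsPartition (c i.succ) ∧
        Covers (c i.castSucc) (c i.succ)

noncomputable def numP (n : ℕ) (a b : List ℕ) : ℕ :=
  Nat.card {c : Fin (n + 1) → List ℕ // ChainP n a b c}

theorem numPaths_eq (a b : List ℕ) : numPaths a b = numP (b.sum - a.sum) a b := rfl

theorem chain_sigma_ext {n : ℕ} {a b : List ℕ}
    {p q : Σ b' : {x // x ∈ covF b}, {c : Fin (n + 1) → List ℕ // ChainP n a b' c}}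
    (h : p.2.1 = q.2.1) : p = q := by
  rcases p with ⟨⟨b', hb'⟩, ⟨c, hc1, hc2, hc3⟩⟩
  rcases q with ⟨⟨b₁, hb₁⟩, ⟨c₁, hd1, hd2, hd3⟩⟩
  simp only at hc2 hd2 h
  subst h hc2 hd2
  rfl

def chainEquiv (n : ℕ) (a b : List ℕ) (hb : IsPartition b) :
    {c : Fin (n + 1 + 1) → List ℕ // ChainP (n + 1) a b c} ≃
      Σ b' : {x // x ∈ covF b}, {c : Fin (n + 1) → List ℕ // ChainP n a b' c} where
  toFun c := ⟨⟨c.1 (Fin.last n).castSucc, mem_covF.2 (by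
      have := c.2.2.2 (Fin.last n)
      rw [Fin.succ_last, c.2.2.1] at this
      exact ⟨this.1, this.2.2⟩)⟩,
    ⟨fun i => c.1 i.castSucc, c.2.1, rfl, fun i => by
      have := c.2.2.2 i.castSucc
      rw [Fin.succ_castSucc] at this
      exact this⟩⟩
  invFun p := ⟨Fin.snoc (α := fun _ => List ℕ) p.2.1 b, by
      rw [← Fin.castSucc_zero, Fin.snoc_castSucc]
      exact p.2.2.1, by
      rw [Fin.snoc_last], by
      intro i
      refine Fin.lastCases ?_ (fun i => ?_) i
      · rw [Fin.snoc_castSucc, Fin.succ_last, Fin.snoc_last, p.2.2.2.1]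
        have := mem_covF.1 p.1.2
        exact ⟨this.1, hb, this.2⟩
      · rw [Fin.snoc_castSucc, Fin.succ_castSucc, Fin.snoc_castSucc]
        exact p.2.2.2.2 i⟩
  left_inv c := by
    apply Subtype.ext
    funext i
    refine Fin.lastCases ?_ (fun i => ?_) i
    · simp only [Fin.snoc_last]
      exact c.2.2.1.symm
    · simp only [Fin.snoc_castSucc]
  right_inv p := by
    apply chain_sigma_ext
    funext i
    simp only [Fin.snoc_castSucc]

theorem chain_finite (n : ℕ) (a : List ℕ) : ∀ b, IsPartition b →
    Finite {c : Fin (n + 1) → List ℕ // ChainP n a b c} := by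
  induction n with
  | zero =>
    intro b _
    have : Subsingleton {c : Fin (0 + 1) → List ℕ // ChainP 0 a b c} := by
      constructor
      rintro ⟨c, hc⟩ ⟨c', hc'⟩
      apply Subtype.ext
      funext i
      have : i = 0 := by omega
      subst this
      change c 0 = c' 0
      rw [hc.1, hc'.1]
    infer_instance
  | succ n ih =>
    intro b hb
    have : ∀ b' : {x // x ∈ covF b}, Finite {c : Fin (n + 1) → List ℕ // ChainP n a b' c} :=
      fun b' => ih _ (mem_covF.1 b'.2).1
    exact Finite.of_equiv _ (chainEquiv n a b hb).symm

theorem numP_succ (n : ℕ) (a b : List ℕ) (hb : IsPartition b) :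
    numP (n + 1) a b = ∑ b' ∈ covF b, numP n a b' := by
  have : ∀ b' : {x // x ∈ covF b}, Finite {c : Fin (n + 1) → List ℕ // ChainP n a b' c} :=
      fun b' => chain_finite n a _ (mem_covF.1 b'.2).1
  rw [numP, Nat.card_congr (chainEquiv n a b hb), Nat.card_sigma]
  exact Finset.sum_coe_sort (covF b) (fun b' => numP n a b')

open Classical in
theorem numP_zero (a b : List ℕ) : numP 0 a b = if a = b then 1 else 0 := by
  unfold numP
  split_ifs with h
  · subst h
    rw [Nat.card_eq_one_iff_unique]
    refine ⟨⟨?_⟩, ⟨⟨fun _ => a, rfl, rfl, fun i => i.elim0⟩⟩⟩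
    rintro ⟨c, hc⟩ ⟨c', hc'⟩
    apply Subtype.ext
    funext i
    have : i = 0 := by omega
    subst this
    change c 0 = c' 0
    rw [hc.1, hc'.1]
  · have : IsEmpty {c : Fin (0 + 1) → List ℕ // ChainP 0 a b c} := by
      constructor
      rintro ⟨c, h1, h2, _⟩
      exact h (h1.symm.trans h2)
    exact Nat.card_of_isEmpty

theorem numP_ne_zero (n : ℕ) (a : List ℕ) : ∀ b, IsPartition b → numP n a b ≠ 0 →
    SubP a b ∧ a.sum + n = b.sum := by
  induction n with
  | zero =>
    intro b hb h
    rw [numP_zero] at h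
    have : a = b := by by_contra h2; simp [h2] at h
    subst this
    exact ⟨SubP.refl _, rfl⟩
  | succ n ih =>
    intro b hb h
    rw [numP_succ n a b hb] at h
    obtain ⟨b', hb', h'⟩ := Finset.exists_ne_zero_of_sum_ne_zero h
    have := mem_covF.1 hb'
    obtain ⟨h1, h2⟩ := ih b' this.1 h'
    exact ⟨SubP.trans h1 this.2.1, by have := this.2.2; omega⟩

theorem numP_nil_pos (n : ℕ) : ∀ b, IsPartition b → b.sum = n → 0 < numP n [] b := by
  induction n with
  | zero =>
    intro b hb h
    have : b = [] := by
      cases b with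
      | nil => rfl
      | cons x b =>
        have := hb.2 x (by simp)
        simp at h
        omega
    subst this
    rw [numP_zero]; simp
  | succ n ih =>
    intro b hb h
    rw [numP_succ n [] b hb]
    have hlen : 0 < b.length := by
      cases b with
      | nil => simp at h
      | cons => simp
    have hanti := partAt_antitone hb
    obtain ⟨a, ha, hap, han⟩ := exists_part
      (fun i => if i = b.length - 1 then partAt b (b.length - 1) - 1 else partAt b i)
      (by
        apply antitone_nat_of_succ_le
        intro i
        have h3 := hanti (Nat.le_succ i)
        simp only [Nat.succ_eq_add_one] at h3
        split_ifs with h4 h5 h5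
        · omega
        · rw [h4] at h3; omega
        · rw [partAt_eq_zero (by omega)]; omega
        · exact h3) b.length
      (by
        rw [if_neg (by omega), partAt_eq_zero le_rfl])
    have hcov : a ∈ covF b := by
      refine mem_covF.2 ⟨ha, fun i => ?_, ?_⟩
      · rw [hap]
        split_ifs with h
        · rw [h]; omega
        · exact le_rfl
      · rw [sum_partAt a _ han, sum_partAt b _ le_rfl,
          ← Finset.add_sum_erase _ _ (Finset.mem_univ (⟨b.length - 1, by omega⟩ : Fin b.length)),
          ← Finset.add_sum_erase (a := (⟨b.length - 1, by omega⟩ : Fin b.length)) _ (fun i : Fin b.length => partAt b i) (Finset.mem_univ _)]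
        have h1 : ∀ i ∈ Finset.univ.erase (⟨b.length - 1, by omega⟩ : Fin b.length),
            partAt a i = partAt b i := by
          intro i hi
          rw [hap, if_neg]
          intro h
          exact Finset.ne_of_mem_erase hi (Fin.ext h)
        rw [Finset.sum_congr rfl h1, hap]
        have := (partAt_pos_iff hb (b.length - 1)).2 (by omega)
        simp
        omega
    have h2 := ih a ha (by have := (mem_covF.1 hcov).2.2; omega)
    exact lt_of_lt_of_le h2 (Finset.single_le_sum (f := fun b' => numP n [] b') (fun _ _ => Nat.zero_le _) hcov)

theorem Qop_iter_bv {n : ℕ} {f : (Fin n → ℤ) → ℚ} (hf : Alt f) (m : ℕ) : ∀ {b : List ℕ},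
    IsPartition b → b.length ≤ n →
    (Qop 1)^[m] f (bv n b) = ∑ a ∈ subF b, (numP m a b : ℚ) * f (bv n a) := by
  classical
  induction m with
  | zero =>
    intro b hb hbn
    simp only [numP_zero]
    rw [Finset.sum_eq_single b]
    · simp
    · intro a _ h; simp [h]
    · intro h
      exact absurd (mem_subF.2 ⟨hb, SubP.refl _⟩) h
  | succ m ih =>
    intro b hb hbn
    rw [Function.iterate_succ_apply', Qop_bv (hf.iter 1 (by norm_num) m) hb hbn]
    have h1 : ∀ b' ∈ covF b, (Qop 1)^[m] f (bv n b') = ∑ a ∈ subF b, (numP m a b' : ℚ) * f (bv n a) := by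
      intro b' hb'
      obtain ⟨hp, hc⟩ := mem_covF.1 hb'
      rw [ih hp ((length_le_of_sub hp hc.1).trans hbn)]
      apply Finset.sum_subset
      · intro a ha
        rw [mem_subF] at ha ⊢
        exact ⟨ha.1, SubP.trans ha.2 hc.1⟩
      · intro a ha ha'
        have : numP m a b' = 0 := by
          by_contra h
          exact ha' (mem_subF.2 ⟨(mem_subF.1 ha).1, (numP_ne_zero m a b' hp h).1⟩)
        rw [this]; simp
    rw [Finset.sum_congr rfl h1, Finset.sum_comm]
    refine Finset.sum_congr rfl fun a _ => ?_
    rw [numP_succ m a b hb]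
    push_cast
    rw [Finset.sum_mul]

end WHF

namespace WHF

def lamOf (s : List ℕ) : List ℕ :=
  (((List.range s.length).map fun t => s.getD t 0 - t).reverse).filter fun x => decide (0 < x)

def DD (μ ν : List ℕ) (k : ℕ) : Finset ℕ :=
    ((Finset.univ : Finset (Fin μ.length)).image fun i => 2 * (degVec μ i + ν.length)) ∪
    ((Finset.range ν.length).image fun t => 2 * t) ∪
    ((Finset.univ : Finset (Fin ν.length)).image fun j =>
        2 * (degVec ν j + μ.length + k) + 1) ∪
    ((Finset.range (μ.length + k)).image fun t => 2 * t + 1)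

theorem Phi_eq (μ ν : List ℕ) (k : ℕ) : Phi μ ν k = lamOf ((DD μ ν k).sort (· ≤ ·)) := rfl

theorem sorted_ge {s : List ℕ} (hs : s.Pairwise (· < ·)) (a : ℕ) (ha : ∀ x ∈ s, a ≤ x) :
    ∀ (t : ℕ) (ht : t < s.length), a + t ≤ s[t] := by
  intro t
  induction t with
  | zero => intro ht; simpa using ha _ (List.getElem_mem ht)
  | succ t ih =>
    intro ht
    have h1 := ih (by omega)
    have h2 := List.pairwise_iff_getElem.1 hs t (t + 1) (by omega) ht (by omega)
    omega

theorem lamOf_cons (s : List ℕ) : lamOf (0 :: s.map Nat.succ) = lamOf s := by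
  unfold lamOf
  have : (0 :: s.map Nat.succ).length = s.length + 1 := by simp
  rw [this, List.range_succ_eq_map, List.map_cons, List.reverse_cons, List.filter_append]
  simp only [List.getD_cons_zero, List.map_map]
  simp only [Nat.sub_zero, lt_self_iff_false, decide_false, List.filter_cons, Bool.false_eq_true, if_false, List.filter_nil, List.append_nil]
  congr 2
  apply List.map_congr_left
  intro t ht
  simp only [List.mem_range] at ht
  simp [List.getD_eq_getElem?_getD, ht]

theorem lamOf_pos (s : List ℕ) (hs : s.Pairwise (· < ·)) (h0 : ∀ x ∈ s, 1 ≤ x) :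
    lamOf s = ((List.range s.length).map fun t => s.getD t 0 - t).reverse := by
  unfold lamOf
  rw [List.filter_eq_self]
  intro x hx
  simp only [List.mem_reverse, List.mem_map, List.mem_range] at hx
  obtain ⟨t, ht, rfl⟩ := hx
  have := sorted_ge hs 1 h0 t ht
  simp [List.getD_eq_getElem?_getD, ht]
  omega

theorem list_cases (s : List ℕ) (hs : s.Pairwise (· < ·)) :
    (∀ x ∈ s, 1 ≤ x) ∨ ∃ s' : List ℕ, s'.Pairwise (· < ·) ∧ s = 0 :: s'.map Nat.succ := by
  cases s with
  | nil => left; simp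
  | cons a s =>
    rw [List.pairwise_cons] at hs
    by_cases ha : a = 0
    · right
      subst ha
      have hm : (s.map Nat.pred).map Nat.succ = s := by
        rw [List.map_map]
        conv_rhs => rw [← List.map_id s]
        apply List.map_congr_left
        intro x hx
        have := hs.1 x hx
        simp
        omega
      refine ⟨s.map Nat.pred, ?_, by rw [hm]⟩
      rw [← hm, List.pairwise_map] at hs
      exact hs.2.imp fun h => by omega
    · left
      intro x hx
      rcases List.mem_cons.1 hx with rfl | hx
      · omega
      · have := hs.1 x hx
        omega

theorem range_perm {N N' : ℕ} (d : Fin N → ℤ) (d' : Fin N' → ℤ) (hd : Function.Injective d)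
    (hd' : Function.Injective d') (h : Set.range d = Set.range d') :
    N = N' ∧ ∑ i, d i = ∑ i, d' i := by
  have hN : N = N' := by
    have := Nat.card_range_of_injective hd
    rw [h, Nat.card_range_of_injective hd'] at this
    simpa using this.symm
  refine ⟨hN, ?_⟩
  subst hN
  let σ : Equiv.Perm (Fin N) :=
    ((Equiv.ofInjective d hd).trans (Equiv.setCongr h)).trans (Equiv.ofInjective d' hd').symm
  have : d = d' ∘ σ := by
    ext i
    simp [σ, Equiv.apply_ofInjective_symm]
  rw [this]
  exact Equiv.sum_comp σ d'

def gv (s : List ℕ) : Fin s.length → ℤ := fun i => (s.get i : ℤ)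

theorem gv_inj {s : List ℕ} (hs : s.Pairwise (· < ·)) : Function.Injective (gv s) := by
  have : s.Nodup := hs.imp fun h => h.ne
  intro i j h
  simp only [gv] at h
  exact List.nodup_iff_injective_get.1 this (by exact_mod_cast h)

theorem gv_range (s : List ℕ) : Set.range (gv s) = {y | ∃ x ∈ s, (x : ℤ) = y} := by
  ext y
  simp only [gv, Set.mem_range, Set.mem_ofPred_eq, List.mem_iff_get]
  constructor
  · rintro ⟨i, hi⟩; exact ⟨_, ⟨i, rfl⟩, hi⟩
  · rintro ⟨_, ⟨i, rfl⟩, hi⟩; exact ⟨i, hi⟩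

theorem cons_inj {N : ℕ} {d : Fin N → ℤ} (hd : Function.Injective d) (h0 : ∀ i, 0 ≤ d i) :
    Function.Injective (Fin.cons 0 (fun i => d i + 1) : Fin (N + 1) → ℤ) := by
  rw [Fin.cons_injective_iff]
  refine ⟨?_, fun i j h => hd (by simpa using h)⟩
  rintro ⟨i, hi⟩
  have := h0 i
  simp only at hi
  omega

theorem lamOf_HeW (n : ℕ) : ∀ (s : List ℕ), s.length = n → s.Pairwise (· < ·) →
    HeW (lamOf s) = RR (gv s) := by
  induction n with
  | zero =>
    intro s hs _
    have : s = [] := List.length_eq_zero_iff.1 hs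
    subst this
    rw [HeW_eq]
    apply RR_range
    · intro i; exact i.elim0
    · intro i; exact i.elim0
    · ext y
      constructor
      · rintro ⟨i, _⟩; exact i.elim0
      · rintro ⟨i, _⟩; exact i.elim0
  | succ n ih =>
    intro s hlen hs
    rcases list_cases s hs with h | ⟨s', hs', rfl⟩
    · rw [lamOf_pos s hs h, HeW_eq]
      set l := ((List.range s.length).map fun t => s.getD t 0 - t).reverse with hl
      have hll : l.length = s.length := by simp [hl]
      have hdv : ∀ i : Fin l.length, degVec l i = s.get ⟨s.length - 1 - i, by have := i.2; omega⟩ := by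
        intro i
        have hi := i.2
        have hlt : s.length - 1 - (i : ℕ) < s.length := by omega
        have h1 := sorted_ge hs 1 h (s.length - 1 - i) hlt
        unfold degVec
        have h2 : l.get i = s[s.length - 1 - (i : ℕ)] - (s.length - 1 - i) := by
          simp [hl, List.getElem_reverse, hlt]
        rw [h2]
        simp only [List.get_eq_getElem]
        omega
      have hg : Set.range (fun j => (degVec l j : ℤ)) = Set.range (gv s) := by
        ext y
        constructor
        · rintro ⟨i, rfl⟩
          simp only [hdv]
          exact ⟨⟨s.length - 1 - i, by have := i.2; omega⟩, rfl⟩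
        · rintro ⟨i, rfl⟩
          refine ⟨⟨s.length - 1 - i, by have := i.2; omega⟩, ?_⟩
          simp only [hdv, gv]
          congr 2
          apply Fin.ext
          have := i.2
          simp
          omega
      apply RR_range _ _ _ (gv_inj hs) hg
      intro i j hij
      simp only [hdv] at hij
      have := gv_inj hs hij
      simp only [Fin.mk.injEq] at this
      apply Fin.ext
      have := i.2
      have := j.2
      omega
    · rw [lamOf_cons, ih s' (by simpa using hlen) hs', ← RR_cons (gv s')]
      apply RR_range _ _ (cons_inj (gv_inj hs') (fun i => by simp [gv])) (gv_inj hs)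
      rw [gv_range, Fin.range_cons]
      ext y
      simp only [Set.mem_insert_iff, Set.mem_range, Set.mem_ofPred_eq, List.mem_cons, List.mem_map]
      constructor
      · rintro (rfl | ⟨i, hi⟩)
        · exact ⟨0, Or.inl rfl, rfl⟩
        · exact ⟨_, Or.inr ⟨_, List.get_mem s' i, rfl⟩, by simpa [gv] using hi⟩
      · rintro ⟨x, rfl | ⟨z, hz, rfl⟩, hx⟩
        · left; simpa using hx.symm
        · right
          obtain ⟨i, hi⟩ := List.mem_iff_get.1 hz
          refine ⟨i, ?_⟩
          rw [← hx, gv, hi]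
          simp

theorem lamOf_sum (s : List ℕ) (hs : s.Pairwise (· < ·)) :
    ((lamOf s).sum : ℤ) = ∑ i, gv s i - sN s.length := by
  have hfil : ∀ l : List ℕ, (l.filter fun x => decide (0 < x)).sum = l.sum := by
    intro l
    induction l with
    | nil => rfl
    | cons a l ih =>
      rw [List.filter_cons]
      split_ifs with h
      · simp [ih]
      · simp at h; simp [h, ih]
  rw [lamOf, hfil, List.sum_reverse, sN, ← Finset.sum_sub_distrib]
  have : (List.range s.length).map (fun t => s.getD t 0 - t) = List.ofFn (fun i : Fin s.length => s.getD i 0 - (i : ℕ)) := by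
    apply List.ext_getElem
    · simp
    · intro i h1 h2
      have h3 : i < s.length := by simpa using h1
      simp [h3]
  rw [this, List.sum_ofFn]
  push_cast
  refine Finset.sum_congr rfl fun i _ => ?_
  have h := sorted_ge hs 0 (by simp) i i.2
  simp only [gv]
  simp [List.getD_eq_getElem?_getD]
  simp at h
  omega

def vec (n₁ n₂ : ℕ) (μ ν : List ℕ) : Fin (n₁ + n₂) → ℤ :=
  Fin.append (fun i => 2 * bv n₁ μ i) (fun i => 2 * bv n₂ ν i + 1)

theorem vec_nonneg (n₁ n₂ : ℕ) (μ ν : List ℕ) (i : Fin (n₁ + n₂)) : 0 ≤ vec n₁ n₂ μ ν i := by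
  unfold vec
  refine Fin.addCases (fun i => ?_) (fun i => ?_) i
  · rw [Fin.append_left]; have := bv_nonneg n₁ μ i; omega
  · rw [Fin.append_right]; have := bv_nonneg n₂ ν i; omega

theorem vec_inj (n₁ n₂ : ℕ) {μ ν : List ℕ} (hμ : IsPartition μ) (hν : IsPartition ν) :
    Function.Injective (vec n₁ n₂ μ ν) := by
  unfold vec
  rw [Fin.append_injective_iff]
  refine ⟨fun i j h => bv_injective n₁ hμ (by simpa using h),
    fun i j h => bv_injective n₂ hν (by simpa using h), ?_⟩
  intro i j h
  omega

theorem vec_range (n₁ n₂ : ℕ) (μ ν : List ℕ) (y : ℤ) : y ∈ Set.range (vec n₁ n₂ μ ν) ↔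
    (∃ i, 2 * bv n₁ μ i = y) ∨ (∃ i, 2 * bv n₂ ν i + 1 = y) := by
  unfold vec
  constructor
  · rintro ⟨i, rfl⟩
    refine Fin.addCases (fun i => ?_) (fun i => ?_) i
    · rw [Fin.append_left]; exact Or.inl ⟨i, rfl⟩
    · rw [Fin.append_right]; exact Or.inr ⟨i, rfl⟩
  · rintro (⟨i, rfl⟩ | ⟨i, rfl⟩)
    · exact ⟨Fin.castAdd _ i, Fin.append_left _ _ _⟩
    · exact ⟨Fin.natAdd _ i, Fin.append_right _ _ _⟩

theorem bv_range {l : List ℕ} (n r : ℕ) (hn : n = l.length + r) (y : ℤ) :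
    (∃ i, bv n l i = y) ↔
      (∃ i : Fin l.length, ((degVec l i + r : ℕ) : ℤ) = y) ∨ (∃ t < r, (t : ℤ) = y) := by
  subst hn
  constructor
  · rintro ⟨i, rfl⟩
    have hi2 := i.2
    by_cases hi : (i : ℕ) < l.length
    · left
      refine ⟨⟨i, hi⟩, ?_⟩
      simp only [degVec, bv, partAt_eq_get hi]
      push_cast
      simp only [List.get_eq_getElem]
      omega
    · right
      refine ⟨l.length + r - 1 - i, by omega, ?_⟩
      simp only [bv]
      rw [partAt_eq_zero (by omega)]
      push_cast
      omega
  · rintro (⟨i, rfl⟩ | ⟨t, ht, rfl⟩)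
    · have hi := i.2
      refine ⟨⟨i, by omega⟩, ?_⟩
      simp only [degVec, bv, partAt_eq_get hi]
      push_cast
      simp only [List.get_eq_getElem]
      omega
    · refine ⟨⟨l.length + r - 1 - t, by omega⟩, ?_⟩
      simp only [bv]
      rw [partAt_eq_zero (by omega)]
      push_cast
      omega

theorem DD_range (μ ν : List ℕ) (k : ℕ) :
    Set.range (gv ((DD μ ν k).sort (· ≤ ·))) =
      Set.range (vec (μ.length + ν.length) (μ.length + ν.length + k) μ ν) := by
  ext y
  rw [vec_range, gv_range]
  have e1 : (∃ i, 2 * bv (μ.length + ν.length) μ i = y) ↔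
      ∃ z, (∃ i, bv (μ.length + ν.length) μ i = z) ∧ 2 * z = y := by simp
  have e2 : (∃ i, 2 * bv (μ.length + ν.length + k) ν i + 1 = y) ↔
      ∃ z, (∃ i, bv (μ.length + ν.length + k) ν i = z) ∧ 2 * z + 1 = y := by simp
  rw [e1, e2]
  simp only [bv_range (μ.length + ν.length) ν.length rfl,
    bv_range (l := ν) (μ.length + ν.length + k) (μ.length + k) (by omega)]
  simp only [Set.mem_ofPred_eq, Finset.mem_sort, DD, Finset.mem_union, Finset.mem_image, Finset.mem_univ, true_and, Finset.mem_range]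
  constructor
  · rintro ⟨x, ((⟨i, rfl⟩ | ⟨t, ht, rfl⟩) | ⟨i, rfl⟩) | ⟨t, ht, rfl⟩, rfl⟩
    · exact Or.inl ⟨_, Or.inl ⟨i, rfl⟩, by push_cast; ring⟩
    · exact Or.inl ⟨_, Or.inr ⟨t, ht, rfl⟩, by push_cast; ring⟩
    · exact Or.inr ⟨_, Or.inl ⟨i, rfl⟩, by push_cast; ring⟩
    · exact Or.inr ⟨_, Or.inr ⟨t, ht, rfl⟩, by push_cast; ring⟩
  · rintro (⟨_, ⟨i, rfl⟩ | ⟨t, ht, rfl⟩, rfl⟩ | ⟨_, ⟨i, rfl⟩ | ⟨t, ht, rfl⟩, rfl⟩)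
    · exact ⟨_, Or.inl (Or.inl (Or.inl ⟨i, rfl⟩)), by push_cast; ring⟩
    · exact ⟨_, Or.inl (Or.inl (Or.inr ⟨t, ht, rfl⟩)), by push_cast; ring⟩
    · exact ⟨_, Or.inl (Or.inr ⟨i, rfl⟩), by push_cast; ring⟩
    · exact ⟨_, Or.inr ⟨t, ht, rfl⟩, by push_cast; ring⟩

theorem sN_two (N : ℕ) : 2 * sN N = N * ((N : ℤ) - 1) := by
  unfold sN
  induction N with
  | zero => simp
  | succ N ih =>
    rw [Fin.sum_univ_castSucc]
    simp only [Fin.val_castSucc, Fin.val_last]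
    rw [mul_add, ih]
    push_cast
    ring

theorem vec_sum {n₁ n₂ k : ℕ} {μ ν : List ℕ} (h₁ : μ.length ≤ n₁) (h₂ : ν.length ≤ n₂)
    (hk : n₂ = n₁ + k) : ∑ i, vec n₁ n₂ μ ν i - sN (n₁ + n₂)
      = ((k * (k + 1) / 2 : ℕ) : ℤ) + 2 * (μ.sum + ν.sum) := by
  unfold vec
  rw [Fin.sum_univ_add]
  simp only [Fin.append_left, Fin.append_right]
  rw [Finset.sum_add_distrib, ← Finset.mul_sum, ← Finset.mul_sum, bv_sum h₁, bv_sum h₂]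
  have h3 : ∀ n : ℕ, ∑ i : Fin n, ((n : ℤ) - 1 - (i : ℕ)) = n * ((n : ℤ) - 1) - sN n := by
    intro n
    rw [Finset.sum_sub_distrib]
    simp [sN]
    ring
  rw [h3, h3]
  have a1 := sN_two n₁
  have a2 := sN_two n₂
  have a3 := sN_two (n₁ + n₂)
  have a4 : 2 * ((k * (k + 1) / 2 : ℕ) : ℤ) = k * (k + 1) := by
    have := Nat.mul_div_cancel' (Nat.even_mul_succ_self k).two_dvd
    exact_mod_cast this
  subst hk
  push_cast at *
  simp
  nlinarith

theorem vec_shift {n₁ n₂ : ℕ} {μ ν : List ℕ} (hμ : IsPartition μ) (hν : IsPartition ν)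
    (h₁ : μ.length ≤ n₁) (h₂ : ν.length ≤ n₂) :
    RR (vec (n₁ + 1) (n₂ + 1) μ ν) = RR (vec n₁ n₂ μ ν) := by
  have i1 := cons_inj (vec_inj n₁ n₂ hμ hν) (vec_nonneg n₁ n₂ μ ν)
  have i2 := cons_inj i1 (by
    intro i
    refine Fin.cases ?_ (fun i => ?_) i
    · simp
    · have := vec_nonneg n₁ n₂ μ ν i
      rw [Fin.cons_succ]; omega)
  rw [← RR_cons (vec n₁ n₂ μ ν), ← RR_cons (Fin.cons 0 _)]
  apply RR_range _ _ (vec_inj _ _ hμ hν) i2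
  have hbv : ∀ (n : ℕ) (l : List ℕ), l.length ≤ n → ∀ y, (∃ i, bv (n + 1) l i = y) ↔
      y = 0 ∨ ∃ i, bv n l i + 1 = y := by
    intro n l hl y
    constructor
    · rintro ⟨i, rfl⟩
      refine Fin.lastCases ?_ (fun i => ?_) i
      · left
        simp only [bv, Fin.val_last]
        rw [partAt_eq_zero hl]
        push_cast
        ring
      · right
        refine ⟨i, ?_⟩
        simp only [bv, Fin.val_castSucc]
        push_cast
        ring
    · rintro (rfl | ⟨i, rfl⟩)
      · refine ⟨Fin.last _, ?_⟩
        simp only [bv, Fin.val_last]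
        rw [partAt_eq_zero hl]
        push_cast
        ring
      · refine ⟨i.castSucc, ?_⟩
        simp only [bv, Fin.val_castSucc]
        push_cast
        ring
  ext y
  have e1 : (∃ i, 2 * bv (n₁ + 1) μ i = y) ↔
      ∃ z, (∃ i, bv (n₁ + 1) μ i = z) ∧ 2 * z = y := by simp
  have e2 : (∃ i, 2 * bv (n₂ + 1) ν i + 1 = y) ↔
      ∃ z, (∃ i, bv (n₂ + 1) ν i = z) ∧ 2 * z + 1 = y := by simp
  have e3 : ∀ {N : ℕ} (d : Fin N → ℤ) (y : ℤ),
      y ∈ Set.range (Fin.cons 0 (fun i => d i + 1) : Fin (N + 1) → ℤ) ↔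
        y = 0 ∨ y - 1 ∈ Set.range d := by
    intro N d y
    rw [Fin.range_cons, Set.mem_insert_iff]
    simp only [Set.mem_range, eq_sub_iff_add_eq]
  rw [vec_range, e1, e2, e3, e3, vec_range]
  simp only [hbv n₁ μ h₁, hbv n₂ ν h₂]
  constructor
  · rintro (⟨z, rfl | ⟨i, rfl⟩, rfl⟩ | ⟨z, rfl | ⟨i, rfl⟩, rfl⟩)
    · left; rfl
    · right; right; left; exact ⟨i, by ring⟩
    · right; left; ring
    · right; right; right; exact ⟨i, by ring⟩
  · rintro (rfl | h | ⟨i, h⟩ | ⟨i, h⟩)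
    · left; exact ⟨0, Or.inl rfl, by ring⟩
    · right; exact ⟨0, Or.inl rfl, by omega⟩
    · left; exact ⟨_, Or.inr ⟨i, rfl⟩, by omega⟩
    · right; exact ⟨_, Or.inr ⟨i, rfl⟩, by omega⟩

theorem Phi_RR {μ ν : List ℕ} (hμ : IsPartition μ) (hν : IsPartition ν) (k r : ℕ) :
    HeW (Phi μ ν k) =
      RR (vec (μ.length + ν.length + r) (μ.length + ν.length + r + k) μ ν) := by
  induction r with
  | zero =>
    have hs : ((DD μ ν k).sort (· ≤ ·)).Pairwise (· < ·) := (Finset.sortedLT_sort _).pairwise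
    rw [Phi_eq, lamOf_HeW _ _ rfl hs]
    exact RR_range _ _ (gv_inj hs) (vec_inj _ _ hμ hν) (DD_range μ ν k)
  | succ r ih =>
    rw [ih, ← vec_shift hμ hν (by omega) (by omega)]
    have : μ.length + ν.length + (r + 1) + k = μ.length + ν.length + r + k + 1 := by omega
    rw [this]
    rfl

theorem Phi_sum {μ ν : List ℕ} (hμ : IsPartition μ) (hν : IsPartition ν) (k : ℕ) :
    (Phi μ ν k).sum = k * (k + 1) / 2 + 2 * (μ.sum + ν.sum) := by
  have hs : ((DD μ ν k).sort (· ≤ ·)).Pairwise (· < ·) := (Finset.sortedLT_sort _).pairwise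
  have h1 := lamOf_sum _ hs
  obtain ⟨h2, h3⟩ := range_perm _ _ (gv_inj hs) (vec_inj _ _ hμ hν) (DD_range μ ν k)
  rw [h3, h2, vec_sum (by omega) (by omega) rfl, ← Phi_eq] at h1
  exact_mod_cast h1

end WHF

namespace WHF
open Polynomial

abbrev Fn (n₁ n₂ : ℕ) := (Fin n₁ → ℤ) → (Fin n₂ → ℤ) → ℚ

def P1 (n₁ n₂ : ℕ) : Module.End ℚ (Fn n₁ n₂) where
  toFun F := fun α β => Qop 1 (fun α => F α β) α
  map_add' F G := by
    funext α β
    simp [Qop, Finset.sum_add_distrib]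
  map_smul' c F := by
    funext α β
    simp [Qop, Finset.mul_sum]

def P2 (n₁ n₂ : ℕ) : Module.End ℚ (Fn n₁ n₂) where
  toFun F := fun α β => Qop 1 (F α) β
  map_add' F G := by
    funext α β
    simp [Qop, Finset.sum_add_distrib]
  map_smul' c F := by
    funext α β
    simp [Qop, Finset.mul_sum]

theorem P_comm (n₁ n₂ : ℕ) : Commute (P1 n₁ n₂) (P2 n₁ n₂) := by
  ext F α β
  simp only [Module.End.mul_apply, P1, P2, LinearMap.coe_mk, AddHom.coe_mk, Qop]
  rw [Finset.sum_comm]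

theorem P1_pow {n₁ n₂ : ℕ} (m : ℕ) (F : Fn n₁ n₂) : ∀ α β,
    (P1 n₁ n₂ ^ m) F α β = (Qop 1)^[m] (fun α => F α β) α := by
  induction m with
  | zero => intro α β; rfl
  | succ m ih =>
    intro α β
    rw [pow_succ', Module.End.mul_apply, Function.iterate_succ_apply']
    change Qop 1 (fun α => (P1 n₁ n₂ ^ m) F α β) α = _
    congr 1
    funext α
    exact ih α β

theorem P2_pow {n₁ n₂ : ℕ} (m : ℕ) (F : Fn n₁ n₂) : ∀ α β,
    (P2 n₁ n₂ ^ m) F α β = (Qop 1)^[m] (F α) β := by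
  induction m with
  | zero => intro α β; rfl
  | succ m ih =>
    intro α β
    rw [pow_succ', Module.End.mul_apply, Function.iterate_succ_apply']
    change Qop 1 ((P2 n₁ n₂ ^ m) F α) β = _
    congr 1
    funext β
    exact ih α β

def app {n₁ n₂ : ℕ} (f : (Fin (n₁ + n₂) → ℤ) → ℚ) : Fn n₁ n₂ :=
  fun α β => f (Fin.append (fun i => 2 * α i) (fun i => 2 * β i + 1))

theorem app_Qop {n₁ n₂ : ℕ} (f : (Fin (n₁ + n₂) → ℤ) → ℚ) :
    app (Qop 2 f) = (P1 n₁ n₂ + P2 n₁ n₂) (app f) := by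
  funext α β
  change Qop 2 f _ = Qop 1 (fun α => app f α β) α + Qop 1 (app f α) β
  simp only [Qop, app]
  rw [Fin.sum_univ_add]
  congr 1
  · refine Finset.sum_congr rfl fun j _ => ?_
    congr 1
    funext x
    refine Fin.addCases (fun i => ?_) (fun i => ?_) x
    · simp [Function.update_apply]
      split_ifs <;> ring
    · simp [Function.update_apply]
      intro h
      have := congrArg Fin.val h
      have := j.2
      simp at *
      omega
  · refine Finset.sum_congr rfl fun j _ => ?_
    congr 1
    funext x
    refine Fin.addCases (fun i => ?_) (fun i => ?_) x
    · simp [Function.update_apply]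
      intro h
      have := congrArg Fin.val h
      have := i.2
      simp at *
      omega
    · simp [Function.update_apply]
      split_ifs <;> ring

theorem app_Qop_iter {n₁ n₂ : ℕ} (f : (Fin (n₁ + n₂) → ℤ) → ℚ) (K : ℕ) :
    app ((Qop 2)^[K] f) = ((P1 n₁ n₂ + P2 n₁ n₂) ^ K) (app f) := by
  induction K with
  | zero => rfl
  | succ K ih =>
    rw [pow_succ', Module.End.mul_apply, Function.iterate_succ_apply', app_Qop, ih]

theorem alt_JT (N : ℕ) : Alt (JT invf : (Fin N → ℤ) → ℚ) :=
  ⟨fun d σ => JT_perm invf d σ, fun d j h => JT_neg invf invf_neg d j h⟩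

theorem alt_app_left {n₁ n₂ : ℕ} {f : (Fin (n₁ + n₂) → ℤ) → ℚ} (hf : Alt f) (β : Fin n₂ → ℤ) :
    Alt (fun α => app f α β) := by
  constructor
  · intro d σ
    have h := hf.perm (Fin.append (fun i => 2 * d i) (fun i => 2 * β i + 1))
      (finSumFinEquiv.permCongr (Equiv.Perm.sumCongr σ 1))
    rw [Equiv.Perm.sign_permCongr, Equiv.Perm.sign_sumCongr, Equiv.Perm.sign_one, mul_one] at h
    simp only [app]
    rw [← h]
    congr 1
    funext x
    refine Fin.addCases (fun i => ?_) (fun i => ?_) x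
    · simp [Equiv.permCongr_apply]
    · simp [Equiv.permCongr_apply]
  · intro d j hj
    apply hf.neg _ (Fin.castAdd _ j)
    rw [Fin.append_left]
    omega

theorem alt_app_right {n₁ n₂ : ℕ} {f : (Fin (n₁ + n₂) → ℤ) → ℚ} (hf : Alt f) (α : Fin n₁ → ℤ) :
    Alt (app f α : (Fin n₂ → ℤ) → ℚ) := by
  constructor
  · intro d σ
    have h := hf.perm (Fin.append (fun i => 2 * α i) (fun i => 2 * d i + 1))
      (finSumFinEquiv.permCongr (Equiv.Perm.sumCongr 1 σ))
    rw [Equiv.Perm.sign_permCongr, Equiv.Perm.sign_sumCongr, Equiv.Perm.sign_one, one_mul] at h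
    simp only [app]
    rw [← h]
    congr 1
    funext x
    refine Fin.addCases (fun i => ?_) (fun i => ?_) x
    · simp [Equiv.permCongr_apply]
    · simp [Equiv.permCongr_apply]
  · intro d j hj
    apply hf.neg _ (Fin.natAdd _ j)
    rw [Fin.append_right]
    omega

theorem alt_P2 {n₁ n₂ : ℕ} {F : Fn n₁ n₂} (hF : ∀ β, Alt (fun α => F α β)) (m : ℕ) :
    ∀ β, Alt (fun α => (P2 n₁ n₂ ^ m) F α β) := by
  induction m with
  | zero => exact hF
  | succ m ih =>
    intro β
    have e : (fun α => (P2 n₁ n₂ ^ (m + 1)) F α β) = fun α => ∑ j, (P2 n₁ n₂ ^ m) F α (Function.update β j (β j - 1)) := by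
      funext α
      rw [pow_succ', Module.End.mul_apply]
      rfl
    rw [e]
    constructor
    · intro d σ
      rw [Finset.mul_sum]
      exact Finset.sum_congr rfl fun j _ => (ih _).perm d σ
    · intro d j hj
      exact Finset.sum_eq_zero fun i _ => (ih _).neg d j hj

theorem sum_le_of_sub {a b : List ℕ} (ha : IsPartition a) (h : SubP a b) : a.sum ≤ b.sum := by
  rw [sum_partAt a b.length (length_le_of_sub ha h), sum_partAt b b.length le_rfl]
  exact Finset.sum_le_sum fun i _ => h i

noncomputable def pairF (μ ν : List ℕ) (K : ℕ) : Finset (List ℕ × List ℕ) :=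
  (subF μ ×ˢ subF ν).filter fun p => p.1.sum + p.2.sum + K = μ.sum + ν.sum

theorem Qop_vec {n₁ n₂ : ℕ} {μ ν : List ℕ} (hμ : IsPartition μ) (hν : IsPartition ν)
    (h₁ : μ.length ≤ n₁) (h₂ : ν.length ≤ n₂) (K : ℕ) :
    (Qop 2)^[K] (JT invf) (vec n₁ n₂ μ ν) =
      ∑ p ∈ pairF μ ν K, (F2rel p.1 p.2 μ ν : ℚ) * JT invf (vec n₁ n₂ p.1 p.2) := by
  have hA : Alt (JT invf : (Fin (n₁ + n₂) → ℤ) → ℚ) := alt_JT _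
  have e1 : (Qop 2)^[K] (JT invf) (vec n₁ n₂ μ ν) =
      app ((Qop 2)^[K] (JT invf)) (bv n₁ μ) (bv n₂ ν) := rfl
  have e2 : ∀ m ∈ Finset.range (K + 1),
      (P1 n₁ n₂ ^ m * P2 n₁ n₂ ^ (K - m) * (K.choose m : Module.End ℚ (Fn n₁ n₂))) (app (JT invf)) (bv n₁ μ) (bv n₂ ν)
      = ∑ p ∈ subF μ ×ˢ subF ν, (K.choose m : ℚ) * (numP m p.1 μ) * (numP (K - m) p.2 ν) *
        JT invf (vec n₁ n₂ p.1 p.2) := by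
    intro m _
    have : (P1 n₁ n₂ ^ m * P2 n₁ n₂ ^ (K - m) * (K.choose m : Module.End ℚ (Fn n₁ n₂))) (app (JT invf)) (bv n₁ μ) (bv n₂ ν)
        = (K.choose m : ℚ) * (P1 n₁ n₂ ^ m) ((P2 n₁ n₂ ^ (K - m)) (app (JT invf))) (bv n₁ μ) (bv n₂ ν) := by
      rw [← Nat.cast_comm, Module.End.mul_apply, Module.End.mul_apply]
      simp
    rw [this, P1_pow, Qop_iter_bv (alt_P2 (alt_app_left hA) (K - m) (bv n₂ ν)) m hμ h₁, Finset.sum_product,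
      Finset.mul_sum]
    refine Finset.sum_congr rfl fun a _ => ?_
    rw [P2_pow, Qop_iter_bv (alt_app_right hA (bv n₁ a)) (K - m) hν h₂, Finset.mul_sum, Finset.mul_sum]
    refine Finset.sum_congr rfl fun b _ => ?_
    have : app (JT invf) (bv n₁ a) (bv n₂ b) = JT invf (vec n₁ n₂ a b) := rfl
    rw [this]
    ring
  rw [e1, app_Qop_iter, (P_comm n₁ n₂).add_pow, LinearMap.sum_apply, Finset.sum_apply, Finset.sum_apply,
    Finset.sum_congr rfl e2, Finset.sum_comm, pairF, Finset.sum_filter]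
  refine Finset.sum_congr rfl fun p hp => ?_
  rw [Finset.mem_product] at hp
  obtain ⟨ha, hb⟩ := hp
  rw [mem_subF] at ha hb
  have hsa := sum_le_of_sub ha.1 ha.2
  have hsb := sum_le_of_sub hb.1 hb.2
  split_ifs with h
  · rw [Finset.sum_eq_single (μ.sum - p.1.sum)]
    · rw [F2rel, numPaths_eq, numPaths_eq]
      have h1 : K - (μ.sum - p.1.sum) = ν.sum - p.2.sum := by omega
      have h2 : (μ.sum - p.1.sum) + (ν.sum - p.2.sum) = K := by omega
      rw [h1, h2]
      push_cast
      ring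
    · intro m hm hne
      have : numP m p.1 μ = 0 := by
        by_contra h0
        have := (numP_ne_zero m p.1 μ hμ h0).2
        omega
      rw [this]; simp
    · intro hm
      simp at hm
      omega
  · apply Finset.sum_eq_zero
    intro m hm
    simp at hm
    by_cases h3 : numP m p.1 μ = 0
    · rw [h3]; simp
    by_cases h4 : numP (K - m) p.2 ν = 0
    · rw [h4]; simp
    have := (numP_ne_zero _ _ _ hμ h3).2
    have := (numP_ne_zero _ _ _ hν h4).2
    omega

theorem coeff_formula {μ ν : List ℕ} (hμ : IsPartition μ) (hν : IsPartition ν) (k r K p : ℕ)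
    (hp : p + 2 * K = k * (k + 1) / 2 + 2 * (μ.sum + ν.sum)) (n₁ n₂ : ℕ)
    (h₁ : n₁ = μ.length + ν.length + r) (h₂ : n₂ = n₁ + k) :
    (HeW (Phi μ ν k)).coeff p = (-1/2 : ℚ) ^ K / (K.factorial : ℚ) *
      (∑ p ∈ pairF μ ν K, (F2rel p.1 p.2 μ ν : ℚ) * JT invf (vec n₁ n₂ p.1 p.2))
        / JT invf (vec n₁ n₂ μ ν) := by
  rw [Phi_RR hμ hν k r, ← h₁, ← h₂, RR, coeff_C_mul, JT_hp_coeff _ K p, Qop_vec hμ hν (by omega) (by omega)]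
  · ring
  · rw [vec_sum (by omega) (by omega) h₂]
    exact_mod_cast hp.symm

theorem sum_zero {a : List ℕ} (ha : IsPartition a) (h : a.sum = 0) : a = [] := by
  cases a with
  | nil => rfl
  | cons x b =>
    have := ha.2 x (by simp)
    simp at h
    omega

theorem nil_part : IsPartition [] := by simp [IsPartition]

theorem pairF_top (μ ν : List ℕ) : pairF μ ν (μ.sum + ν.sum) = {([], [])} := by
  ext ⟨a, b⟩
  simp only [pairF, Finset.mem_filter, Finset.mem_product, mem_subF, Finset.mem_singleton, Prod.mk.injEq]
  constructor
  · rintro ⟨⟨ha, hb⟩, h⟩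
    exact ⟨sum_zero ha.1 (by omega), sum_zero hb.1 (by omega)⟩
  · rintro ⟨rfl, rfl⟩
    refine ⟨⟨⟨nil_part, fun i => ?_⟩, ⟨nil_part, fun i => ?_⟩⟩, by simp⟩ <;> simp [partAt]

theorem F2_pos {μ ν : List ℕ} (hμ : IsPartition μ) (hν : IsPartition ν) : 0 < F2 μ ν := by
  unfold F2
  have h1 : 0 < numPaths [] μ := numP_nil_pos _ μ hμ (by simp)
  have h2 : 0 < numPaths [] ν := numP_nil_pos _ ν hν (by simp)
  have h3 := Nat.choose_pos (show μ.sum ≤ μ.sum + ν.sum by omega)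
  positivity

theorem coeff_low {μ ν : List ℕ} (hμ : IsPartition μ) (hν : IsPartition ν) (k r : ℕ) (n₁ n₂ : ℕ)
    (h₁ : n₁ = μ.length + ν.length + r) (h₂ : n₂ = n₁ + k) :
    (HeW (Phi μ ν k)).coeff (k * (k + 1) / 2) =
      (-1/2 : ℚ) ^ (μ.sum + ν.sum) / ((μ.sum + ν.sum).factorial : ℚ) *
      ((F2 μ ν : ℚ) * JT invf (vec n₁ n₂ [] [])) / JT invf (vec n₁ n₂ μ ν) := by
  rw [coeff_formula hμ hν k r (μ.sum + ν.sum) _ rfl n₁ n₂ h₁ h₂, pairF_top, Finset.sum_singleton]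
  rfl

theorem vec_ne {μ ν : List ℕ} (hμ : IsPartition μ) (hν : IsPartition ν) (n₁ n₂ : ℕ) :
    JT invf (vec n₁ n₂ μ ν) ≠ 0 :=
  JT_invf_ne_zero _ (vec_inj _ _ hμ hν) (vec_nonneg _ _ _ _)

theorem main_i {μ ν : List ℕ} (hμ : IsPartition μ) (hν : IsPartition ν) (k : ℕ) :
    (HeW (Phi μ ν k)).coeff (k * (k + 1) / 2) ≠ 0 := by
  rw [coeff_low hμ hν k 0 _ _ rfl rfl]
  have h1 := vec_ne hμ hν (μ.length + ν.length + 0) (μ.length + ν.length + 0 + k)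
  have h2 := vec_ne nil_part nil_part (μ.length + ν.length + 0) (μ.length + ν.length + 0 + k)
  have h3 : (F2 μ ν : ℚ) ≠ 0 := by exact_mod_cast (F2_pos hμ hν).ne'
  have h4 : ((μ.sum + ν.sum).factorial : ℚ) ≠ 0 := by positivity
  have h5 : (-1/2 : ℚ) ^ (μ.sum + ν.sum) ≠ 0 := pow_ne_zero _ (by norm_num)
  exact div_ne_zero (mul_ne_zero (div_ne_zero h5 h4) (mul_ne_zero h3 h2)) h1

end WHF

theorem wronskianHermite_coeff_paths_formula (μ ν : List ℕ)
    (hμ : IsPartition μ) (hν : IsPartition ν) (k j : ℕ)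
    (hj : j ≤ μ.sum + ν.sum) :
    (∀ μ' ν' : List ℕ, IsPartition μ' → IsPartition ν' → SubP μ' μ → SubP ν' ν →
        (HeW (Phi μ' ν' k)).coeff (k * (k + 1) / 2) ≠ 0) ∧
    (HeW (Phi μ ν k)).coeff ((Phi μ ν k).sum - 2 * j) =
      ((μ.sum + ν.sum).choose j : ℚ) *
        ∑ᶠ p ∈ {p : List ℕ × List ℕ | IsPartition p.1 ∧ IsPartition p.2 ∧
            SubP p.1 μ ∧ SubP p.2 ν ∧ p.1.sum + p.2.sum + j = μ.sum + ν.sum},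
          (F2 p.1 p.2 : ℚ) * (F2rel p.1 p.2 μ ν : ℚ) / (F2 μ ν : ℚ) *
            ((HeW (Phi μ ν k)).coeff (k * (k + 1) / 2) /
              (HeW (Phi p.1 p.2 k)).coeff (k * (k + 1) / 2)) := by
  refine ⟨fun μ' ν' h1 h2 _ _ => WHF.main_i h1 h2 k, ?_⟩
  have hset : {p : List ℕ × List ℕ | IsPartition p.1 ∧ IsPartition p.2 ∧
            SubP p.1 μ ∧ SubP p.2 ν ∧ p.1.sum + p.2.sum + j = μ.sum + ν.sum}
      = ↑(WHF.pairF μ ν j) := by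
    ext p
    simp only [Set.mem_ofPred_eq, WHF.pairF, Finset.coe_filter, Finset.mem_product, WHF.mem_subF]
    tauto
  rw [hset, finsum_mem_coe_finset]
  obtain ⟨n₁, hn₁⟩ : ∃ n₁, n₁ = μ.length + ν.length + 0 := ⟨_, rfl⟩
  obtain ⟨n₂, hn₂⟩ : ∃ n₂, n₂ = n₁ + k := ⟨_, rfl⟩
  rw [WHF.coeff_formula hμ hν k 0 j _ (by rw [WHF.Phi_sum hμ hν]; omega) n₁ n₂ hn₁ hn₂,
    Finset.mul_sum, Finset.mul_sum, Finset.sum_div]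
  refine Finset.sum_congr rfl fun p hp => ?_
  simp only [WHF.pairF, Finset.mem_filter, Finset.mem_product, WHF.mem_subF] at hp
  obtain ⟨⟨⟨ha, hsa⟩, hb, hsb⟩, hsum⟩ := hp
  have hla := WHF.length_le_of_sub ha hsa
  have hlb := WHF.length_le_of_sub hb hsb
  rw [WHF.coeff_low hμ hν k 0 n₁ n₂ hn₁ hn₂,
    WHF.coeff_low ha hb k (μ.length + ν.length - p.1.length - p.2.length) n₁ n₂ (by omega) hn₂]
  have h1 := WHF.vec_ne hμ hν n₁ n₂
  have h2 := WHF.vec_ne ha hb n₁ n₂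
  have h3 := WHF.vec_ne WHF.nil_part WHF.nil_part n₁ n₂
  have h4 : (F2 μ ν : ℚ) ≠ 0 := by exact_mod_cast (WHF.F2_pos hμ hν).ne'
  have h5 : (F2 p.1 p.2 : ℚ) ≠ 0 := by exact_mod_cast (WHF.F2_pos ha hb).ne'
  have hc : ((μ.sum + ν.sum).choose j : ℚ) = ((μ.sum + ν.sum).factorial : ℚ) /
      ((j.factorial : ℚ) * ((p.1.sum + p.2.sum).factorial : ℚ)) := by
    rw [Nat.cast_choose ℚ hj]
    congr 4
    omega
  rw [hc, ← hsum, pow_add]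
  have h6 : ((p.1.sum + p.2.sum + j).factorial : ℚ) ≠ 0 := by positivity
  have h7 : ((p.1.sum + p.2.sum).factorial : ℚ) ≠ 0 := by positivity
  have h8 : (j.factorial : ℚ) ≠ 0 := by positivity
  have h9 : (-1/2 : ℚ) ^ (p.1.sum + p.2.sum) ≠ 0 := pow_ne_zero _ (by norm_num)
  generalize (-1/2 : ℚ) ^ (p.1.sum + p.2.sum) = u at *
  generalize (-1/2 : ℚ) ^ j = v at *
  field_simp
end

section
/- Let n ≥ 1 and let x_1, x_2, …, x_n be pairwise distinct complex numbers. Then Σ_{j=1}^{n} x_j(x_j − 1) · ∏_{i≠j} (x_j − x_i − 2)/(x_j − x_i) = Σ_{j=1}^{n} (x_j − n + j)(x_j − n − j + 1). -/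
/-- The product over `i ∈ s`, `i ≠ j`. -/
noncomputable def shiftP {ι : Type} [DecidableEq ι] (x : ι → ℂ) (s : Finset ι) (j : ι) : ℂ :=
  ∏ i ∈ s.erase j, (x j - x i - 2) / (x j - x i)

theorem shiftP_insert_old {ι : Type} [DecidableEq ι] (x : ι → ℂ) (hx : Function.Injective x)
    (s : Finset ι) (a j : ι) (ha : a ∉ s) (hj : j ∈ s) :
    shiftP x (insert a s) j = shiftP x s j * (1 - 2 / (x j - x a)) := by
  have hne : a ≠ j := fun h => ha (h ▸ hj)
  have h1 : x j - x a ≠ 0 := sub_ne_zero.2 fun h => hne (hx h).symm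
  unfold shiftP
  rw [Finset.erase_insert_of_ne hne, Finset.prod_insert (fun h => ha (Finset.mem_of_mem_erase h))]
  rw [sub_div, div_self h1, mul_comm]

theorem shiftP_insert_new {ι : Type} [DecidableEq ι] (x : ι → ℂ)
    (s : Finset ι) (a : ι) (ha : a ∉ s) :
    shiftP x (insert a s) a = ∏ i ∈ s, (x a - x i - 2) / (x a - x i) := by
  unfold shiftP
  rw [Finset.erase_insert ha]

/-- Partial fractions. -/
theorem shift_partial {ι : Type} [DecidableEq ι] (x : ι → ℂ) (hx : Function.Injective x)
    (s : Finset ι) : ∀ z : ℂ, (∀ i ∈ s, z ≠ x i) →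
    ∏ i ∈ s, (z - x i - 2) / (z - x i) = 1 - 2 * ∑ j ∈ s, shiftP x s j / (z - x j) := by
  induction s using Finset.induction_on with
  | empty => intro z _; simp
  | insert a s ha ih =>
    intro z hz
    have hza : z - x a ≠ 0 := sub_ne_zero.2 (hz a (Finset.mem_insert_self a s))
    have hz' : ∀ i ∈ s, z ≠ x i := fun i hi => hz i (Finset.mem_insert_of_mem hi)
    have hax : ∀ i ∈ s, x a ≠ x i := fun i hi h => ha (hx h ▸ hi)
    rw [Finset.prod_insert ha, Finset.sum_insert ha, shiftP_insert_new x s a ha, ih z hz',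
      ih (x a) hax]
    have hs : ∑ j ∈ s, shiftP x (insert a s) j / (z - x j) =
        ∑ j ∈ s, (shiftP x s j / (z - x j) + 2 / (z - x a) * (shiftP x s j / (x a - x j))
          - 2 / (z - x a) * (shiftP x s j / (z - x j))) := by
      refine Finset.sum_congr rfl fun j hj => ?_
      rw [shiftP_insert_old x hx s a j ha hj]
      have h1 : z - x j ≠ 0 := sub_ne_zero.2 (hz' j hj)
      have h2 : x a - x j ≠ 0 := sub_ne_zero.2 (hax j hj)
      have h3 : x j - x a ≠ 0 := sub_ne_zero.2 (hax j hj).symm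
      rw [← neg_sub (x a) (x j)]
      field_simp
      ring
    rw [hs, Finset.sum_sub_distrib, Finset.sum_add_distrib, ← Finset.mul_sum, ← Finset.mul_sum]
    field_simp
    ring

theorem shift_moments {ι : Type} [DecidableEq ι] (x : ι → ℂ) (hx : Function.Injective x)
    (s : Finset ι) :
    ∑ j ∈ s, shiftP x s j = s.card ∧
    ∑ j ∈ s, x j * shiftP x s j = ∑ j ∈ s, x j - s.card * (s.card - 1) ∧
    ∑ j ∈ s, x j ^ 2 * shiftP x s j = ∑ j ∈ s, x j ^ 2 - 2 * (s.card - 1) * ∑ j ∈ s, x j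
      + 2 / 3 * s.card * (s.card - 1) * (s.card - 2) := by
  induction s using Finset.induction_on with
  | empty => simp
  | insert a s ha ih =>
    obtain ⟨h0, h1, h2⟩ := ih
    have hax : ∀ i ∈ s, x a ≠ x i := fun i hi h => ha (hx h ▸ hi)
    have hF := shift_partial x hx s (x a) hax
    have e0 : ∑ j ∈ s, shiftP x (insert a s) j =
        ∑ j ∈ s, (shiftP x s j + 2 * (shiftP x s j / (x a - x j))) := by
      refine Finset.sum_congr rfl fun j hj => ?_
      rw [shiftP_insert_old x hx s a j ha hj]
      have h2 : x a - x j ≠ 0 := sub_ne_zero.2 (hax j hj)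
      rw [← neg_sub (x a) (x j)]
      field_simp
      ring
    have e1 : ∑ j ∈ s, x j * shiftP x (insert a s) j =
        ∑ j ∈ s, (x j * shiftP x s j - 2 * shiftP x s j
          + 2 * x a * (shiftP x s j / (x a - x j))) := by
      refine Finset.sum_congr rfl fun j hj => ?_
      rw [shiftP_insert_old x hx s a j ha hj]
      have h2 : x a - x j ≠ 0 := sub_ne_zero.2 (hax j hj)
      rw [← neg_sub (x a) (x j)]
      field_simp
      ring
    have e2 : ∑ j ∈ s, x j ^ 2 * shiftP x (insert a s) j =
        ∑ j ∈ s, (x j ^ 2 * shiftP x s j - 2 * (x j * shiftP x s j) - 2 * x a * shiftP x s j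
          + 2 * x a ^ 2 * (shiftP x s j / (x a - x j))) := by
      refine Finset.sum_congr rfl fun j hj => ?_
      rw [shiftP_insert_old x hx s a j ha hj]
      have h2 : x a - x j ≠ 0 := sub_ne_zero.2 (hax j hj)
      rw [← neg_sub (x a) (x j)]
      field_simp
      ring
    simp only [Finset.sum_insert ha, shiftP_insert_new x s a ha, Finset.card_insert_of_notMem ha,
      e0, e1, e2, hF, Finset.sum_sub_distrib, Finset.sum_add_distrib, ← Finset.mul_sum, h0, h1, h2]
    push_cast
    refine ⟨by ring, by ring, by ring⟩

theorem shift_sum_aux (n : ℕ) :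
    ∑ j : Fin n, (((j : ℕ) : ℂ) * (((j : ℕ) : ℂ) + 1)) = ((n : ℂ) - 1) * n * (n + 1) / 3 := by
  induction n with
  | zero => simp
  | succ k ih =>
    rw [Fin.sum_univ_castSucc]
    simp only [Fin.val_castSucc, Fin.val_last, ih]
    push_cast
    ring


/-- A combinatorial identity for pairwise distinct complex numbers `x_1,…,x_n`
(indexed here by `Fin n`, so `x_j` for 1-indexed `j` is `x ⟨j-1⟩`):
`Σ_j x_j(x_j − 1) ∏_{i≠j} (x_j − x_i − 2)/(x_j − x_i)
  = Σ_j (x_j − n + j)(x_j − n − j + 1)`. -/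
theorem sum_prod_shift_identity (n : ℕ) (hn : 1 ≤ n) (x : Fin n → ℂ)
    (hx : Function.Injective x) :
    ∑ j : Fin n, x j * (x j - 1) *
        ∏ i ∈ Finset.univ.erase j, (x j - x i - 2) / (x j - x i) =
      ∑ j : Fin n, (x j - (n : ℂ) + ((j : ℕ) : ℂ) + 1) *
        (x j - (n : ℂ) - ((j : ℕ) : ℂ)) := by

  obtain ⟨h0, h1, h2⟩ := shift_moments x hx Finset.univ
  have hL : ∑ j : Fin n, x j * (x j - 1) *
        ∏ i ∈ Finset.univ.erase j, (x j - x i - 2) / (x j - x i) =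
      ∑ j : Fin n, (x j ^ 2 * shiftP x Finset.univ j - x j * shiftP x Finset.univ j) := by
    refine Finset.sum_congr rfl fun j _ => ?_
    unfold shiftP
    ring
  have hR : ∑ j : Fin n, (x j - (n : ℂ) + ((j : ℕ) : ℂ) + 1) * (x j - (n : ℂ) - ((j : ℕ) : ℂ)) =
      ∑ j : Fin n, (x j ^ 2 - (2 * n - 1) * x j + ((n : ℂ) ^ 2 - n)
        - ((j : ℕ) : ℂ) * (((j : ℕ) : ℂ) + 1)) := by
    refine Finset.sum_congr rfl fun j _ => ?_
    ring
  rw [hL, hR]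
  simp only [Finset.sum_sub_distrib, Finset.sum_add_distrib, ← Finset.mul_sum, h1, h2,
    shift_sum_aux, Finset.sum_const, Finset.card_univ, Fintype.card_fin, nsmul_eq_mul]
  ring
end

section
/- Let α be a real number. For an integer n ≥ 0 define the monic Laguerre polynomial L̂_n^{(α)} ∈ ℝ[X] by L̂_n^{(α)}(x) = Σ_{j=0}^{n} (−1)^{n−j} · C(n,j) · (∏_{t=j+1}^{n} (α + t)) · x^j. Then for every integer m ≥ 0 and every integer i ≥ 1, the (i−1)-st derivative satisfies (d/dX)^{i−1} L̂_m^{(α)} = Σ_{l=0}^{i−1} (−1)^l · C(i−1, l) · L̂_m^{(α+l)} as polynomials in ℝ[X]. -/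
/-- The monic Laguerre polynomial `L̂_n^{(α)}(x) = (−1)^n n! L_n^{(α)}(x)
  = Σ_{j=0}^{n} (−1)^{n−j} C(n,j) (∏_{t=j+1}^{n} (α + t)) x^j`. -/
noncomputable def laguerreM (α : ℝ) (n : ℕ) : Polynomial ℝ :=
  ∑ j ∈ Finset.range (n + 1),
    Polynomial.C ((-1 : ℝ) ^ (n - j) * (n.choose j : ℝ) *
        ∏ t ∈ Finset.Icc (j + 1) n, (α + (t : ℝ))) *
      Polynomial.X ^ j

open Polynomial in
theorem laguerreM_coeff (α : ℝ) (n k : ℕ) : (laguerreM α n).coeff k =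
    if k ≤ n then (-1 : ℝ) ^ (n - k) * (n.choose k : ℝ) *
        ∏ t ∈ Finset.Icc (k + 1) n, (α + (t : ℝ)) else 0 := by
  unfold laguerreM
  simp only [Polynomial.finset_sum_coeff, Polynomial.coeff_C_mul_X_pow]
  rw [Finset.sum_ite_eq]
  simp [Nat.lt_succ_iff]

theorem laguerre_prod_shift (α : ℝ) (k n : ℕ) (h : k + 1 ≤ n) :
    ∏ t ∈ Finset.Icc (k + 1) n, (α + 1 + (t : ℝ)) =
      (∏ t ∈ Finset.Icc (k + 2) n, (α + (t : ℝ))) * (α + n + 1) := by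
  induction n, h using Nat.le_induction with
  | base => simp; ring
  | succ n hn ih =>
    rw [Finset.prod_Icc_succ_top (by omega), ih, Finset.prod_Icc_succ_top (by omega)]
    push_cast
    ring

theorem derivative_laguerreM (α : ℝ) (m : ℕ) :
    Polynomial.derivative (laguerreM α m) = laguerreM α m - laguerreM (α + 1) m := by
  ext k
  rw [Polynomial.coeff_derivative, Polynomial.coeff_sub]
  simp only [laguerreM_coeff]
  rcases lt_trichotomy k m with h | h | h
  · rw [if_pos (by omega), if_pos (by omega), if_pos (by omega), laguerre_prod_shift α k m h,
      ← Finset.mul_prod_Ioc_eq_prod_Icc (a := k + 1) (b := m) h]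
    have e : Finset.Ioc (k + 1) m = Finset.Icc (k + 2) m := by
      ext; simp only [Finset.mem_Ioc, Finset.mem_Icc]; omega
    rw [e]
    have hc : (m.choose (k + 1) : ℝ) * (k + 1) = m.choose k * (m - k) := by
      have := Nat.choose_succ_right_eq m k
      rw [← Nat.cast_sub h.le]
      exact_mod_cast this
    have hs : m - k = (m - (k + 1)) + 1 := by omega
    rw [hs, pow_succ]
    push_cast
    generalize (∏ t ∈ Finset.Icc (k + 2) m, (α + (t : ℝ))) = P
    linear_combination (-1 : ℝ) ^ (m - (k + 1)) * P * hc
  · subst h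
    simp
  · rw [if_neg (by omega), if_neg (by omega), if_neg (by omega)]
    simp

theorem iterate_derivative_laguerreM_aux (m k : ℕ) (α : ℝ) :
    (⇑Polynomial.derivative)^[k] (laguerreM α m) =
      (-1 : ℝ) ^ k • (fwdDiff (1 : ℝ))^[k] (fun a => laguerreM a m) α := by
  induction k generalizing α with
  | zero => simp
  | succ k ih =>
    rw [Function.iterate_succ_apply, derivative_laguerreM, Polynomial.iterate_derivative_sub,
      ih, ih, Function.iterate_succ_apply', fwdDiff, pow_succ, mul_neg_one, neg_smul, smul_sub]
    abel

/-- Derivatives of monic Laguerre polynomials: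
`(d/dX)^{i−1} L̂_m^{(α)} = Σ_{l=0}^{i−1} (−1)^l C(i−1,l) L̂_m^{(α+l)}`. -/
theorem iterate_derivative_laguerreM (α : ℝ) (m : ℕ) (i : ℕ) (hi : 1 ≤ i) :
    (⇑Polynomial.derivative)^[i - 1] (laguerreM α m) =
      ∑ l ∈ Finset.range i,
        ((-1 : ℝ) ^ l * ((i - 1).choose l : ℝ)) • laguerreM (α + (l : ℝ)) m := by
  obtain ⟨k, rfl⟩ : ∃ k, i = k + 1 := ⟨i - 1, by omega⟩
  rw [Nat.add_sub_cancel, iterate_derivative_laguerreM_aux, fwdDiff_iter_eq_sum_shift,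
    Finset.smul_sum]
  refine Finset.sum_congr rfl fun l hl => ?_
  have hl : l ≤ k := by simpa [Nat.lt_succ_iff] using hl
  obtain ⟨d, rfl⟩ := Nat.exists_eq_add_of_le hl
  rw [← Int.cast_smul_eq_zsmul ℝ, smul_smul, Nat.add_sub_cancel_left, nsmul_eq_mul, mul_one]
  congr 1
  push_cast
  have : (-1 : ℝ) ^ d * (-1) ^ d = 1 := by rw [← mul_pow]; simp
  rw [pow_add]
  linear_combination (-1 : ℝ) ^ l * ((l + d).choose l : ℝ) * this
end

section
/- Let μ and ν be partitions with degree vectors (n_1,…,n_{ℓ(μ)}) and (m_1,…,m_{ℓ(ν)}) respectively. For α ∈ ℝ, consider the ℓ(μ)+ℓ(ν) smooth functions on ℝ given by f_i(x) = L̂_{n_i}^{(α)}(x) for 1 ≤ i ≤ ℓ(μ), and h_j(x) = e^x · L̂_{m_j}^{(α)}(−x) for 1 ≤ j ≤ ℓ(ν). Define W(α, x) as the determinant of the (ℓ(μ)+ℓ(ν)) × (ℓ(μ)+ℓ(ν)) matrix whose (r, c)-entry is the (r−1)-st derivative at x of the c-th function (the functions ordered f_1,…,f_{ℓ(μ)},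 h_1,…,h_{ℓ(ν)}), and set Ω̂_α(x) := ((−1)^{m_1+…+m_{ℓ(ν)}} / (Δ(n_μ) · Δ(m_ν))) · e^{−ℓ(ν)·x} · W(α, x), where Δ(n_μ) = ∏_{i<i'} (n_{i'} − n_i) and Δ(m_ν) = ∏_{j<j'} (m_{j'} − m_j). Then for every x ∈ ℝ, Ω̂_α(αx)/α^{|μ|+|ν|} tends to (x − 1)^{|μ|} · (x + 1)^{|ν|} both as α → +∞ and as α → −∞. -/
/-- The Vandermonde determinant `∏_{i<j} (n_j − n_i)` of the degree vector, over `ℝ`. -/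
noncomputable def vanderR (l : List ℕ) : ℝ :=
  ∏ i : Fin l.length, ∏ j : Fin l.length,
    if (i : ℕ) < (j : ℕ) then ((degVec l j : ℝ) - (degVec l i : ℝ)) else 1

/-- The list of functions `f_1,…,f_{ℓ(μ)}, h_1,…,h_{ℓ(ν)}` with
`f_i(x) = L̂_{n_i}^{(α)}(x)` and `h_j(x) = eˣ · L̂_{m_j}^{(α)}(−x)`. -/
noncomputable def omegaFun (μ ν : List ℕ) (α : ℝ)
    (c : Fin (μ.length + ν.length)) : ℝ → ℝ :=
  if h : (c : ℕ) < μ.length then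
    fun x => (laguerreM α (degVec μ ⟨c, h⟩)).eval x
  else
    fun x => Real.exp x *
      (laguerreM α (degVec ν ⟨(c : ℕ) - μ.length, by
        have := c.isLt; omega⟩)).eval (-x)

/-- The polynomial `Ω̂_α(x) = ((−1)^{Σ m_j}/(Δ(n_μ)Δ(m_ν))) e^{−ℓ(ν)x}
  · Wr[f_1,…,f_{ℓ(μ)}, h_1,…,h_{ℓ(ν)}](x)`, the Wronskian being the determinant
whose `(r,c)` entry is the `(r−1)`-st derivative of the `c`-th function at `x`. -/
noncomputable def OmegaHat (μ ν : List ℕ) (α : ℝ) (x : ℝ) : ℝ :=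
  ((-1 : ℝ) ^ (∑ j : Fin ν.length, degVec ν j) / (vanderR μ * vanderR ν)) *
    Real.exp (-(ν.length : ℝ) * x) *
    (Matrix.of fun r c : Fin (μ.length + ν.length) =>
        iteratedDeriv (r : ℕ) (omegaFun μ ν α c) x).det

open Polynomial in
/-- `P ↦ (P(A) q)(y)` as a linear functional on polynomials. -/
noncomputable def opEv (A : Module.End ℝ ℝ[X]) (y : ℝ) (q : ℝ[X]) : ℝ[X] →ₗ[ℝ] ℝ where
  toFun P := (aeval A P q).eval y
  map_add' := by intros; simp
  map_smul' := by intros; simp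

/-- Scaled Laguerre polynomial. -/
noncomputable def lagS (ε : ℝ) (n : ℕ) : Polynomial ℝ :=
  ∑ j ∈ Finset.range (n + 1),
    Polynomial.C ((-1 : ℝ) ^ (n - j) * (n.choose j : ℝ) *
        ∏ t ∈ Finset.Icc (j + 1) n, (1 + ε * (t : ℝ))) *
      Polynomial.X ^ j

section
open Polynomial

lemma lagS_zero (n : ℕ) : lagS 0 n = (X - 1) ^ n := by
  rw [lagS, sub_eq_add_neg, add_pow]
  refine Finset.sum_congr rfl fun j _ => ?_
  simp only [zero_mul, add_zero, Finset.prod_const_one, mul_one, map_mul, map_pow, map_neg, map_one,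
    map_natCast]
  ring

lemma intertwine (S : ℝ[X] →ₗ[ℝ] ℝ[X]) (A B : Module.End ℝ ℝ[X])
    (h : ∀ q, S (A q) = B (S q)) (P q : ℝ[X]) : S (aeval A P q) = aeval B P (S q) := by
  have hpow : ∀ (j : ℕ) q, S ((A ^ j) q) = (B ^ j) (S q) := by
    intro j
    induction j with
    | zero => intro q; simp
    | succ j ih => intro q; rw [pow_succ, pow_succ, Module.End.mul_apply, ih, h, Module.End.mul_apply]
  induction P using Polynomial.induction_on' with
  | add p q hp hq => simp [hp, hq]
  | monomial n a => simp [aeval_monomial, Algebra.algebraMap_eq_smul_one, hpow]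

lemma lag_scale (α : ℝ) (hα : α ≠ 0) (n : ℕ) :
    (laguerreM α n).comp (C α * X) = α ^ n • lagS α⁻¹ n := by
  rw [laguerreM, lagS, Polynomial.sum_comp, Finset.smul_sum]
  refine Finset.sum_congr rfl fun j hj => ?_
  have hj' : j ≤ n := by simpa [Nat.lt_succ_iff] using hj
  have : ∏ t ∈ Finset.Icc (j + 1) n, (α + (t : ℝ)) =
      α ^ (n - j) * ∏ t ∈ Finset.Icc (j + 1) n, (1 + α⁻¹ * (t : ℝ)) := by
    have hc : n - j = (Finset.Icc (j + 1) n).card := by simp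
    rw [hc, ← Finset.prod_const, ← Finset.prod_mul_distrib]
    refine Finset.prod_congr rfl fun t _ => ?_
    field_simp
  rw [this]
  have h2 : α ^ n = α ^ (n - j) * α ^ j := by rw [← pow_add]; congr 1; omega
  rw [h2, smul_eq_C_mul]
  simp only [mul_comp, C_comp, pow_comp, X_comp, map_mul, map_pow, mul_pow]
  ring

lemma comp_scale_derivative (α : ℝ) (hα : α ≠ 0) (q : ℝ[X]) :
    (derivative q).comp (C α * X) = α⁻¹ • derivative (q.comp (C α * X)) := by
  rw [derivative_comp, smul_eq_C_mul]
  simp only [derivative_mul, derivative_C, derivative_X, zero_mul, mul_one, zero_add]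
  rw [← mul_assoc, ← C_mul, inv_mul_cancel₀ hα, C_1, one_mul]

lemma opEv_scale (α : ℝ) (hα : α ≠ 0) (b : ℝ) (q : ℝ[X]) (x : ℝ) (P : ℝ[X]) :
    opEv (b • 1 + derivative) (α * x) q P =
      opEv (b • 1 + α⁻¹ • derivative) x (q.comp (C α * X)) P := by
  have := intertwine (aeval (C α * X : ℝ[X])).toLinearMap (b • 1 + derivative)
    (b • 1 + α⁻¹ • derivative) (by
      intro q
      have := comp_scale_derivative α hα q
      simp only [comp_eq_aeval] at this
      simp [this]) P q
  have h2 := congrArg (Polynomial.eval x) this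
  simp only [AlgHom.toLinearMap_apply, ← comp_eq_aeval, eval_comp] at h2
  simpa [opEv] using h2

lemma opEv_smul (A : Module.End ℝ ℝ[X]) (y c : ℝ) (q P : ℝ[X]) :
    opEv A y (c • q) P = c * opEv A y q P := by
  simp [opEv]

lemma opEv_f (α : ℝ) (hα : α ≠ 0) (n : ℕ) (x : ℝ) (P : ℝ[X]) :
    opEv derivative (α * x) (laguerreM α n) P =
      α ^ n * opEv (α⁻¹ • derivative) x (lagS α⁻¹ n) P := by
  have := opEv_scale α hα 0 (laguerreM α n) x P
  rw [lag_scale α hα, opEv_smul] at this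
  simpa using this

lemma opEv_h (α : ℝ) (hα : α ≠ 0) (n : ℕ) (x : ℝ) (P : ℝ[X]) :
    opEv (1 + derivative) (α * x) ((laguerreM α n).comp (-X)) P =
      α ^ n * opEv (1 + α⁻¹ • derivative) x ((lagS α⁻¹ n).comp (-X)) P := by
  have := opEv_scale α hα 1 ((laguerreM α n).comp (-X)) x P
  have h2 : ((laguerreM α n).comp (-X)).comp (C α * X) = α ^ n • (lagS α⁻¹ n).comp (-X) := by
    rw [← smul_comp, ← lag_scale α hα, comp_assoc, comp_assoc]
    congr 1
    simp
  rw [h2, opEv_smul] at this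
  simpa using this

lemma iteratedDeriv_poly (q : ℝ[X]) (r : ℕ) (y : ℝ) :
    iteratedDeriv r (fun x => q.eval x) y = opEv derivative y q (X ^ r) := by
  induction r generalizing q y with
  | zero => simp [opEv]
  | succ r ih =>
    rw [iteratedDeriv_succ']
    have : deriv (fun x => q.eval x) = fun x => (derivative q).eval x := by
      ext x; simp
    rw [this, ih]
    simp [opEv, pow_succ]

lemma iteratedDeriv_exp_poly (q : ℝ[X]) (r : ℕ) (y : ℝ) :
    iteratedDeriv r (fun x => Real.exp x * q.eval x) y =
      Real.exp y * opEv (1 + derivative) y q (X ^ r) := by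
  induction r generalizing q y with
  | zero => simp [opEv]
  | succ r ih =>
    rw [iteratedDeriv_succ']
    have : deriv (fun x => Real.exp x * q.eval x) =
        fun x => Real.exp x * (q + derivative q).eval x := by
      ext x
      rw [deriv_fun_mul (by fun_prop) (by fun_prop)]
      simp [mul_add]
    rw [this, ih]
    simp [opEv, pow_succ]

/-- Jets at `x` depend continuously on the parameter. -/
def JetCont (x : ℝ) (q : ℝ → ℝ[X]) : Prop :=
  ∀ j : ℕ, Continuous fun ε => ((derivative ^ j : Module.End ℝ ℝ[X]) (q ε)).eval x

lemma JetCont.pow {x : ℝ} {q : ℝ → ℝ[X]} (h : JetCont x q) (r : ℕ) :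
    JetCont x (fun ε => (derivative ^ r : Module.End ℝ ℝ[X]) (q ε)) := by
  intro j
  simpa [pow_add] using h (j + r)

lemma JetCont.op {x : ℝ} {q : ℝ → ℝ[X]} (h : JetCont x q) (b : ℝ) (r : ℕ) :
    JetCont x (fun ε => ((ε • derivative + b • 1 : Module.End ℝ ℝ[X]) ^ r) (q ε)) := by
  induction r with
  | zero => simpa using h
  | succ r ih =>
    intro j
    have h1 := ih j
    have h2 := ih (j + 1)
    simp only [pow_succ', Module.End.mul_apply, LinearMap.add_apply, LinearMap.smul_apply,
      Module.End.one_apply, map_add, map_smul, eval_add, eval_smul, smul_eq_mul]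
    refine (continuous_id.mul ?_).add (continuous_const.mul h1)
    simpa [pow_succ] using h2

lemma JetCont.sum {x : ℝ} (n : ℕ) (c : ℕ → ℝ → ℝ) (hc : ∀ i, Continuous (c i)) (q : ℕ → ℝ[X]) :
    JetCont x (fun ε => ∑ i ∈ Finset.range n, C (c i ε) * q i) := by
  intro j
  simp only [← smul_eq_C_mul, map_sum, map_smul, eval_finsetSum, eval_smul, smul_eq_mul]
  exact continuous_finsetSum _ fun i _ => (hc i).mul continuous_const

lemma jetCont_lagS (x : ℝ) (n : ℕ) : JetCont x (fun ε => lagS ε n) :=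
  JetCont.sum _ (fun j ε => (-1 : ℝ) ^ (n - j) * (n.choose j : ℝ) *
        ∏ t ∈ Finset.Icc (j + 1) n, (1 + ε * (t : ℝ))) (by intro i; fun_prop) _

lemma jetCont_lagS_neg (x : ℝ) (n : ℕ) : JetCont x (fun ε => (lagS ε n).comp (-X)) := by
  simp only [lagS, Polynomial.sum_comp, mul_comp, C_comp]
  exact JetCont.sum _ (fun j ε => (-1 : ℝ) ^ (n - j) * (n.choose j : ℝ) *
        ∏ t ∈ Finset.Icc (j + 1) n, (1 + ε * (t : ℝ))) (by intro i; fun_prop) _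

lemma JetCont.cont {x : ℝ} {q : ℝ → ℝ[X]} (h : JetCont x q) (r s : ℕ) (b : ℝ) :
    Continuous fun ε => ((derivative ^ r : Module.End ℝ ℝ[X])
      (((ε • derivative + b • 1 : Module.End ℝ ℝ[X]) ^ s) (q ε))).eval x :=
  (h.op b s) r

/-- Wronskian of powers. -/
lemma wronskian_pow {l : ℕ} (n : Fin l → ℕ) (b : ℝ) (x : ℝ) (N : ℕ)
    (hN : ∑ c, n c = N + ∑ r : Fin l, (r : ℕ)) :
    (Matrix.of fun r c : Fin l =>
      ((derivative ^ (r : ℕ) : Module.End ℝ ℝ[X]) ((X + C b) ^ n c)).eval x).det =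
    (∏ i : Fin l, ∏ j ∈ Finset.Ioi i, ((n j : ℝ) - n i)) * (x + b) ^ N := by
  have hv : (Matrix.of fun r c : Fin l => ((n c).descFactorial r : ℝ)).det =
      ∏ i : Fin l, ∏ j ∈ Finset.Ioi i, ((n j : ℝ) - n i) := by
    have := Matrix.det_eval_matrixOfPolynomials_eq_det_vandermonde (fun c => (n c : ℝ))
      (fun i : Fin l => descPochhammer ℝ i) (fun i => descPochhammer_natDegree ℝ i)
      (fun i => monic_descPochhammer ℝ i)
    rw [Matrix.det_vandermonde] at this
    rw [this, ← Matrix.det_transpose]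
    congr 1
    ext i j
    simp [descPochhammer_eval_eq_descFactorial]
  have key : (Matrix.of fun r c : Fin l =>
      (C ((n c).descFactorial r : ℝ) * X ^ (n c - r) : ℝ[X])).det =
      C (∏ i : Fin l, ∏ j ∈ Finset.Ioi i, ((n j : ℝ) - n i)) * X ^ N := by
    have hX : (X : ℝ[X]) ^ (∑ r : Fin l, (r : ℕ)) ≠ 0 := pow_ne_zero _ X_ne_zero
    apply mul_left_cancel₀ hX
    have h1 := Matrix.det_mul_column (fun r : Fin l => (X : ℝ[X]) ^ (r : ℕ))
      (Matrix.of fun r c : Fin l => (C ((n c).descFactorial r : ℝ) * X ^ (n c - r) : ℝ[X]))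
    have h2 := Matrix.det_mul_row (fun c : Fin l => (X : ℝ[X]) ^ (n c))
      (Matrix.of fun r c : Fin l => (C ((n c).descFactorial r : ℝ) : ℝ[X]))
    rw [Finset.prod_pow_eq_pow_sum] at h1 h2
    rw [← h1]
    have h3 : (Matrix.of fun r c : Fin l => (C ((n c).descFactorial r : ℝ) : ℝ[X])).det =
        C (∏ i : Fin l, ∏ j ∈ Finset.Ioi i, ((n j : ℝ) - n i)) := by
      rw [← hv, RingHom.map_det]
      rfl
    rw [h3, hN, pow_add] at h2
    trans (X ^ N * X ^ ∑ r : Fin l, (r : ℕ)) * C (∏ i : Fin l, ∏ j ∈ Finset.Ioi i, ((n j : ℝ) - n i))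
    · rw [← h2]
      congr 1
      ext1 r c
      simp only [Matrix.of_apply]
      by_cases hrc : (r : ℕ) ≤ n c
      · have : (X : ℝ[X]) ^ n c = X ^ (r : ℕ) * X ^ (n c - r) := by
          rw [← pow_add]; congr 1; omega
        rw [this]; ring
      · rw [Nat.descFactorial_eq_zero_iff_lt.2 (by omega)]; simp
    · ring
  have := congrArg (Polynomial.eval (x + b)) key
  rw [← coe_evalRingHom, RingHom.map_det] at this
  simp only [coe_evalRingHom, eval_mul, eval_C, eval_pow, eval_X] at this
  rw [← this]
  congr 1
  ext r c
  simp [Module.End.pow_apply, iterate_derivative_X_add_pow]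
end

section
open Polynomial

/-- The new basis of differential operators. -/
noncomputable def opBasis (l k : ℕ) : Fin l ⊕ Fin k → ℝ[X] :=
  Sum.elim (fun r => X ^ (r : ℕ) * (X - 1) ^ k) (fun s => X ^ l * (X - 1) ^ (s : ℕ))

/-- Intermediate basis. -/
noncomputable def opBasis' (l k : ℕ) : Fin l ⊕ Fin k → ℝ[X] :=
  Sum.elim (fun r => X ^ (r : ℕ) * (X - 1) ^ k) (fun s => X ^ l * X ^ (s : ℕ))

lemma natDegree_X_sub_one_pow (k : ℕ) : ((X - 1 : ℝ[X]) ^ k).natDegree = k := by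
  have : (X - 1 : ℝ[X]) = X - C 1 := by simp
  rw [this, natDegree_pow, natDegree_X_sub_C, mul_one]

lemma lin_expand (φ : ℝ[X] →ₗ[ℝ] ℝ) (N : ℕ) (P : ℝ[X]) (hP : P.natDegree < N) :
    φ P = ∑ j : Fin N, P.coeff j * φ (X ^ (j : ℕ)) := by
  conv_lhs => rw [P.as_sum_range' N hP]
  rw [map_sum, ← Fin.sum_univ_eq_sum_range (fun j => φ (monomial j (P.coeff j)))]
  refine Finset.sum_congr rfl fun j _ => ?_
  rw [← smul_X_eq_monomial, map_smul, smul_eq_mul]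

lemma det_step1 (l k : ℕ) (φ : Fin l ⊕ Fin k → (ℝ[X] →ₗ[ℝ] ℝ)) :
    (Matrix.of fun r c : Fin l ⊕ Fin k => φ c (opBasis' l k r)).det =
      (-1) ^ (k * l) * (Matrix.of fun r c : Fin (l + k) =>
        φ (finSumFinEquiv.symm c) (X ^ (r : ℕ))).det := by
  have hs : (Polynomial.sylvester (X ^ l : ℝ[X]) ((X - 1) ^ k) l k).det = (-1) ^ (k * l) := by
    have := resultant_X_pow_left ((X - 1 : ℝ[X]) ^ k) l k (natDegree_X_sub_one_pow k).le
    rw [resultant] at this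
    rw [this, coeff_zero_eq_eval_zero]
    simp [pow_mul]
  rw [← hs, ← Matrix.det_transpose (Polynomial.sylvester _ _ _ _), ← Matrix.det_mul,
    ← Matrix.det_submatrix_equiv_self finSumFinEquiv]
  congr 1
  ext1 r c
  have hdeg : (opBasis' l k r).natDegree < l + k := by
    rcases r with r | s
    · have h1 : (opBasis' l k (Sum.inl r)).natDegree ≤ (r : ℕ) + k := by
        refine natDegree_mul_le.trans ?_
        rw [natDegree_X_sub_one_pow, natDegree_X_pow]
      have := r.2
      omega
    · have := s.2
      simp only [opBasis', Sum.elim_inr, ← pow_add, natDegree_X_pow]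
      omega
  rw [Matrix.of_apply, lin_expand (φ c) (l + k) _ hdeg, Matrix.submatrix_apply, Matrix.mul_apply]
  refine Finset.sum_congr rfl fun j _ => ?_
  simp only [Matrix.transpose_apply, Matrix.of_apply, Equiv.symm_apply_apply]
  congr 1
  rcases r with r | s
  · simp only [opBasis', Sum.elim_inl, sylvester, Matrix.of_apply, finSumFinEquiv_apply_left,
      Fin.addCases_left, coeff_X_pow_mul', Set.mem_Icc]
    by_cases h : (r : ℕ) ≤ j
    · by_cases h2 : (j : ℕ) ≤ r + k
      · simp [h, h2]
      · simp only [h, h2, and_false, if_true, if_false]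
        apply coeff_eq_zero_of_natDegree_lt
        rw [natDegree_X_sub_one_pow]; omega
    · simp [h]
  · simp only [opBasis', Sum.elim_inr, sylvester, Matrix.of_apply, finSumFinEquiv_apply_right,
      Fin.addCases_right, ← pow_add, coeff_X_pow, Set.mem_Icc]
    split_ifs <;> first | rfl | omega

lemma det_step2 (l k : ℕ) (φ : Fin l ⊕ Fin k → (ℝ[X] →ₗ[ℝ] ℝ)) :
    (Matrix.of fun r c : Fin l ⊕ Fin k => φ c (opBasis l k r)).det =
    (Matrix.of fun r c : Fin l ⊕ Fin k => φ c (opBasis' l k r)).det := by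
  have hU := Matrix.det_matrixOfPolynomials (fun j : Fin k => (X - 1 : ℝ[X]) ^ (j : ℕ))
    (fun j => natDegree_X_sub_one_pow j) (fun j => by
      have : (X - 1 : ℝ[X]) = X - C 1 := by simp
      rw [this]; exact (monic_X_sub_C 1).pow _)
  rw [← Matrix.det_transpose] at hU
  set U : Matrix (Fin k) (Fin k) ℝ := (Matrix.of (fun (i j : Fin k) =>
    ((X - 1 : ℝ[X]) ^ (j : ℕ)).coeff i)).transpose with hUdef
  have hB : (Matrix.fromBlocks (1 : Matrix (Fin l) (Fin l) ℝ) 0 0 U).det = 1 := by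
    rw [Matrix.det_fromBlocks_zero₂₁, hU]; simp
  rw [← one_mul (Matrix.det (Matrix.of fun r c : Fin l ⊕ Fin k => φ c (opBasis' l k r))),
    ← hB, ← Matrix.det_mul]
  congr 1
  ext1 r c
  rw [Matrix.mul_apply, Fintype.sum_sum_type]
  rcases r with r | s
  · simp [opBasis, opBasis', Matrix.one_apply]
  · have := lin_expand ((φ c) ∘ₗ (LinearMap.mulLeft ℝ (X ^ l : ℝ[X]))) k ((X - 1) ^ (s : ℕ))
      (by rw [natDegree_X_sub_one_pow]; exact s.2)
    simpa [opBasis, opBasis', hUdef] using this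

lemma det_step (l k : ℕ) (φ : Fin l ⊕ Fin k → (ℝ[X] →ₗ[ℝ] ℝ)) :
    (Matrix.of fun r c : Fin (l + k) => φ (finSumFinEquiv.symm c) (X ^ (r : ℕ))).det =
    (-1) ^ (k * l) * (Matrix.of fun r c : Fin l ⊕ Fin k => φ c (opBasis l k r)).det := by
  rw [det_step2, det_step1, ← mul_assoc, ← pow_add, ← two_mul, pow_mul]
  simp

/-- The rescaled matrix. -/
noncomputable def matH {l k : ℕ} (n : Fin l → ℕ) (m : Fin k → ℕ) (x ε : ℝ) :
    Matrix (Fin l ⊕ Fin k) (Fin l ⊕ Fin k) ℝ :=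
  Matrix.fromBlocks
    (Matrix.of fun r c => ((derivative ^ (r : ℕ) : Module.End ℝ ℝ[X])
      (((ε • derivative + (-1 : ℝ) • 1 : Module.End ℝ ℝ[X]) ^ k) (lagS ε (n c)))).eval x)
    (Matrix.of fun r c => ε ^ (l - (r : ℕ)) * ((derivative ^ k : Module.End ℝ ℝ[X])
      (((ε • derivative + (1 : ℝ) • 1 : Module.End ℝ ℝ[X]) ^ (r : ℕ))
        ((lagS ε (m c)).comp (-X)))).eval x)
    (Matrix.of fun s c => ε ^ (k - (s : ℕ)) * ((derivative ^ l : Module.End ℝ ℝ[X])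
      (((ε • derivative + (-1 : ℝ) • 1 : Module.End ℝ ℝ[X]) ^ (s : ℕ)) (lagS ε (n c)))).eval x)
    (Matrix.of fun s c => ((derivative ^ (s : ℕ) : Module.End ℝ ℝ[X])
      (((ε • derivative + (1 : ℝ) • 1 : Module.End ℝ ℝ[X]) ^ l)
        ((lagS ε (m c)).comp (-X)))).eval x)

lemma continuous_matH {l k : ℕ} (n : Fin l → ℕ) (m : Fin k → ℕ) (x : ℝ) :
    Continuous fun ε => (matH n m x ε).det := by
  refine Continuous.matrix_det (Continuous.matrix_fromBlocks ?_ ?_ ?_ ?_) <;>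
    refine continuous_matrix fun r c => ?_
  · exact (jetCont_lagS x _).cont _ _ _
  · exact (continuous_id.pow _).mul ((jetCont_lagS_neg x _).cont _ _ _)
  · exact (continuous_id.pow _).mul ((jetCont_lagS x _).cont _ _ _)
  · exact (jetCont_lagS_neg x _).cont _ _ _

lemma matH_zero {l k : ℕ} (n : Fin l → ℕ) (m : Fin k → ℕ) (x : ℝ) (N M : ℕ)
    (hN : ∑ c, n c = N + ∑ r : Fin l, (r : ℕ)) (hM : ∑ c, m c = M + ∑ r : Fin k, (r : ℕ)) :
    (matH n m x 0).det = (-1) ^ (k * l) *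
      ((∏ i : Fin l, ∏ j ∈ Finset.Ioi i, ((n j : ℝ) - n i)) * (x - 1) ^ N) *
      ((-1) ^ (∑ c, m c) *
        ((∏ i : Fin k, ∏ j ∈ Finset.Ioi i, ((m j : ℝ) - m i)) * (x + 1) ^ M)) := by
  have h1 := wronskian_pow n (-1) x N hN
  have h2 := wronskian_pow m 1 x M hM
  have e1 : (0 : Matrix (Fin l) (Fin k) ℝ) = (Matrix.of fun (r : Fin l) (c : Fin k) => (0 : ℝ) ^ (l - (r : ℕ)) *
      ((derivative ^ k : Module.End ℝ ℝ[X])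
      ((((0 : ℝ) • derivative + (1 : ℝ) • 1 : Module.End ℝ ℝ[X]) ^ (r : ℕ))
        ((lagS 0 (m c)).comp (-X)))).eval x) := by
    ext1 r c
    have := r.2
    simp [zero_pow (show l - (r : ℕ) ≠ 0 by omega)]
  rw [matH, ← e1, Matrix.det_fromBlocks_zero₁₂]
  congr 1
  · rw [← sub_eq_add_neg] at h1
    rw [← h1, pow_mul]
    have := Matrix.det_smul (Matrix.of fun r c : Fin l =>
      ((derivative ^ (r : ℕ) : Module.End ℝ ℝ[X]) ((X + C (-1)) ^ n c)).eval x) ((-1 : ℝ) ^ k)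
    rw [Fintype.card_fin] at this
    rw [← this]
    congr 1
    ext1 r c
    have hl : lagS 0 (n c) = (X + C (-1)) ^ n c := by
      rw [lagS_zero]; simp [sub_eq_add_neg]
    simp only [zero_smul, zero_add, _root_.smul_pow, one_pow, hl, Matrix.of_apply, LinearMap.smul_apply,
      Module.End.one_apply, map_smul, eval_smul, Matrix.smul_apply]
  · have := Matrix.det_mul_row (fun c => (-1 : ℝ) ^ m c) (Matrix.of fun r c : Fin k =>
      ((derivative ^ (r : ℕ) : Module.End ℝ ℝ[X]) ((X + C 1) ^ m c)).eval x)
    rw [Finset.prod_pow_eq_pow_sum, h2] at this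
    rw [← this]
    congr 1
    ext1 r c
    have hc : (lagS 0 (m c)).comp (-X) = ((-1 : ℝ) ^ m c) • (X + C 1) ^ m c := by
      rw [lagS_zero, smul_eq_C_mul, C_pow, ← mul_pow]
      simp only [pow_comp, sub_comp, X_comp, one_comp]
      congr 1
      simp; ring
    simp [hc]

lemma opEv_basis_f (ε x : ℝ) (q : ℝ[X]) (a b : ℕ) :
    opEv (ε • derivative) x q (X ^ a * (X - 1) ^ b) =
      ε ^ a * ((derivative ^ a : Module.End ℝ ℝ[X])
        (((ε • derivative + (-1 : ℝ) • 1 : Module.End ℝ ℝ[X]) ^ b) q)).eval x := by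
  have h1 : ((-1 : ℝ) • 1 : Module.End ℝ ℝ[X]) = -1 := by
    refine LinearMap.ext fun p => ?_
    rw [LinearMap.smul_apply, LinearMap.neg_apply, neg_smul, one_smul]
  rw [h1]
  simp [opEv, _root_.smul_pow, sub_eq_add_neg]

lemma opEv_basis_h (ε x : ℝ) (q : ℝ[X]) (a b : ℕ) :
    opEv (1 + ε • derivative) x q (X ^ a * (X - 1) ^ b) =
      ε ^ b * ((derivative ^ b : Module.End ℝ ℝ[X])
        (((ε • derivative + (1 : ℝ) • 1 : Module.End ℝ ℝ[X]) ^ a) q)).eval x := by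
  rw [mul_comm (X ^ a)]
  simp [opEv, _root_.smul_pow, add_comm]

lemma det_E {l k : ℕ} (n : Fin l → ℕ) (m : Fin k → ℕ) (x α : ℝ) (hα : α ≠ 0) (N M : ℕ)
    (hN : ∑ c, n c = N + ∑ r : Fin l, (r : ℕ)) (hM : ∑ c, m c = M + ∑ r : Fin k, (r : ℕ)) 
    (φ : Fin l ⊕ Fin k → (ℝ[X] →ₗ[ℝ] ℝ))
    (hφ1 : ∀ c, φ (Sum.inl c) = opEv derivative (α * x) (laguerreM α (n c)))
    (hφ2 : ∀ c, φ (Sum.inr c) =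
      Real.exp (α * x) • opEv (1 + derivative) (α * x) ((laguerreM α (m c)).comp (-X))) :
    (Matrix.of fun r c : Fin l ⊕ Fin k => φ c (opBasis l k r)).det =
      α ^ (N + M) * Real.exp (α * x) ^ k * (matH n m x α⁻¹).det := by
  set ε := α⁻¹ with hε
  have hε0 : ε ≠ 0 := inv_ne_zero hα
  let A : Fin l ⊕ Fin k → ℝ := Sum.elim (fun _ => ε ^ k) (fun _ => ε ^ l)
  let R : Fin l ⊕ Fin k → ℝ := Sum.elim (fun r => ε ^ k * ε ^ (r : ℕ)) (fun s => ε ^ l * ε ^ (s : ℕ))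
  let B : Fin l ⊕ Fin k → ℝ := Sum.elim (fun c => α ^ n c) (fun c => Real.exp (α * x) * α ^ m c)
  have hid : ∀ r c, A c * φ c (opBasis l k r) = R r * (B c * matH n m x ε r c) := by
    have pw : ∀ a b : ℕ, a < b → ε ^ b = ε ^ a * ε ^ (b - a) := by
      intro a b h; rw [← pow_add]; congr 1; omega
    rintro (r | r) (c | c)
    · simp only [A, R, B, opBasis, matH, Sum.elim_inl, hφ1, opEv_f α hα, opEv_basis_f,
        Matrix.fromBlocks_apply₁₁, Matrix.of_apply, ← hε]
      ring
    · simp only [A, R, B, opBasis, matH, Sum.elim_inl, Sum.elim_inr, hφ2, opEv_h α hα,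
        opEv_basis_h, Matrix.fromBlocks_apply₁₂, Matrix.of_apply, ← hε, LinearMap.smul_apply,
        smul_eq_mul, pw _ _ r.2]
      ring
    · simp only [A, R, B, opBasis, matH, Sum.elim_inl, Sum.elim_inr, hφ1, opEv_f α hα,
        opEv_basis_f, Matrix.fromBlocks_apply₂₁, Matrix.of_apply, ← hε, pw _ _ r.2]
      ring
    · simp only [A, R, B, opBasis, matH, Sum.elim_inr, hφ2, opEv_h α hα,
        opEv_basis_h, Matrix.fromBlocks_apply₂₂, Matrix.of_apply, ← hε, LinearMap.smul_apply,
        smul_eq_mul]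
      ring
  have d1 := Matrix.det_mul_row A (Matrix.of fun r c : Fin l ⊕ Fin k => φ c (opBasis l k r))
  have d2 := Matrix.det_mul_column R (Matrix.of fun r c => B c * matH n m x ε r c)
  rw [Matrix.det_mul_row] at d2
  simp only [Matrix.of_apply, hid] at d1
  simp only [Matrix.of_apply] at d2
  rw [d2] at d1
  simp only [A, R, B, Fintype.prod_sum_type, Sum.elim_inl, Sum.elim_inr, Finset.prod_mul_distrib,
    Finset.prod_const, Finset.card_univ, Fintype.card_fin, Finset.prod_pow_eq_pow_sum, hN, hM] at d1
  have hne : (ε ^ k) ^ l * (ε ^ l) ^ k ≠ 0 := by positivity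
  apply mul_left_cancel₀ hne
  rw [← d1, pow_add, pow_add, pow_add]
  have c1 : ∀ j : ℕ, α ^ j * ε ^ j = 1 := by
    intro j; rw [← mul_pow, hε, mul_inv_cancel₀ hα, one_pow]
  linear_combination ((ε ^ k) ^ l * (ε ^ l) ^ k * α ^ N * α ^ M * Real.exp (α * x) ^ k * (matH n m x ε).det) *
    (ε ^ (∑ r : Fin k, (r : ℕ)) * α ^ (∑ r : Fin k, (r : ℕ)) * c1 (∑ r : Fin l, (r : ℕ)) + c1 (∑ r : Fin k, (r : ℕ)))
end

section
open Polynomial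

lemma sum_degVec (l : List ℕ) : ∑ c, degVec l c = l.sum + ∑ r : Fin l.length, (r : ℕ) := by
  simp only [degVec, Finset.sum_add_distrib]
  congr 1
  · simp
  · rw [Fin.sum_univ_eq_sum_range (fun r => r), Fin.sum_univ_eq_sum_range (fun r => l.length - 1 - r),
      Finset.sum_range_reflect (fun r => r)]

lemma vanderR_eq (l : List ℕ) : vanderR l =
    ∏ i : Fin l.length, ∏ j ∈ Finset.Ioi i, ((degVec l j : ℝ) - degVec l i) := by
  unfold vanderR
  refine Finset.prod_congr rfl fun i _ => ?_
  rw [← Finset.prod_filter]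
  refine Finset.prod_congr ?_ fun _ _ => rfl
  ext j; simp

lemma vanderR_ne (l : List ℕ) (h : IsPartition l) : vanderR l ≠ 0 := by
  rw [vanderR_eq]
  refine Finset.prod_ne_zero_iff.2 fun i _ => Finset.prod_ne_zero_iff.2 fun j hj => ?_
  have hij : i < j := by simpa using hj
  have h1 : l.get i ≥ l.get j := List.pairwise_iff_get.1 h.1 i j hij
  have h2 : degVec l j < degVec l i := by
    have := j.2
    have : (i : ℕ) < j := hij
    unfold degVec
    omega
  have : (degVec l j : ℝ) < degVec l i := by exact_mod_cast h2
  exact sub_ne_zero.2 this.ne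

lemma omegaHat_eq (μ ν : List ℕ) (x α : ℝ) (hα : α ≠ 0) :
    OmegaHat μ ν α (α * x) / α ^ (μ.sum + ν.sum) =
    ((-1 : ℝ) ^ (∑ j : Fin ν.length, degVec ν j) / (vanderR μ * vanderR ν)) *
      ((-1) ^ (ν.length * μ.length) * (matH (degVec μ) (degVec ν) x α⁻¹).det) := by
  let φ : Fin μ.length ⊕ Fin ν.length → (ℝ[X] →ₗ[ℝ] ℝ) := Sum.elim
    (fun c => opEv derivative (α * x) (laguerreM α (degVec μ c)))
    (fun c => Real.exp (α * x) •
      opEv (1 + derivative) (α * x) ((laguerreM α (degVec ν c)).comp (-X)))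
  have h1 := det_step _ _ φ
  rw [det_E (degVec μ) (degVec ν) x α hα μ.sum ν.sum (sum_degVec μ) (sum_degVec ν) φ
    (fun c => rfl) (fun c => rfl)] at h1
  have h2 : (Matrix.of fun r c : Fin (μ.length + ν.length) =>
        iteratedDeriv (r : ℕ) (omegaFun μ ν α c) (α * x)) =
      (Matrix.of fun r c : Fin (μ.length + ν.length) =>
        φ (finSumFinEquiv.symm c) (X ^ (r : ℕ))) := by
    ext r c
    obtain ⟨c, rfl⟩ := finSumFinEquiv.surjective c
    simp only [Matrix.of_apply, Equiv.symm_apply_apply]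
    rcases c with c | c
    · have : omegaFun μ ν α (finSumFinEquiv (Sum.inl c)) =
          fun x => (laguerreM α (degVec μ c)).eval x := by
        simp [omegaFun]
      rw [this, iteratedDeriv_poly]
      rfl
    · have : omegaFun μ ν α (finSumFinEquiv (Sum.inr c)) =
          fun x => Real.exp x * ((laguerreM α (degVec ν c)).comp (-X)).eval x := by
        simp [omegaFun]
      rw [this, iteratedDeriv_exp_poly]
      rfl
  have h3 : Real.exp (-(ν.length : ℝ) * (α * x)) * Real.exp (α * x) ^ ν.length = 1 := by
    rw [← Real.exp_nat_mul, ← Real.exp_add]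
    simp
  rw [OmegaHat, h2, h1, div_eq_iff (pow_ne_zero _ hα)]
  linear_combination ((-1 : ℝ) ^ (∑ j : Fin ν.length, degVec ν j) / (vanderR μ * vanderR ν)) *
      ((-1) ^ (ν.length * μ.length) * (matH (degVec μ) (degVec ν) x α⁻¹).det) *
      α ^ (μ.sum + ν.sum) * h3

lemma omegaHat_tendsto (μ ν : List ℕ) (hμ : IsPartition μ) (hν : IsPartition ν) (x : ℝ)
    (F : Filter ℝ) (h0 : ∀ᶠ α in F, α ≠ 0) (hF : Filter.Tendsto (fun α : ℝ => α⁻¹) F (nhds 0)) :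
    Filter.Tendsto (fun α : ℝ => OmegaHat μ ν α (α * x) / α ^ (μ.sum + ν.sum))
      F (nhds ((x - 1) ^ μ.sum * (x + 1) ^ ν.sum)) := by
  have hc := ((continuous_matH (degVec μ) (degVec ν) x).tendsto 0).comp hF
  have hc2 := (hc.const_mul ((-1 : ℝ) ^ (ν.length * μ.length))).const_mul
    ((-1 : ℝ) ^ (∑ j : Fin ν.length, degVec ν j) / (vanderR μ * vanderR ν))
  rw [matH_zero _ _ _ _ _ (sum_degVec μ) (sum_degVec ν), ← vanderR_eq, ← vanderR_eq] at hc2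
  have hval : (-1 : ℝ) ^ (∑ j : Fin ν.length, degVec ν j) / (vanderR μ * vanderR ν) *
      ((-1) ^ (ν.length * μ.length) * ((-1) ^ (ν.length * μ.length) *
        (vanderR μ * (x - 1) ^ μ.sum) * ((-1) ^ (∑ j : Fin ν.length, degVec ν j) *
        (vanderR ν * (x + 1) ^ ν.sum)))) = (x - 1) ^ μ.sum * (x + 1) ^ ν.sum := by
    have e : ∀ a : ℕ, ((-1 : ℝ) ^ a) * (-1) ^ a = 1 := by
      intro a; rw [← mul_pow]; simp
    have a1 := vanderR_ne μ hμ
    have a2 := vanderR_ne ν hν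
    have e1 := e (ν.length * μ.length)
    have e2 := e (∑ j : Fin ν.length, degVec ν j)
    generalize (-1 : ℝ) ^ (ν.length * μ.length) = s at *
    generalize (-1 : ℝ) ^ (∑ j : Fin ν.length, degVec ν j) = t at *
    field_simp
    linear_combination ((x - 1) ^ μ.sum * (x + 1) ^ ν.sum) * ((t * t) * e1 + e2)
  rw [hval] at hc2
  refine hc2.congr' ?_
  filter_upwards [h0] with α hα
  exact (omegaHat_eq μ ν x α hα).symm
end

/-- Asymptotic behaviour of the Wronskian Laguerre polynomial:
`Ω̂_α(αx)/α^{|μ|+|ν|} → (x−1)^{|μ|} (x+1)^{|ν|}` as `α → +∞` and as `α → −∞`. -/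
theorem omegaHat_asymptotics (μ ν : List ℕ)
    (hμ : IsPartition μ) (hν : IsPartition ν) (x : ℝ) :
    Filter.Tendsto (fun α : ℝ => OmegaHat μ ν α (α * x) / α ^ (μ.sum + ν.sum))
      Filter.atTop (nhds ((x - 1) ^ μ.sum * (x + 1) ^ ν.sum)) ∧
    Filter.Tendsto (fun α : ℝ => OmegaHat μ ν α (α * x) / α ^ (μ.sum + ν.sum))
      Filter.atBot (nhds ((x - 1) ^ μ.sum * (x + 1) ^ ν.sum)) := by
  exact ⟨omegaHat_tendsto μ ν hμ hν x _ (Filter.eventually_ne_atTop 0) tendsto_inv_atTop_zero,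
    omegaHat_tendsto μ ν hμ hν x _ (Filter.eventually_ne_atBot 0) tendsto_inv_atBot_zero⟩
end

section
/- Let (A_n)_{n≥0} be an Appell sequence in ℚ[X], i.e. A_0 = 1 and A_n' = n·A_{n−1} for all n ≥ 1 (so A_n is monic of degree n), and set z_1 = A_1(0), z_2 = A_2(0). Let λ be a partition with |λ| = n ≥ 2 and degree vector (n_1,…,n_ℓ), and define the Wronskian Appell polynomial A_λ := det((d/dX)^{i−1} A_{n_j})_{i,j=1}^{ℓ} / Δ(n_λ) ∈ ℚ[X]. Then coeff_n(A_λ) = 1, coeff_{n−1}(A_λ) = n·z_1, and coeff_{n−2}(A_λ) = c(λ)·(z_2 − z_1²) + C(n,2)·z_1², where c(λ) is the content sum of λ. -/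
/-- The Wronskian Appell polynomial
`A_λ = det((d/dX)^{i−1} A_{n_j})_{i,j} / Δ(n_λ)`. -/
noncomputable def wrAppell (A : ℕ → Polynomial ℚ) (l : List ℕ) : Polynomial ℚ :=
  Polynomial.C (vanderQ l)⁻¹ *
    (Matrix.of fun i j : Fin l.length =>
      (⇑Polynomial.derivative)^[(i : ℕ)] (A (degVec l j))).det

open Polynomial in
lemma app_coeff (A : ℕ → ℚ[X]) 
    (hA : ∀ n : ℕ, 1 ≤ n → (A n).derivative = (n : ℚ) • A (n - 1)) (k : ℕ) :
    ∀ n, (A (n + k)).coeff k = ((n + k).choose k : ℚ) * (A n).coeff 0 := by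
  induction k with
  | zero => intro n; simp
  | succ k ih =>
    intro n
    have h := congrArg (fun p => p.coeff k) (hA (n + k + 1) (by omega))
    simp only [coeff_derivative, coeff_smul, smul_eq_mul, Nat.add_sub_cancel, ih n] at h
    have h2 : (((n + k + 1 : ℕ) : ℚ)) * ((n + k).choose k : ℚ)
        = ((n + k + 1).choose (k + 1) : ℚ) * ((k + 1 : ℕ) : ℚ) := by
      exact_mod_cast Nat.add_one_mul_choose_eq (n + k) k
    have h3 : ((k : ℚ) + 1) ≠ 0 := by positivity
    apply mul_right_cancel₀ h3
    rw [← add_assoc, h, ← mul_assoc, h2]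
    push_cast
    ring

open Polynomial in
lemma app_deg (A : ℕ → ℚ[X]) (hA0 : A 0 = 1)
    (hA : ∀ n : ℕ, 1 ≤ n → (A n).derivative = (n : ℚ) • A (n - 1)) (n : ℕ) :
    (A n).natDegree ≤ n := by
  induction n with
  | zero => simp [hA0]
  | succ n ih =>
    rw [natDegree_le_iff_coeff_eq_zero]
    intro m hm
    obtain ⟨m, rfl⟩ : ∃ k, m = k + 1 := ⟨m - 1, by omega⟩
    have h := congrArg (fun p => p.coeff m) (hA (n + 1) (by omega))
    simp only [coeff_derivative, coeff_smul, smul_eq_mul, Nat.add_sub_cancel] at h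
    rw [natDegree_le_iff_coeff_eq_zero.1 ih m (by omega), mul_zero] at h
    have h3 : ((m : ℚ) + 1) ≠ 0 := by positivity
    exact (mul_eq_zero.1 h).resolve_right h3

open Polynomial in
lemma app_refl (A : ℕ → ℚ[X]) (hA0 : A 0 = 1)
    (hA : ∀ n : ℕ, 1 ≤ n → (A n).derivative = (n : ℚ) • A (n - 1)) (d : ℕ) :
    (reflect d (A d)).coeff 0 = 1 ∧ (reflect d (A d)).coeff 1 = d * (A 1).coeff 0 ∧
    (reflect d (A d)).coeff 2 = (d : ℚ) * (d - 1) / 2 * (A 2).coeff 0 := by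
  have key : ∀ m, (reflect d (A d)).coeff m = (d.choose m : ℚ) * (A m).coeff 0 := by
    intro m
    rw [coeff_reflect]
    by_cases h : m ≤ d
    · rw [revAt_le h]
      have := app_coeff A hA (d - m) m
      rw [show m + (d - m) = d by omega, Nat.choose_symm h] at this
      exact this
    · rw [show revAt d m = m from if_neg h,
        natDegree_le_iff_coeff_eq_zero.1 (app_deg A hA0 hA d) m (by omega),
        Nat.choose_eq_zero_of_lt (by omega)]
      simp
  refine ⟨?_, ?_, ?_⟩
  · rw [key, hA0]; simp
  · rw [key]; simp
  · rw [key, Nat.cast_choose_two]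

open Polynomial in
lemma app_iter (A : ℕ → ℚ[X]) (hA0 : A 0 = 1)
    (hA : ∀ n : ℕ, 1 ≤ n → (A n).derivative = (n : ℚ) • A (n - 1)) (n i : ℕ) :
    (⇑derivative)^[i] (A n) = (n.descFactorial i : ℚ) • A (n - i) := by
  induction i with
  | zero => simp
  | succ i ih =>
    rw [Function.iterate_succ_apply', ih, derivative_smul, Nat.descFactorial_succ]
    by_cases h : n - i = 0
    · simp [h, hA0]
    · rw [hA _ (by omega), smul_smul, Nat.sub_sub]
      push_cast
      rw [mul_comm]

open Polynomial in
lemma refl_prod {ι : Type*} (s : Finset ι) (d : ι → ℕ) (p : ι → ℚ[X])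
    (h : ∀ i, (p i).natDegree ≤ d i) :
    reflect (∑ i ∈ s, d i) (∏ i ∈ s, p i) = ∏ i ∈ s, reflect (d i) (p i) := by
  classical
  induction s using Finset.induction_on with
  | empty => simp
  | insert a s ha ih =>
    rw [Finset.sum_insert ha, Finset.prod_insert ha, Finset.prod_insert ha, ← ih]
    apply reflect_mul _ _ (h a)
    exact (natDegree_prod_le _ _).trans (Finset.sum_le_sum fun i _ => h i)

open Polynomial in
lemma coeff_prod3 {ι : Type*} (s : Finset ι) (a b : ι → ℚ) (p : ι → ℚ[X])
    (h0 : ∀ i, (p i).coeff 0 = 1) (h1 : ∀ i, (p i).coeff 1 = a i)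
    (h2 : ∀ i, (p i).coeff 2 = b i) :
    (∏ i ∈ s, p i).coeff 0 = 1 ∧ (∏ i ∈ s, p i).coeff 1 = ∑ i ∈ s, a i ∧
    (∏ i ∈ s, p i).coeff 2 = ∑ i ∈ s, b i + ((∑ i ∈ s, a i) ^ 2 - ∑ i ∈ s, a i ^ 2) / 2 := by
  classical
  induction s using Finset.induction_on with
  | empty => simp [coeff_one]
  | insert c s hc ih =>
    obtain ⟨i0, i1, i2⟩ := ih
    rw [Finset.prod_insert hc, Finset.sum_insert hc, Finset.sum_insert hc, Finset.sum_insert hc]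
    refine ⟨?_, ?_, ?_⟩
    · rw [mul_coeff_zero, h0, i0, one_mul]
    · rw [mul_coeff_one, h0, i0, h1, i1]; ring
    · rw [coeff_mul, show Finset.HasAntidiagonal.antidiagonal 2 = ({(0, 2), (1, 1), (2, 0)} : Finset (ℕ × ℕ)) from rfl]
      simp [h0, h1, h2, i0, i1, i2]
      ring

open Polynomial in
/-- Coefficients of one term of the determinant expansion. -/
lemma term_coeff (A : ℕ → ℚ[X]) (hA0 : A 0 = 1)
    (hA : ∀ n : ℕ, 1 ≤ n → (A n).derivative = (n : ℚ) • A (n - 1)) {L : ℕ}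
    (v : Fin L → ℕ) (N : ℕ) (hN : ∑ i, v i = N + ∑ i : Fin L, (i : ℕ)) (h2 : 2 ≤ N) :
    (∏ i : Fin L, (⇑derivative)^[(i : ℕ)] (A (v i))).coeff N
      = ∏ i, ((v i).descFactorial i : ℚ) ∧
    (∏ i : Fin L, (⇑derivative)^[(i : ℕ)] (A (v i))).coeff (N - 1)
      = (∏ i, ((v i).descFactorial i : ℚ)) * (N * (A 1).coeff 0) ∧
    (∏ i : Fin L, (⇑derivative)^[(i : ℕ)] (A (v i))).coeff (N - 2)
      = (∏ i, ((v i).descFactorial i : ℚ)) *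
        (((∑ i, ((v i : ℚ) - (i : ℕ)) ^ 2) - N) / 2 * ((A 2).coeff 0 - (A 1).coeff 0 ^ 2) +
          (N : ℚ) * (N - 1) / 2 * (A 1).coeff 0 ^ 2) := by
  simp only [app_iter A hA0 hA, smul_eq_C_mul, Finset.prod_mul_distrib]
  rw [← map_prod]
  simp only [coeff_C_mul]
  by_cases hz : ∏ i, ((v i).descFactorial i : ℚ) = 0
  · simp [hz]
  have hle : ∀ i : Fin L, (i : ℕ) ≤ v i := by
    intro i
    by_contra hc
    apply hz
    apply Finset.prod_eq_zero (Finset.mem_univ i)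
    rw [Nat.descFactorial_of_lt (by omega)]; simp
  have hx : ∀ i : Fin L, ((v i - (i : ℕ) : ℕ) : ℚ) = (v i : ℚ) - (i : ℕ) := fun i =>
    Nat.cast_sub (hle i)
  have hsum : ∑ i : Fin L, (v i - (i : ℕ)) = N := by
    have : ∑ i : Fin L, (v i - (i : ℕ)) + ∑ i : Fin L, (i : ℕ) = ∑ i, v i := by
      rw [← Finset.sum_add_distrib]
      exact Finset.sum_congr rfl fun i _ => Nat.sub_add_cancel (hle i)
    omega
  have hsumQ : ∑ i, ((v i : ℚ) - (i : ℕ)) = N := by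
    rw [← hsum, Nat.cast_sum]
    exact Finset.sum_congr rfl fun i _ => (hx i).symm
  have hr := refl_prod Finset.univ (fun i => v i - (i : ℕ)) (fun i => A (v i - (i : ℕ)))
    (fun i => app_deg A hA0 hA _)
  rw [hsum] at hr
  obtain ⟨c0, c1, c2⟩ := coeff_prod3 Finset.univ _ _
    (fun i : Fin L => reflect (v i - (i : ℕ)) (A (v i - (i : ℕ))))
    (fun i => (app_refl A hA0 hA _).1) (fun i => (app_refl A hA0 hA _).2.1)
    (fun i => (app_refl A hA0 hA _).2.2)
  rw [← hr, coeff_reflect, revAt_le (by omega)] at c0 c1 c2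
  simp only [hx] at c1 c2
  rw [Nat.sub_zero] at c0
  rw [c0, c1, c2]
  refine ⟨by ring, ?_, ?_⟩
  · rw [← Finset.sum_mul, hsumQ]
  · have e1 : ∑ i, ((v i : ℚ) - (i : ℕ)) * ((v i : ℚ) - (i : ℕ) - 1) / 2 * (A 2).coeff 0
        = ((∑ i, ((v i : ℚ) - (i : ℕ)) ^ 2) - ∑ i, ((v i : ℚ) - (i : ℕ))) / 2
          * (A 2).coeff 0 := by
      rw [← Finset.sum_sub_distrib, Finset.sum_div, Finset.sum_mul]
      exact Finset.sum_congr rfl fun i _ => by ring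
    have e2 : ∑ i, (((v i : ℚ) - (i : ℕ)) * (A 1).coeff 0) ^ 2
        = (∑ i, ((v i : ℚ) - (i : ℕ)) ^ 2) * (A 1).coeff 0 ^ 2 := by
      rw [Finset.sum_mul]
      exact Finset.sum_congr rfl fun i _ => by ring
    rw [e1, e2, ← Finset.sum_mul, hsumQ]
    ring

/-- Determinant of falling factorials. -/
lemma det_desc {L : ℕ} (n : Fin L → ℕ) :
    (Matrix.of fun j i : Fin L => ((n j).descFactorial i : ℚ)).det
      = (Matrix.vandermonde fun i => (n i : ℚ)).det := by
  rw [Matrix.det_eval_matrixOfPolynomials_eq_det_vandermonde (fun i => (n i : ℚ))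
    (fun i => descPochhammer ℚ i) (fun i => descPochhammer_natDegree ℚ _)
    (fun i => monic_descPochhammer ℚ _)]
  congr 1
  ext j i
  simp [descPochhammer_eval_eq_descFactorial]

lemma cross {L : ℕ} (n : Fin L → ℕ) (k : Fin L) :
    ∑ σ : Equiv.Perm (Fin L), ((Equiv.Perm.sign σ : ℤ) : ℚ) *
      ((∏ i, ((n (σ i)).descFactorial i : ℚ)) * ((k : ℕ) * ((n (σ k) : ℚ) - (k : ℕ)))) =
    ∑ σ : Equiv.Perm (Fin L), ((Equiv.Perm.sign σ : ℤ) : ℚ) *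
      ((∏ i, ((n (σ i)).descFactorial i : ℚ)) * (((L : ℚ) - 1) * ((n (σ k) : ℚ) - (k : ℕ)))) := by
  by_cases hk : (k : ℕ) + 1 = L
  · have : (k : ℚ) = (L : ℚ) - 1 := by
      have : ((k : ℕ) : ℚ) + 1 = L := by exact_mod_cast hk
      linarith
    rw [this]
  have hk' : (k : ℕ) + 1 < L := by have := k.2; omega
  have hz : ∑ σ : Equiv.Perm (Fin L), ((Equiv.Perm.sign σ : ℤ) : ℚ) *
      ((∏ i, ((n (σ i)).descFactorial i : ℚ)) * ((n (σ k) : ℚ) - (k : ℕ))) = 0 := by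
    have hd : (Matrix.of fun j i : Fin L =>
        ((n j).descFactorial (if i = k then (k : ℕ) + 1 else i) : ℚ)).det = 0 := by
      apply Matrix.det_zero_of_column_eq (i := k) (j := ⟨k + 1, hk'⟩)
      · intro h
        have := congrArg Fin.val h
        simp at this
      · intro j
        have : (⟨k + 1, hk'⟩ : Fin L) ≠ k := by
          intro h
          have := congrArg Fin.val h
          simp at this
        simp [this]
    rw [Matrix.det_apply'] at hd
    rw [← hd]
    refine Finset.sum_congr rfl fun σ _ => ?_
    congr 1
    rw [← Finset.mul_prod_erase _ _ (Finset.mem_univ k),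
      ← Finset.mul_prod_erase _ (fun i => (Matrix.of fun j i : Fin L =>
        ((n j).descFactorial (if i = k then (k : ℕ) + 1 else i) : ℚ)) (σ i) i)
        (Finset.mem_univ k)]
    have h1 : ∏ x ∈ Finset.univ.erase k, (Matrix.of fun j i : Fin L =>
        ((n j).descFactorial (if i = k then (k : ℕ) + 1 else i) : ℚ)) (σ x) x
        = ∏ x ∈ Finset.univ.erase k, ((n (σ x)).descFactorial x : ℚ) := by
      refine Finset.prod_congr rfl fun x hx => ?_
      simp [Finset.ne_of_mem_erase hx]
    rw [h1]
    simp only [Matrix.of_apply, if_true]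
    have h2 : ((n (σ k)).descFactorial (k + 1) : ℚ)
        = ((n (σ k)).descFactorial k : ℚ) * ((n (σ k) : ℚ) - (k : ℕ)) := by
      rw [Nat.descFactorial_succ]
      by_cases h : (k : ℕ) ≤ n (σ k)
      · push_cast [h]; ring
      · rw [Nat.descFactorial_of_lt (by omega)]; simp
    rw [h2]; ring
  have gen : ∀ c : ℚ, ∑ σ : Equiv.Perm (Fin L), ((Equiv.Perm.sign σ : ℤ) : ℚ) *
      ((∏ i, ((n (σ i)).descFactorial i : ℚ)) * (c * ((n (σ k) : ℚ) - (k : ℕ)))) = 0 := by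
    intro c
    rw [← mul_zero c, ← hz, Finset.mul_sum]
    exact Finset.sum_congr rfl fun σ _ => by ring
  rw [gen, gen]

lemma sq_avg {L : ℕ} (n : Fin L → ℕ) (N : ℕ) (hN : ∑ i, n i = N + ∑ i : Fin L, (i : ℕ)) :
    ∑ σ : Equiv.Perm (Fin L), ((Equiv.Perm.sign σ : ℤ) : ℚ) *
      ((∏ i, ((n (σ i)).descFactorial i : ℚ)) * ∑ i, ((n (σ i) : ℚ) - (i : ℕ)) ^ 2) =
    (∑ σ : Equiv.Perm (Fin L), ((Equiv.Perm.sign σ : ℤ) : ℚ) *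
      (∏ i, ((n (σ i)).descFactorial i : ℚ))) *
      (∑ i, (n i : ℚ) ^ 2 - ∑ i : Fin L, ((i : ℕ) : ℚ) ^ 2 - 2 * ((L : ℚ) - 1) * N) := by
  have hs : ∀ σ : Equiv.Perm (Fin L), ∑ i, ((n (σ i) : ℚ) - (i : ℕ)) = N := by
    intro σ
    rw [Finset.sum_sub_distrib, Equiv.sum_comp σ (fun i => (n i : ℚ))]
    have : ∑ i, (n i : ℚ) = N + ∑ i : Fin L, ((i : ℕ) : ℚ) := by exact_mod_cast hN
    rw [this]; ring
  have hq : ∀ σ : Equiv.Perm (Fin L), ∑ i, ((n (σ i) : ℚ) - (i : ℕ)) ^ 2 =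
      ∑ i, (n i : ℚ) ^ 2 - ∑ i : Fin L, ((i : ℕ) : ℚ) ^ 2
        - 2 * ∑ i : Fin L, ((i : ℕ) : ℚ) * ((n (σ i) : ℚ) - (i : ℕ)) := by
    intro σ
    rw [← Equiv.sum_comp σ (fun i => (n i : ℚ) ^ 2), Finset.mul_sum, ← Finset.sum_sub_distrib,
      ← Finset.sum_sub_distrib]
    exact Finset.sum_congr rfl fun i _ => by ring
  have hc : ∑ σ : Equiv.Perm (Fin L), ((Equiv.Perm.sign σ : ℤ) : ℚ) *
      ((∏ i, ((n (σ i)).descFactorial i : ℚ)) *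
        ∑ i : Fin L, ((i : ℕ) : ℚ) * ((n (σ i) : ℚ) - (i : ℕ))) =
    ∑ σ : Equiv.Perm (Fin L), ((Equiv.Perm.sign σ : ℤ) : ℚ) *
      ((∏ i, ((n (σ i)).descFactorial i : ℚ)) * (((L : ℚ) - 1) * N)) := by
    have : ∀ σ : Equiv.Perm (Fin L), ((L : ℚ) - 1) * N
        = ∑ i : Fin L, ((L : ℚ) - 1) * ((n (σ i) : ℚ) - (i : ℕ)) := by
      intro σ; rw [← Finset.mul_sum, hs]
    conv_rhs => enter [2, σ]; rw [this σ]
    simp only [Finset.mul_sum]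
    rw [Finset.sum_comm]
    conv_rhs => rw [Finset.sum_comm]
    exact Finset.sum_congr rfl fun k _ => cross n k
  have e : ∀ σ : Equiv.Perm (Fin L), ((Equiv.Perm.sign σ : ℤ) : ℚ) *
      ((∏ i, ((n (σ i)).descFactorial i : ℚ)) * ∑ i, ((n (σ i) : ℚ) - (i : ℕ)) ^ 2) =
      ((Equiv.Perm.sign σ : ℤ) : ℚ) * (∏ i, ((n (σ i)).descFactorial i : ℚ)) *
        (∑ i, (n i : ℚ) ^ 2 - ∑ i : Fin L, ((i : ℕ) : ℚ) ^ 2)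
      - 2 * (((Equiv.Perm.sign σ : ℤ) : ℚ) * ((∏ i, ((n (σ i)).descFactorial i : ℚ)) *
        ∑ i : Fin L, ((i : ℕ) : ℚ) * ((n (σ i) : ℚ) - (i : ℕ)))) := by
    intro σ; rw [hq]; ring
  rw [Finset.sum_congr rfl fun σ _ => e σ, Finset.sum_sub_distrib, ← Finset.mul_sum, hc,
    ← Finset.sum_mul, mul_sub _ _ (2 * ((L : ℚ) - 1) * N)]
  congr 1
  rw [Finset.mul_sum, Finset.sum_mul]
  exact Finset.sum_congr rfl fun σ _ => by ring

lemma degVec_sum (l : List ℕ) :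
    ∑ i, degVec l i = l.sum + ∑ i : Fin l.length, (i : ℕ) := by
  unfold degVec
  rw [Finset.sum_add_distrib]
  congr 1
  · simp
  · rw [← Equiv.sum_comp Fin.revPerm]
    refine Finset.sum_congr rfl fun i _ => ?_
    have := i.2
    simp [Fin.val_rev]
    omega

lemma degVec_inj (l : List ℕ) (hl : IsPartition l) : Function.Injective (degVec l) := by
  have : StrictAnti (degVec l) := by
    intro i j hij
    have h := List.pairwise_iff_get.1 hl.1 i j hij
    have h1 := i.2
    have h2 := j.2
    have h3 : (i : ℕ) < j := hij
    unfold degVec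
    omega
  exact this.injective

lemma vander_eq (l : List ℕ) :
    vanderQ l = (Matrix.vandermonde fun i => (degVec l i : ℚ)).det := by
  rw [Matrix.det_vandermonde]
  unfold vanderQ
  refine Finset.prod_congr rfl fun i _ => ?_
  rw [← Finset.prod_filter]
  refine Finset.prod_congr ?_ fun _ _ => rfl
  ext j
  simp

lemma content_eq (l : List ℕ) :
    (contentSum l : ℚ) = (∑ i, (degVec l i : ℚ) ^ 2 - ∑ i : Fin l.length, ((i : ℕ) : ℚ) ^ 2
      - 2 * ((l.length : ℚ) - 1) * l.sum - l.sum) / 2 := by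
  have h1 : ∑ i : Fin l.length, ((i : ℕ) : ℚ) ^ 2
      = ∑ i : Fin l.length, ((l.length : ℚ) - 1 - (i : ℕ)) ^ 2 := by
    rw [← Equiv.sum_comp Fin.revPerm]
    refine Finset.sum_congr rfl fun i _ => ?_
    have := i.2
    simp only [Fin.revPerm_apply, Fin.val_rev]
    rw [Nat.cast_sub (by omega)]
    push_cast; ring
  have h2 : (l.sum : ℚ) = ∑ i : Fin l.length, (l.get i : ℚ) := by
    rw [← Nat.cast_sum]; simp
  have h3 : ∀ (m : ℕ) (c : ℚ), ∑ j ∈ Finset.Icc 1 m, ((j : ℚ) - (c + 1))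
      = (m : ℚ) * (m - 2 * c - 1) / 2 := by
    intro m c
    induction m with
    | zero => simp
    | succ m ih =>
      rw [Finset.sum_Icc_succ_top (by omega), ih]; push_cast; ring
  rw [h1, h2]
  unfold contentSum
  push_cast
  simp only [h3]
  rw [Finset.mul_sum, ← Finset.sum_sub_distrib, ← Finset.sum_sub_distrib,
    ← Finset.sum_sub_distrib, Finset.sum_div]
  refine Finset.sum_congr rfl fun i _ => ?_
  have := i.2
  unfold degVec
  rw [Nat.cast_add, Nat.cast_sub (by omega), Nat.cast_sub (by omega)]
  push_cast; ring

/-- The first three coefficients of a Wronskian Appell polynomial: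
for an Appell sequence `(A_n)` with `z_1 = A_1(0)`, `z_2 = A_2(0)` and a
partition `λ` of `n ≥ 2`, `A_λ` is monic of degree `n`,
`coeff_{n−1}(A_λ) = n z_1`, and
`coeff_{n−2}(A_λ) = c(λ)(z_2 − z_1²) + C(n,2) z_1²`. -/
theorem wrAppell_first_coeffs (A : ℕ → Polynomial ℚ) (hA0 : A 0 = 1)
    (hA : ∀ n : ℕ, 1 ≤ n → (A n).derivative = (n : ℚ) • A (n - 1))
    (l : List ℕ) (hl : IsPartition l) (hn : 2 ≤ l.sum) :
    (wrAppell A l).coeff l.sum = 1 ∧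
    (wrAppell A l).coeff (l.sum - 1) = (l.sum : ℚ) * (A 1).eval 0 ∧
    (wrAppell A l).coeff (l.sum - 2) =
      (contentSum l : ℚ) * ((A 2).eval 0 - ((A 1).eval 0) ^ 2) +
        (l.sum.choose 2 : ℚ) * ((A 1).eval 0) ^ 2 := by
  have hsum := degVec_sum l
  have hV : vanderQ l ≠ 0 := by
    rw [vander_eq, Matrix.det_vandermonde_ne_zero_iff]
    exact Nat.cast_injective.comp (degVec_inj l hl)
  have hVs : ∑ σ : Equiv.Perm (Fin l.length), ((Equiv.Perm.sign σ : ℤ) : ℚ) *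
      (∏ i, ((degVec l (σ i)).descFactorial i : ℚ)) = vanderQ l := by
    rw [vander_eq, ← det_desc, Matrix.det_apply']
    rfl
  have hco : ∀ m, (wrAppell A l).coeff m = (vanderQ l)⁻¹ *
      ∑ σ : Equiv.Perm (Fin l.length), ((Equiv.Perm.sign σ : ℤ) : ℚ) *
      (∏ i : Fin l.length,
        (⇑Polynomial.derivative)^[(i : ℕ)] (A (degVec l (σ i)))).coeff m := by
    intro m
    unfold wrAppell
    rw [Polynomial.coeff_C_mul, ← Matrix.det_transpose, Matrix.det_apply',
      Polynomial.finsetSum_coeff]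
    congr 1
    refine Finset.sum_congr rfl fun σ _ => ?_
    rw [Polynomial.coeff_intCast_mul]
    rfl
  have ht : ∀ σ : Equiv.Perm (Fin l.length), _ := fun σ =>
    term_coeff A hA0 hA (fun i => degVec l (σ i)) l.sum
      (by rw [Equiv.sum_comp σ (degVec l)]; exact hsum) hn
  simp only [← Polynomial.coeff_zero_eq_eval_zero]
  refine ⟨?_, ?_, ?_⟩
  · rw [hco, Finset.sum_congr rfl fun σ _ => by rw [(ht σ).1], hVs, inv_mul_cancel₀ hV]
  · rw [hco, Finset.sum_congr rfl fun σ _ => by rw [(ht σ).2.1, ← mul_assoc],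
      ← Finset.sum_mul, hVs, ← mul_assoc, inv_mul_cancel₀ hV, one_mul]
  · have hsq := sq_avg (degVec l) l.sum hsum
    rw [hVs] at hsq
    have e : ∑ σ : Equiv.Perm (Fin l.length), ((Equiv.Perm.sign σ : ℤ) : ℚ) *
      (∏ i : Fin l.length,
        (⇑Polynomial.derivative)^[(i : ℕ)] (A (degVec l (σ i)))).coeff (l.sum - 2)
      = (∑ σ : Equiv.Perm (Fin l.length), ((Equiv.Perm.sign σ : ℤ) : ℚ) *
      ((∏ i, ((degVec l (σ i)).descFactorial i : ℚ)) *
        ∑ i, ((degVec l (σ i) : ℚ) - (i : ℕ)) ^ 2)) *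
          (((A 2).coeff 0 - (A 1).coeff 0 ^ 2) / 2)
      + (∑ σ : Equiv.Perm (Fin l.length), ((Equiv.Perm.sign σ : ℤ) : ℚ) *
      (∏ i, ((degVec l (σ i)).descFactorial i : ℚ))) *
        (- (l.sum : ℚ) / 2 * ((A 2).coeff 0 - (A 1).coeff 0 ^ 2) +
          (l.sum : ℚ) * (l.sum - 1) / 2 * (A 1).coeff 0 ^ 2) := by
      rw [Finset.sum_mul, Finset.sum_mul, ← Finset.sum_add_distrib]
      refine Finset.sum_congr rfl fun σ _ => ?_
      rw [(ht σ).2.2]; ring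
    rw [hco, e, hVs, hsq, content_eq, Nat.cast_choose_two]
    field_simp
    ring
end

section
/- Let λ be any partition. Then F_λ · c(λ) = C(|λ|, 2) · (F_{λ/(2)} − F_{λ/(1,1)}), where F_λ is the number of standard Young tableaux of shape λ, F_{λ/(2)} and F_{λ/(1,1)} are the numbers of saturated chains in Young's lattice from the partition (2), respectively (1,1), up to λ (each equal to 0 if the corresponding partition is not contained in λ), and c(λ) is the content sum of λ. -/
namespace ContentProof

/-! ### Operators on functions on `ℤ^k` -/

section Ops
variable {k : ℕ}

/-- Sum of the backward shifts. -/
def opD (k : ℕ) : Module.End ℤ ((Fin k → ℤ) → ℤ) where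
  toFun f a := ∑ i, f (a - Pi.single i 1)
  map_add' f g := by ext a; simp [Finset.sum_add_distrib]
  map_smul' c f := by ext a; simp [Finset.mul_sum]

/-- Twice the content, in shifted coordinates. -/
def cont (a : Fin k → ℤ) : ℤ := ∑ i, (a i ^ 2 - a i - ((i : ℤ) ^ 2 + i))

/-- Multiplication by twice the content. -/
def opC (k : ℕ) : Module.End ℤ ((Fin k → ℤ) → ℤ) where
  toFun f a := cont a * f a
  map_add' f g := by ext a; simp [mul_add]
  map_smul' c f := by ext a; simp; ring

def opE (k : ℕ) : Module.End ℤ ((Fin k → ℤ) → ℤ) := opC k * opD k - opD k * opC k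
def opA (k : ℕ) : Module.End ℤ ((Fin k → ℤ) → ℤ) := opE k * opD k - opD k * opE k

lemma opD_apply (f : (Fin k → ℤ) → ℤ) (a : Fin k → ℤ) :
    opD k f a = ∑ i, f (a - Pi.single i 1) := rfl
lemma opC_apply (f : (Fin k → ℤ) → ℤ) (a : Fin k → ℤ) : opC k f a = cont a * f a := rfl

lemma cont_sub (a : Fin k → ℤ) (i : Fin k) :
    cont a - cont (a - Pi.single i 1) = 2 * a i - 2 := by
  unfold cont
  rw [← Finset.sum_sub_distrib, Finset.sum_eq_single i]
  · simp; ring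
  · intro j _ hj
    simp [Pi.single_eq_of_ne hj]
  · simp

lemma opE_apply (f : (Fin k → ℤ) → ℤ) (a : Fin k → ℤ) :
    opE k f a = ∑ i, (2 * a i - 2) * f (a - Pi.single i 1) := by
  simp only [opE, LinearMap.sub_apply, Module.End.mul_apply, Pi.sub_apply, opC_apply, opD_apply]
  rw [Finset.mul_sum, ← Finset.sum_sub_distrib]
  refine Finset.sum_congr rfl fun i _ => ?_
  rw [← cont_sub]; ring

lemma opA_apply (f : (Fin k → ℤ) → ℤ) (a : Fin k → ℤ) :
    opA k f a = ∑ i, 2 * f (a - Pi.single i 1 - Pi.single i 1) := by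
  simp only [opA, LinearMap.sub_apply, Module.End.mul_apply, Pi.sub_apply, opE_apply, opD_apply]
  simp only [Finset.mul_sum]
  rw [Finset.sum_comm, ← Finset.sum_sub_distrib]
  refine Finset.sum_congr rfl fun i _ => ?_
  rw [← Finset.sum_sub_distrib, Finset.sum_eq_single i]
  · simp; ring
  · intro j _ hj
    rw [Pi.single_eq_of_ne hj, sub_right_comm]; ring
  · simp

lemma opA_opD : opA k * opD k = opD k * opA k := by
  ext f a
  simp only [Module.End.mul_apply, opA_apply, opD_apply, Finset.mul_sum]
  rw [Finset.sum_comm]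
  refine Finset.sum_congr rfl fun i _ => Finset.sum_congr rfl fun j _ => ?_
  congr 2
  abel

lemma opC_pow (n : ℕ) : opC k * opD k ^ (n + 2) =
    opD k ^ (n + 2) * opC k + ((n + 2 : ℕ) : ℤ) • (opD k ^ (n + 1) * opE k)
      + ((n + 2).choose 2 : ℤ) • (opD k ^ n * opA k) := by
  have h1 : opC k * opD k = opD k * opC k + opE k := by unfold opE; abel
  have h2 : opE k * opD k = opD k * opE k + opA k := by unfold opA; abel
  have h3 := opA_opD (k := k)
  induction n with
  | zero =>
    rw [pow_succ, pow_one, ← mul_assoc, h1, add_mul, mul_assoc, h1, h2]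
    simp [mul_add, two_smul, pow_succ, mul_assoc]
    abel
  | succ n ih =>
    have hc : ((n + 1 + 2).choose 2 : ℤ) = (n + 2).choose 2 + (n + 2 : ℕ) := by
      rw [Nat.choose_succ_succ' (n + 2) 1]; push_cast; simp; ring
    rw [pow_succ, ← mul_assoc, show n + 1 + 1 = n + 2 from rfl, ih, add_mul, add_mul,
      smul_mul_assoc, smul_mul_assoc, mul_assoc, h1, mul_assoc, h2, mul_assoc, h3, hc]
    simp only [mul_add, add_smul, smul_add, ← mul_assoc, ← pow_succ]
    rw [show ((n + 1 + 2 : ℕ) : ℤ) = (n + 2 : ℕ) + 1 by push_cast; ring, add_smul, one_smul]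
    abel

/-- Antisymmetric and supported on a suitable orthant. -/
def Good (f : (Fin k → ℤ) → ℤ) : Prop :=
  (∀ (a : Fin k → ℤ) (i j : Fin k), i ≠ j → f (a ∘ Equiv.swap i j) = - f a) ∧
    ∀ (a : Fin k → ℤ) (j : Fin k), a j < 1 - (k : ℤ) → f a = 0

lemma Good.eq_zero {f : (Fin k → ℤ) → ℤ} (hf : Good f) {a : Fin k → ℤ} {i j : Fin k}
    (hij : i ≠ j) (h : a i = a j) : f a = 0 := by
  have h1 := hf.1 a i j hij
  have h2 : a ∘ Equiv.swap i j = a := by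
    ext x
    simp only [Function.comp_apply, Equiv.swap_apply_def]
    split_ifs with h3 h4
    · rw [h3, h]
    · rw [h4, h]
    · rfl
  rw [h2] at h1
  omega

lemma Good.sub {f g : (Fin k → ℤ) → ℤ} (hf : Good f) (hg : Good g) : Good (f - g) := by
  refine ⟨fun a i j hij => ?_, fun a j h => ?_⟩
  · simp only [Pi.sub_apply, hf.1 a i j hij, hg.1 a i j hij]; ring
  · simp only [Pi.sub_apply, hf.2 a j h, hg.2 a j h]; ring

lemma Good.opD {f : (Fin k → ℤ) → ℤ} (hf : Good f) : Good (opD k f) := by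
  refine ⟨fun a i j hij => ?_, fun a j h => ?_⟩
  · rw [opD_apply, opD_apply, ← Finset.sum_neg_distrib, ← Equiv.sum_comp (Equiv.swap i j)]
    refine Finset.sum_congr rfl fun x _ => ?_
    rw [← hf.1 _ i j hij]
    congr 1
    ext y
    simp only [Pi.sub_apply, Function.comp_apply, Pi.single_apply]
    congr 2
    rw [← Equiv.apply_eq_iff_eq (Equiv.swap i j)]; simp
  · rw [opD_apply]
    refine Finset.sum_eq_zero fun x _ => hf.2 _ j ?_
    simp only [Pi.sub_apply, Pi.single_apply]
    split_ifs <;> omega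

lemma Good.opC {f : (Fin k → ℤ) → ℤ} (hf : Good f) : Good (opC k f) := by
  refine ⟨fun a i j hij => ?_, fun a j h => ?_⟩
  · have : cont (a ∘ Equiv.swap i j) = cont a := by
      unfold cont
      rw [Finset.sum_sub_distrib (f := fun x => (a ∘ Equiv.swap i j) x ^ 2 - (a ∘ Equiv.swap i j) x),
        Finset.sum_sub_distrib (f := fun x => a x ^ 2 - a x)]
      congr 1
      exact Equiv.sum_comp (Equiv.swap i j) (fun x => a x ^ 2 - a x)
    rw [opC_apply, opC_apply, hf.1 a i j hij, this]; ring
  · rw [opC_apply, hf.2 a j h, mul_zero]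

lemma Good.opE {f : (Fin k → ℤ) → ℤ} (hf : Good f) : Good (opE k f) :=
  hf.opD.opC.sub hf.opC.opD

lemma Good.opA {f : (Fin k → ℤ) → ℤ} (hf : Good f) : Good (opA k f) :=
  hf.opD.opE.sub hf.opE.opD

lemma Good.pow {f : (Fin k → ℤ) → ℤ} (hf : Good f) (n : ℕ) : Good ((ContentProof.opD k ^ n) f) := by
  induction n with
  | zero => simpa using hf
  | succ n ih => rw [pow_succ', Module.End.mul_apply]; exact ih.opD

/-- The antisymmetrized delta function at the empty partition. -/
def f0 (k : ℕ) (a : Fin k → ℤ) : ℤ :=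
  Matrix.det (Matrix.of fun i j : Fin k => if a i = -(j : ℤ) then (1 : ℤ) else 0)

lemma good_f0 : Good (f0 k) := by
  refine ⟨fun a i j hij => ?_, fun a j h => ?_⟩
  · have := Matrix.det_permute (Equiv.swap i j)
      (Matrix.of fun i j : Fin k => if a i = -(j : ℤ) then (1 : ℤ) else 0)
    rw [Equiv.Perm.sign_swap hij] at this
    unfold f0
    simp only [Units.val_neg, Units.val_one, Int.cast_neg, Int.cast_one, neg_mul, one_mul] at this
    exact this
  · refine Matrix.det_eq_zero_of_row_eq_zero j fun x => ?_
    have := x.2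
    simp only [Matrix.of_apply, ite_eq_right_iff]
    omega

end Ops

/-! ### Partitions as lists -/

lemma partAt_ge {l : List ℕ} {i : ℕ} (h : l.length ≤ i) : partAt l i = 0 := by
  simp [partAt, h]

lemma partAt_lt {l : List ℕ} {i : ℕ} (h : i < l.length) : partAt l i = l[i] := by
  simp [partAt, h]

lemma sum_partAt (l : List ℕ) (k : ℕ) (h : l.length ≤ k) :
    l.sum = ∑ i ∈ Finset.range k, partAt l i := by
  induction l generalizing k with
  | nil => simp [partAt]
  | cons x l ih =>
    obtain ⟨k, rfl⟩ : ∃ m, k = m + 1 := ⟨k - 1, by simp at h; omega⟩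
    rw [Finset.sum_range_succ', List.sum_cons, ih k (by simpa using h)]
    simp [partAt, add_comm]

lemma partAt_anti {l : List ℕ} (hl : IsPartition l) {i j : ℕ} (h : i ≤ j) :
    partAt l j ≤ partAt l i := by
  rcases lt_or_ge j l.length with hj | hj
  · rw [partAt_lt hj, partAt_lt (by omega)]
    rcases h.eq_or_lt with rfl | h
    · exact le_rfl
    · exact List.pairwise_iff_getElem.1 hl.1 i j _ hj h
  · rw [partAt_ge hj]; exact Nat.zero_le _

lemma partAt_pos {l : List ℕ} (hl : IsPartition l) {i : ℕ} (h : i < l.length) :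
    0 < partAt l i := by
  rw [partAt_lt h]; exact hl.2 _ (List.getElem_mem h)

lemma partAt_pos_iff {l : List ℕ} (hl : IsPartition l) {i : ℕ} :
    0 < partAt l i ↔ i < l.length := by
  refine ⟨fun h => ?_, partAt_pos hl⟩
  by_contra h'
  rw [partAt_ge (by omega)] at h
  omega

lemma ext_partAt {l m : List ℕ} (hl : IsPartition l) (hm : IsPartition m)
    (h : ∀ i, partAt l i = partAt m i) : l = m := by
  have h1 : l.length = m.length := by
    apply le_antisymm
    · by_contra h'
      have := (partAt_pos_iff hl (i := m.length)).2 (by omega)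
      rw [h, partAt_pos_iff hm] at this
      omega
    · by_contra h'
      have := (partAt_pos_iff hm (i := l.length)).2 (by omega)
      rw [← h, partAt_pos_iff hl] at this
      omega
  refine List.ext_getElem h1 fun i h2 h3 => ?_
  rw [← partAt_lt, ← partAt_lt, h]

/-- Remove a box from row `i`. -/
def child (l : List ℕ) (i : ℕ) : List ℕ :=
  if partAt l i = 1 then l.take i else l.set i (partAt l i - 1)

/-- Row `i` ends in a removable corner. -/
def Rem (l : List ℕ) (i : ℕ) : Prop := partAt l (i + 1) < partAt l i

instance (l : List ℕ) (i : ℕ) : Decidable (Rem l i) := by unfold Rem; infer_instance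

lemma Rem.lt {l : List ℕ} {i : ℕ} (h : Rem l i) : i < l.length := by
  by_contra h'
  unfold Rem at h
  rw [partAt_ge (i := i) (by omega)] at h
  omega

lemma length_child_le (l : List ℕ) (i : ℕ) : (child l i).length ≤ l.length := by
  unfold child; split_ifs <;> simp

lemma partAt_child {l : List ℕ} (hl : IsPartition l) {i : ℕ} (h : Rem l i) (j : ℕ) :
    partAt (child l i) j = partAt l j - if j = i then 1 else 0 := by
  have hi := h.lt
  unfold child
  split_ifs with h1 h2 h2
  · subst h2
    rw [partAt_ge (by simp), h1]
  · have h3 : l.length ≤ i + 1 := by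
      by_contra h'
      have := partAt_pos hl (i := i + 1) (by omega)
      unfold Rem at h
      omega
    rcases lt_or_ge j i with hj | hj
    · rw [partAt_lt (by simp; omega), partAt_lt (by omega)]
      simp
    · rw [partAt_ge (by simp; omega), partAt_ge (by omega)]
  · subst h2
    rw [partAt_lt (by simpa using hi)]
    simp
  · rcases lt_or_ge j l.length with hj | hj
    · rw [partAt_lt (by simpa using hj), partAt_lt hj, List.getElem_set_ne (by omega)]
      simp
    · rw [partAt_ge (by simpa using hj), partAt_ge hj]

lemma isPartition_child {l : List ℕ} (hl : IsPartition l) {i : ℕ} (h : Rem l i) :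
    IsPartition (child l i) := by
  constructor
  · rw [List.pairwise_iff_getElem]
    intro a b ha hb hab
    rw [← partAt_lt ha, ← partAt_lt hb, partAt_child hl h, partAt_child hl h]
    have h1 := partAt_anti hl hab.le
    have h4 := partAt_anti hl (show a + 1 ≤ b from hab)
    unfold Rem at h
    show _ ≤ _
    by_cases h2 : a = i
    · subst h2
      rw [if_neg (by omega), if_pos rfl]
      omega
    · rw [if_neg h2]
      omega
  · intro x hx
    unfold child at hx
    split_ifs at hx with h1
    · exact hl.2 x (List.mem_of_mem_take hx)
    · rcases List.mem_or_eq_of_mem_set hx with h2 | h2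
      · exact hl.2 x h2
      · have := partAt_pos hl h.lt
        omega

lemma sum_child {l : List ℕ} (hl : IsPartition l) {i : ℕ} (h : Rem l i) :
    (child l i).sum + 1 = l.sum := by
  rw [sum_partAt _ l.length (length_child_le l i), sum_partAt l l.length le_rfl]
  have hi := Finset.mem_range.2 h.lt
  rw [← Finset.add_sum_erase _ _ hi, ← Finset.add_sum_erase _ (partAt l) hi,
    partAt_child hl h, if_pos rfl]
  have : ∑ x ∈ (Finset.range l.length).erase i, partAt (child l i) x =
      ∑ x ∈ (Finset.range l.length).erase i, partAt l x := by
    refine Finset.sum_congr rfl fun x hx => ?_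
    rw [partAt_child hl h, if_neg (Finset.ne_of_mem_erase hx)]; rfl
  have := partAt_pos hl h.lt
  omega

/-- The step relation of Young's lattice. -/
def Step (m l : List ℕ) : Prop := IsPartition m ∧ IsPartition l ∧ Covers m l

lemma step_child {l : List ℕ} (hl : IsPartition l) {i : ℕ} (h : Rem l i) :
    Step (child l i) l :=
  ⟨isPartition_child hl h, hl, fun j => by rw [partAt_child hl h]; exact Nat.sub_le _ _,
    sum_child hl h⟩

lemma exists_of_step {m l : List ℕ} (h : Step m l) : ∃ i, Rem l i ∧ child l i = m := by
  obtain ⟨hm, hl, hs, hsum⟩ := h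
  set k := max m.length l.length with hk
  rw [sum_partAt m k (le_max_left _ _), sum_partAt l k (le_max_right _ _)] at hsum
  have hex : ∃ i ∈ Finset.range k, partAt m i < partAt l i := by
    by_contra! h
    have := Finset.sum_le_sum h
    omega
  obtain ⟨i, hi, hlt⟩ := hex
  rw [← Finset.add_sum_erase _ _ hi, ← Finset.add_sum_erase _ (partAt l) hi] at hsum
  have hle := Finset.sum_le_sum (s := (Finset.range k).erase i) (fun j _ => hs j)
  have heq : ∀ j ∈ (Finset.range k).erase i, partAt m j = partAt l j :=
    (Finset.sum_eq_sum_iff_of_le (fun j _ => hs j)).1 (by omega)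
  have hall : ∀ j, j ≠ i → partAt m j = partAt l j := by
    intro j hj
    rcases lt_or_ge j k with h1 | h1
    · exact heq j (by simp [hj, h1])
    · rw [partAt_ge (by omega), partAt_ge (by omega)]
  have hrem : Rem l i := by
    have h1 := hall (i + 1) (by omega)
    have h2 := partAt_anti hm (show i ≤ i + 1 by omega)
    unfold Rem
    omega
  refine ⟨i, hrem, ext_partAt (isPartition_child hl hrem) hm fun j => ?_⟩
  rw [partAt_child hl hrem]
  split_ifs with h
  · subst h; omega
  · rw [hall j h]; rfl

lemma child_inj {l : List ℕ} (hl : IsPartition l) {i j : ℕ} (hi : Rem l i) (hj : Rem l j)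
    (h : child l i = child l j) : i = j := by
  by_contra hne
  have h1 := partAt_child hl hi i
  rw [h, partAt_child hl hj, if_neg hne, if_pos rfl] at h1
  have := partAt_pos hl hi.lt
  omega

/-! ### Chains -/

/-- Chains of length `n`. -/
def Chain (n : ℕ) (a b : List ℕ) : Type :=
  {c : Fin (n + 1) → List ℕ //
    c 0 = a ∧ c (Fin.last _) = b ∧ ∀ i : Fin n, Step (c i.castSucc) (c i.succ)}

lemma numPaths_eq (a b : List ℕ) : numPaths a b = Nat.card (Chain (b.sum - a.sum) a b) := rfl

lemma sigma_chain_ext {n : ℕ} {a b : List ℕ} (p q : Σ m : {m // Step m b}, Chain n a m.1)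
    (h : p.2.1 = q.2.1) : p = q := by
  obtain ⟨⟨m, hm⟩, c⟩ := p
  obtain ⟨⟨m', hm'⟩, c'⟩ := q
  have e : m = m' := by
    have h1 := c.2.2.1
    have h2 := c'.2.2.1
    simp only at h h1 h2
    rw [← h1, ← h2, h]
  subst e
  have : c = c' := Subtype.ext h
  rw [this]

def chainEquiv (n : ℕ) (a b : List ℕ) :
    Chain (n + 1) a b ≃ Σ m : {m // Step m b}, Chain n a m.1 where
  toFun c := ⟨⟨c.1 (Fin.last n).castSucc, by
      have := c.2.2.2 (Fin.last n)
      rw [Fin.succ_last, c.2.2.1] at this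
      exact this⟩, ⟨fun i => c.1 i.castSucc, c.2.1, rfl, fun i => c.2.2.2 i.castSucc⟩⟩
  invFun p := ⟨Fin.snoc (α := fun _ => List ℕ) p.2.1 b, by
      obtain ⟨⟨m, hm⟩, ⟨c, h1, h2, h3⟩⟩ := p
      refine ⟨?_, by simp, ?_⟩
      · rw [show (0 : Fin (n + 1 + 1)) = Fin.castSucc 0 from rfl, Fin.snoc_castSucc]
        exact h1
      · intro i
        refine Fin.lastCases ?_ (fun i => ?_) i
        · rw [Fin.succ_last, Fin.snoc_last, Fin.snoc_castSucc]
          show Step (c (Fin.last n)) b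
          rw [h2]
          exact hm
        · rw [Fin.succ_castSucc, Fin.snoc_castSucc, Fin.snoc_castSucc]
          exact h3 i⟩
  left_inv c := by
    apply Subtype.ext
    funext i
    refine Fin.lastCases ?_ (fun i => ?_) i
    · simp [c.2.2.1]
    · simp
  right_inv p := by
    apply sigma_chain_ext
    funext i
    exact Fin.snoc_castSucc (α := fun _ => List ℕ) b p.2.1 i

noncomputable def stepEquiv {l : List ℕ} (hl : IsPartition l) {k : ℕ} (hk : l.length ≤ k) :
    {i : Fin k // Rem l i} ≃ {m // Step m l} :=
  Equiv.ofBijective (fun i => ⟨child l i.1, step_child hl i.2⟩) (by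
    constructor
    · intro i j h
      exact Subtype.ext (Fin.ext (child_inj hl i.2 j.2 (congrArg Subtype.val h)))
    · rintro ⟨m, hm⟩
      obtain ⟨i, hi, rfl⟩ := exists_of_step hm
      exact ⟨⟨⟨i, hi.lt.trans_le hk⟩, hi⟩, rfl⟩)

lemma finite_chain (n : ℕ) (a b : List ℕ) (hb : IsPartition b) : Finite (Chain n a b) := by
  induction n generalizing b with
  | zero =>
    have : Subsingleton (Chain 0 a b) := ⟨fun x y => Subtype.ext (funext fun i => by
      rw [show i = 0 from Subsingleton.elim (α := Fin 1) i 0, x.2.1, y.2.1])⟩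
    infer_instance
  | succ n ih =>
    have : Finite {m // Step m b} := Finite.of_equiv _ (stepEquiv hb le_rfl)
    have : ∀ m : {m // Step m b}, Finite (Chain n a m.1) := fun m => ih _ m.2.1
    exact Finite.of_equiv _ (chainEquiv n a b).symm

lemma card_chain_zero (a b : List ℕ) :
    Nat.card (Chain 0 a b) = if a = b then 1 else 0 := by
  have : Subsingleton (Chain 0 a b) := ⟨fun x y => Subtype.ext (funext fun i => by
      rw [show i = 0 from Subsingleton.elim (α := Fin 1) i 0, x.2.1, y.2.1])⟩
  split_ifs with h
  · have : Nonempty (Chain 0 a b) := ⟨⟨fun _ => a, rfl, h, fun i => i.elim0⟩⟩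
    exact Nat.card_eq_one_iff_unique.2 ⟨inferInstance, inferInstance⟩
  · have : IsEmpty (Chain 0 a b) := ⟨fun x => h (x.2.1.symm.trans x.2.2.1)⟩
    exact Nat.card_of_isEmpty

lemma card_chain_succ (n : ℕ) (a : List ℕ) {b : List ℕ} (hb : IsPartition b) {k : ℕ}
    (hk : b.length ≤ k) :
    Nat.card (Chain (n + 1) a b) =
      ∑ i : Fin k, if Rem b i then Nat.card (Chain n a (child b i)) else 0 := by
  have h1 : Chain (n + 1) a b ≃ Σ i : {i : Fin k // Rem b i}, Chain n a (child b i.1) :=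
    (chainEquiv n a b).trans (Equiv.sigmaCongrLeft
      (β := fun m : {m // Step m b} => Chain n a m.1) (stepEquiv hb hk)).symm
  have : ∀ i : {i : Fin k // Rem b i}, Finite (Chain n a (child b i.1)) :=
    fun i => finite_chain _ _ _ (isPartition_child hb i.2)
  rw [Nat.card_congr h1, Nat.card_sigma, ← Finset.sum_filter]
  exact (Finset.sum_subtype (Finset.univ.filter fun i : Fin k => Rem b i) (by simp)
    (fun i : Fin k => Nat.card (Chain n a (child b i)))).symm

/-! ### Comparison -/

/-- Shifted coordinates of a partition. -/
def vec (k : ℕ) (l : List ℕ) : Fin k → ℤ := fun i => (partAt l i : ℤ) - i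

lemma key {k : ℕ} {f : (Fin k → ℤ) → ℤ} (hf : Good f) (s : ℕ) (N : ℕ → List ℕ → ℤ)
    (h0 : ∀ l, IsPartition l → l.length ≤ k → l.sum = s → f (vec k l) = N 0 l)
    (hN : ∀ m l, IsPartition l → l.length ≤ k →
      N (m + 1) l = ∑ i : Fin k, if Rem l i then N m (child l i) else 0) (m : ℕ) :
    ∀ l, IsPartition l → l.length ≤ k → l.sum = s + m → (opD k ^ m) f (vec k l) = N m l := by
  induction m with
  | zero => intro l hl hk hs; simpa using h0 l hl hk hs
  | succ m ih =>
    intro l hl hk hs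
    rw [hN m l hl hk, pow_succ', Module.End.mul_apply, opD_apply]
    refine Finset.sum_congr rfl fun i _ => ?_
    split_ifs with hi
    · rw [← ih (child l i) (isPartition_child hl hi) ((length_child_le l i).trans hk)
        (by have := sum_child hl hi; omega)]
      refine congrArg _ ?_
      funext j
      have := partAt_pos hl hi.lt
      simp only [vec, Pi.sub_apply, Pi.single_apply, partAt_child hl hi, Fin.ext_iff]
      split_ifs with hj
      · rw [hj]; omega
      · omega
    · have hg := hf.pow m
      have heq : partAt l (i + 1) = partAt l i :=
        le_antisymm (partAt_anti hl (Nat.le_succ _)) (not_lt.1 hi)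
      rcases lt_or_ge (i.1 + 1) k with h1 | h1
      · refine hg.eq_zero (i := i) (j := ⟨i + 1, h1⟩) (by simp [Fin.ext_iff]) ?_
        simp [vec, Pi.single_apply, Fin.ext_iff, heq]
        ring
      · refine hg.2 _ i ?_
        rw [partAt_ge (i := i + 1) (by omega)] at heq
        simp [vec, ← heq]
        omega

lemma key_chain {k : ℕ} {f : (Fin k → ℤ) → ℤ} (hf : Good f) (s : ℕ) (a b : List ℕ) (x y : ℤ)
    (h0 : ∀ l, IsPartition l → l.length ≤ k → l.sum = s →
      f (vec k l) = x * (if a = l then 1 else 0) + y * (if b = l then 1 else 0)) (m : ℕ)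
    (l : List ℕ) (hl : IsPartition l) (hk : l.length ≤ k) (hs : l.sum = s + m) :
    (opD k ^ m) f (vec k l) = x * Nat.card (Chain m a l) + y * Nat.card (Chain m b l) := by
  refine key hf s (fun m l => x * Nat.card (Chain m a l) + y * Nat.card (Chain m b l))
    ?_ ?_ m l hl hk hs
  · intro l hl hk hs
    rw [h0 l hl hk hs, card_chain_zero, card_chain_zero]
    push_cast; rfl
  · intro m l hl hk
    rw [card_chain_succ m a hl hk, card_chain_succ m b hl hk]
    push_cast
    rw [Finset.mul_sum, Finset.mul_sum, ← Finset.sum_add_distrib]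
    refine Finset.sum_congr rfl fun i _ => ?_
    split_ifs <;> simp

lemma cont_vec {k : ℕ} (l : List ℕ) (hk : l.length ≤ k) :
    cont (vec k l) = 2 * contentSum l := by
  have hin : ∀ (n : ℕ) (x : ℤ), 2 * ∑ j ∈ Finset.Icc 1 n, ((j : ℤ) - (x + 1)) =
      n * (n - 1 - 2 * x) := by
    intro n x
    induction n with
    | zero => simp
    | succ n ih => rw [Finset.sum_Icc_succ_top (by omega), mul_add, ih]; push_cast; ring
  have h1 : 2 * contentSum l =
      ∑ i ∈ Finset.range l.length, (partAt l i : ℤ) * (partAt l i - 1 - 2 * i) := by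
    unfold contentSum
    rw [Finset.mul_sum, Finset.sum_range]
    refine Finset.sum_congr rfl fun i _ => ?_
    rw [hin, partAt_lt i.2]; rfl
  rw [h1, Finset.sum_subset (Finset.range_mono hk), Finset.sum_range]
  · unfold cont vec
    refine Finset.sum_congr rfl fun i _ => ?_
    ring
  · intro i _ hi
    rw [partAt_ge (by simpa using hi)]; simp

lemma eq_nil {l : List ℕ} (hl : IsPartition l) (h : l.sum = 0) : l = [] := by
  rcases l with _ | ⟨x, l⟩
  · rfl
  · have := hl.2 x (by simp)
    simp at h; omega

lemma eq_one {l : List ℕ} (hl : IsPartition l) (h : l.sum = 1) : l = [1] := by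
  rcases l with _ | ⟨x, l⟩
  · simp at h
  · have := hl.2 x (by simp)
    have h2 : IsPartition l := ⟨hl.1.of_cons, fun y hy => hl.2 y (by simp [hy])⟩
    rw [List.sum_cons] at h
    rw [eq_nil h2 (by omega)]
    congr; omega

lemma eq_two {l : List ℕ} (hl : IsPartition l) (h : l.sum = 2) : l = [2] ∨ l = [1, 1] := by
  rcases l with _ | ⟨x, l⟩
  · simp at h
  · have := hl.2 x (by simp)
    have h2 : IsPartition l := ⟨hl.1.of_cons, fun y hy => hl.2 y (by simp [hy])⟩
    rw [List.sum_cons] at h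
    obtain h3 | h3 : x = 2 ∨ x = 1 := by omega
    · left; rw [eq_nil h2 (by omega), h3]
    · right; rw [eq_one h2 (by omega), h3]

lemma f0_nil (k : ℕ) : f0 k (vec k []) = 1 := by
  unfold f0
  convert Matrix.det_one (n := Fin k) (R := ℤ)
  ext i j
  simp [vec, partAt, Matrix.one_apply, Fin.ext_iff]

lemma isPartition_11 : IsPartition [1, 1] := by constructor <;> simp
lemma isPartition_2 : IsPartition [2] := by constructor <;> simp
lemma isPartition_1 : IsPartition [1] := by constructor <;> simp

lemma chain_1 : Nat.card (Chain 1 [] [1]) = 1 := by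
  rw [card_chain_succ 0 [] isPartition_1 (k := 1) (by simp)]
  simp [card_chain_zero, Rem, partAt, child]

lemma chain_2 : Nat.card (Chain 2 [] [2]) = 1 := by
  rw [card_chain_succ 1 [] isPartition_2 (k := 1) (by simp)]
  simp [Rem, partAt, child, chain_1]

lemma chain_11 : Nat.card (Chain 2 [] [1, 1]) = 1 := by
  rw [card_chain_succ 1 [] isPartition_11 (k := 2) (by simp)]
  simp [Rem, partAt, child, chain_1, Fin.sum_univ_two]

section Final
variable {k : ℕ}

lemma pow_f0 (m : ℕ) (l : List ℕ) (hl : IsPartition l) (hk : l.length ≤ k) (hs : l.sum = m) :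
    (opD k ^ m) (f0 k) (vec k l) = Nat.card (Chain m [] l) := by
  have := key_chain (good_f0 (k := k)) 0 [] [] 1 0 (fun l hl _ hs => by
    rw [eq_nil hl hs, f0_nil]; simp) m l hl hk (by omega)
  simpa using this

lemma pow_zero_of {f : (Fin k → ℤ) → ℤ} (hf : Good f) (s : ℕ)
    (h0 : ∀ l, IsPartition l → l.length ≤ k → l.sum = s → f (vec k l) = 0) (m : ℕ)
    (l : List ℕ) (hl : IsPartition l) (hk : l.length ≤ k) (hs : l.sum = s + m) :
    (opD k ^ m) f (vec k l) = 0 := by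
  simpa using key_chain hf s [] [] 0 0 (fun l hl hk hs => by simp [h0 l hl hk hs]) m l hl hk hs

lemma pow_C (m : ℕ) (l : List ℕ) (hl : IsPartition l) (hk : l.length ≤ k) (hs : l.sum = m) :
    (opD k ^ m) (opC k (f0 k)) (vec k l) = 0 := by
  refine pow_zero_of good_f0.opC 0 (fun l hl hk hs => ?_) m l hl hk (by omega)
  rw [opC_apply, cont_vec l hk, eq_nil hl hs]
  simp [contentSum]

lemma pow_E (m : ℕ) (l : List ℕ) (hl : IsPartition l) (hk : l.length ≤ k) (hs : l.sum = 1 + m) :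
    (opD k ^ m) (opE k (f0 k)) (vec k l) = 0 := by
  refine pow_zero_of good_f0.opE 1 (fun l hl hk hs => ?_) m l hl hk hs
  have h := pow_C 1 l hl hk hs
  rw [pow_one] at h
  simp only [opE, LinearMap.sub_apply, Module.End.mul_apply, Pi.sub_apply]
  rw [h, opC_apply, cont_vec l hk, eq_one hl hs]
  simp [contentSum]

lemma main (n : ℕ) (l : List ℕ) (hl : IsPartition l) (hk : l.length ≤ k) (hs : l.sum = n + 2) :
    2 * contentSum l * Nat.card (Chain (n + 2) [] l) =
      ((n + 2).choose 2 : ℤ) * (opD k ^ n) (opA k (f0 k)) (vec k l) := by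
  have h := congrFun (congrArg (fun T => T (f0 k)) (opC_pow (k := k) n)) (vec k l)
  simp only [LinearMap.add_apply, LinearMap.smul_apply, Module.End.mul_apply, Pi.add_apply,
    Pi.smul_apply, smul_eq_mul] at h
  rw [opC_apply, cont_vec l hk, pow_f0 _ l hl hk hs, pow_C _ l hl hk hs,
    pow_E (n + 1) l hl hk (by omega)] at h
  rw [h]; ring

lemma pow_A (n : ℕ) (l : List ℕ) (hl : IsPartition l) (hk : l.length ≤ k) (hs : l.sum = 2 + n) :
    (opD k ^ n) (opA k (f0 k)) (vec k l) =
      2 * Nat.card (Chain n [2] l) + (-2) * Nat.card (Chain n [1, 1] l) := by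
  refine key_chain good_f0.opA 2 [2] [1, 1] 2 (-2) (fun l hl hk hs => ?_) n l hl hk hs
  have h := main 0 l hl hk hs
  simp only [pow_zero, Module.End.one_apply, zero_add, Nat.choose_self, Nat.cast_one,
    one_mul] at h
  rw [← h]
  rcases eq_two hl hs with rfl | rfl
  · rw [chain_2]; simp [contentSum, Finset.sum_Icc_succ_top]
  · rw [chain_11]; simp [contentSum, Fin.sum_univ_two]

end Final

end ContentProof

open ContentProof in
/-- `F_λ · c(λ) = C(|λ|, 2) · (F_{λ/(2)} − F_{λ/(1,1)})`. -/
theorem F_mul_contentSum (l : List ℕ) (hl : IsPartition l) :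
    (numPaths [] l : ℤ) * contentSum l =
      (l.sum.choose 2 : ℤ) * ((numPaths [2] l : ℤ) - (numPaths [1, 1] l : ℤ)) := by
  obtain h | h | ⟨n, h⟩ : l.sum = 0 ∨ l.sum = 1 ∨ ∃ n, l.sum = n + 2 := by
    rcases l.sum with _ | _ | n
    · simp
    · simp
    · exact Or.inr (Or.inr ⟨n, rfl⟩)
  · rw [eq_nil hl h]; simp [contentSum]
  · rw [eq_one hl h]; simp [contentSum]
  · have h1 := main (k := l.length) n l hl le_rfl h
    rw [pow_A n l hl le_rfl (by omega)] at h1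
    have e0 : numPaths [] l = Nat.card (Chain (n + 2) [] l) := by
      rw [numPaths_eq, h]; rfl
    have e1 : numPaths [2] l = Nat.card (Chain n [2] l) := by
      rw [numPaths_eq, h]; rfl
    have e2 : numPaths [1, 1] l = Nat.card (Chain n [1, 1] l) := by
      rw [numPaths_eq, h]; rfl
    rw [e0, e1, e2, h]
    linarith
end
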